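/- arXiv:1611.10315 — 4 statements merged into one kernel-verified Lean document; each statement's English description precedes it below -/
import Mathlib

section
/- For every integer k ≥ 1 there is a constant C = C(k) such that the following holds for every bipartite graph H with bipartition (S,T), |S| = |T| = k, every integer m ≥ 1 and every α ∈ (0,1/2): there is n₀ = n₀(k,m,α) such that every graph G on n ≥ n₀ vertices either contains at least α^C·2^{-Cm}·n^{2k} induced bipartite copies of H, or there are pairwise disjoint subsets W₁,…,W_m ⊆ V(G) such that (1) either d(W_i,W_j) ≥ 1−α for every 1 ≤ i < j ≤ m, or d(W_i,W_j) ≤ α for every 1 ≤ i < j ≤ m, and (2) |W_i| ≥ α^C·2^{-Cm}·n for every 1 ≤ i ≤ m. -/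
open scoped Classical
open Finset

noncomputable section

/-- Number of unordered vertex pairs on which two graphs on the same vertex set differ. -/
def editDist {n : ℕ} (G H : SimpleGraph (Fin n)) : ℕ :=
  Set.ncard {e : Sym2 (Fin n) | (e ∈ G.edgeSet ∧ e ∉ H.edgeSet) ∨ (e ∉ G.edgeSet ∧ e ∈ H.edgeSet)}

/-- `G` is `ε`-far from satisfying the graph property `P`. -/
def Far (P : ∀ n : ℕ, Set (SimpleGraph (Fin n))) {n : ℕ} (G : SimpleGraph (Fin n)) (ε : ℝ) : Prop :=
  ∀ H : SimpleGraph (Fin n), H ∈ P n → ε * (n : ℝ) ^ 2 ≤ (editDist G H : ℝ)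

/-- The subgraph induced by a vertex subset `Q` of size `m`, as a graph on `Fin m`. -/
def inducedOn {n : ℕ} (G : SimpleGraph (Fin n)) {m : ℕ} (Q : Finset (Fin n))
    (h : Q.card = m) : SimpleGraph (Fin m) :=
  G.comap fun i => ((Q.orderIsoOfFin h) i : Fin n)

/-- A graph property is easily testable if for some constant `c > 0`, for every `ε ∈ (0,1/2)`
and every graph on at least `ε ^ (-c)` vertices which is `ε`-far from `P`, at least a
`2/3`-fraction of the `⌈ε ^ (-c)⌉`-element vertex subsets induce a subgraph not satisfying `P`. -/
def EasilyTestable (P : ∀ n : ℕ, Set (SimpleGraph (Fin n))) : Prop :=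
  ∃ c : ℝ, 0 < c ∧ ∀ ε : ℝ, 0 < ε → ε < 1 / 2 → ∀ n : ℕ, ∀ G : SimpleGraph (Fin n),
    ε ^ (-c) ≤ (n : ℝ) → Far P G ε →
    (2 / 3 : ℝ) * (((Finset.univ : Finset (Fin n)).powersetCard ⌈ε ^ (-c)⌉₊).card : ℝ) ≤
      ((((Finset.univ : Finset (Fin n)).powersetCard ⌈ε ^ (-c)⌉₊).filter
        fun Q => ∃ h : Q.card = ⌈ε ^ (-c)⌉₊, inducedOn G Q h ∉ P ⌈ε ^ (-c)⌉₊).card : ℝ)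

/-- The property of being induced `𝓕`-free. -/
def InducedFree (𝓕 : Set (Σ k : ℕ, SimpleGraph (Fin k))) : ∀ n : ℕ, Set (SimpleGraph (Fin n)) :=
  fun n => {G | ∀ p ∈ 𝓕, IsEmpty (p.2 ↪g G)}

/-- A graph is bipartite: its vertex set can be partitioned into two independent sets. -/
def IsBipGraph {V : Type*} (H : SimpleGraph V) : Prop :=
  ∃ A : Set V, (∀ u ∈ A, ∀ v ∈ A, ¬ H.Adj u v) ∧ (∀ u ∉ A, ∀ v ∉ A, ¬ H.Adj u v)

/-- A graph is co-bipartite: its vertex set can be partitioned into two cliques. -/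
def IsCoBipGraph {V : Type*} (H : SimpleGraph V) : Prop :=
  ∃ A : Set V, (∀ u ∈ A, ∀ v ∈ A, u ≠ v → H.Adj u v) ∧ (∀ u ∉ A, ∀ v ∉ A, u ≠ v → H.Adj u v)

/-- A graph is split: its vertex set can be partitioned into a clique and an independent set. -/
def IsSplitGraph {V : Type*} (H : SimpleGraph V) : Prop :=
  ∃ A : Set V, (∀ u ∈ A, ∀ v ∈ A, u ≠ v → H.Adj u v) ∧ (∀ u ∉ A, ∀ v ∉ A, ¬ H.Adj u v)

/-- The number of induced bipartite copies in `G` of the bipartite graph with bipartition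
`(Fin k, Fin k)` and edge relation `B`: injections `φ` of the two sides into `V(G)` such that
for all `s ∈ S`, `t ∈ T` we have `B s t ↔ φ s ∼ φ t` (no condition inside the sides). -/
def bipCopyCount {k n : ℕ} (B : Fin k → Fin k → Prop) (G : SimpleGraph (Fin n)) : ℕ :=
  Set.ncard {φ : (Fin k ⊕ Fin k) ↪ Fin n |
    ∀ s t : Fin k, B s t ↔ G.Adj (φ (Sum.inl s)) (φ (Sum.inr t))}

/-- The edge density `d(X,Y)` between two (disjoint) vertex sets, as a real number. -/
def dens {n : ℕ} (G : SimpleGraph (Fin n)) (X Y : Finset (Fin n)) : ℝ :=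
  (G.edgeDensity X Y : ℝ)

/-- The pair `(X,Y)` is `δ`-homogeneous: `d(X,Y) ≥ 1 - δ` or `d(X,Y) ≤ δ`. -/
def HomPair {n : ℕ} (G : SimpleGraph (Fin n)) (δ : ℝ) (X Y : Finset (Fin n)) : Prop :=
  1 - δ ≤ dens G X Y ∨ dens G X Y ≤ δ

/-- The dominant value of the pair `(X,Y)` is `1` (it is `0` otherwise). -/
def DomOne {n : ℕ} (G : SimpleGraph (Fin n)) (X Y : Finset (Fin n)) : Prop :=
  1 / 2 ≤ dens G X Y

/-- `Q` is an equipartition: the parts are disjoint, cover everything, and their sizes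
differ by at most one. -/
def IsEquipartition {n q : ℕ} (Q : Fin q → Finset (Fin n)) : Prop :=
  (∀ i j : Fin q, i ≠ j → Disjoint (Q i) (Q j)) ∧ (∀ v : Fin n, ∃ i, v ∈ Q i) ∧
  (∀ i j : Fin q, (Q i).card ≤ (Q j).card + 1)

/-!
Call a `k`-tuple of vertices rich if each of its `2 ^ k` possible traces is realised by many
vertices. A rich tuple extends to many copies of every bipartite pattern, so few copies force few
rich tuples, and a random tuple of length `D ^ 2` has no rich subtuple. By Sauer–Shelah it then
realises only polynomially many traces on any large vertex set, up to few exceptional vertices; yet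
it separates all pairs of vertices except those whose neighbourhoods differ in at most a `1 / D`
fraction of the graph. Hence every large set has a vertex with many such twins, and disjoint twin
classes can be extracted greedily. Two twin classes on which the adjacency is nearly constant along
rows and columns have density close to `0` or `1`; by averaging this covers all but few pairs of
classes, and a Ramsey argument tolerating few exceptional pairs finds a homogeneous family. The
maps counted as copies need not be injective until the end, where the degenerate ones are discarded.
-/

section Traces

variable {U V ι τ : Type*} (r : U → V → Prop)

/-- The trace of `x` on the tuple `c` with respect to the relation `r`: the set of positions `i`
such that `x` is related to `c i`. -/
def traceOn [Fintype ι] (c : ι → V) (x : U) : Finset ι := {i | r x (c i)}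

/-- The vertices of `X` whose trace on the tuple `c` is exactly `P`. -/
def traceClass [Fintype ι] (X : Finset U) (c : ι → V) (P : Finset ι) : Finset U :=
  {x ∈ X | traceOn r c x = P}

/-- The tuple `g` is `t`-rich on `X` if each of the `2 ^ |τ|` possible traces on `g` is realised by
at least `t` vertices of `X`. -/
def IsRich [Fintype τ] (X : Finset U) (t : ℝ) (g : τ → V) : Prop :=
  ∀ P : Finset τ, t ≤ #(traceClass r X g P)

/-- The ordered pairs in `X` with the same trace on the tuple `c`. -/
def sameTracePairs [Fintype ι] (X : Finset U) (c : ι → V) : Finset (U × U) :=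
  {q ∈ X ×ˢ X | traceOn r c q.1 = traceOn r c q.2}

/-- The vertices of `W` that are related to exactly one of `x` and `y`. -/
def distinguishers (W : Finset V) (x y : U) : Finset V := {v ∈ W | ¬(r x v ↔ r y v)}

/-- The vertices of `X` that are distinguished from `x` by at most a `δ` fraction of `V`. -/
def twins [Fintype V] (δ : ℝ) (X : Finset U) (x : U) : Finset U :=
  {y ∈ X | #(distinguishers r univ x y) ≤ δ * Fintype.card V}

/-- The copies in `r` of the bipartite pattern `B`, with vertices on the same side allowed to
coincide: pairs of maps `(f, g)` such that `B s t ↔ r (f s) (g t)`. -/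
def patternCopies {σ : Type*} [Fintype σ] [Fintype τ] [Fintype U] [Fintype V]
    (B : σ → τ → Prop) : Finset ((σ → U) × (τ → V)) :=
  {p | ∀ s t, B s t ↔ r (p.1 s) (p.2 t)}

variable {r} [Fintype ι] [Fintype τ]

lemma mem_traceOn {c : ι → V} {x : U} {i : ι} : i ∈ traceOn r c x ↔ r x (c i) := by
  simp [traceOn]

lemma mem_traceClass {X : Finset U} {c : ι → V} {P : Finset ι} {x : U} :
    x ∈ traceClass r X c P ↔ x ∈ X ∧ traceOn r c x = P := by
  simp [traceClass]

lemma mem_distinguishers {W : Finset V} {x y : U} {v : V} :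
    v ∈ distinguishers r W x y ↔ v ∈ W ∧ ¬(r x v ↔ r y v) := by
  simp [distinguishers]

lemma mem_twins [Fintype V] {δ : ℝ} {X : Finset U} {x y : U} :
    y ∈ twins r δ X x ↔ y ∈ X ∧ #(distinguishers r univ x y) ≤ δ * Fintype.card V := by
  simp [twins]

lemma mem_patternCopies {σ : Type*} [Fintype σ] [Fintype U] [Fintype V] {B : σ → τ → Prop}
    {p : (σ → U) × (τ → V)} : p ∈ patternCopies r B ↔ ∀ s t, B s t ↔ r (p.1 s) (p.2 t) := by
  simp [patternCopies]

lemma card_isRich_mul_pow_le_card_patternCopies {σ : Type*} [Fintype σ] [Fintype U] [Fintype V]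
    (B : σ → τ → Prop) (X : Finset U) {t : ℝ} (ht : 0 ≤ t) :
    #{g : τ → V | IsRich r X t g} * t ^ Fintype.card σ ≤ #(patternCopies r B) := by
  let choices (g : τ → V) : Finset (σ → U) :=
    Fintype.piFinset fun s => traceClass r X g {j | B s j}
  have hchoices : ∀ g, IsRich r X t g → t ^ Fintype.card σ ≤ #(choices g) := fun g hg => by
    rw [Fintype.card_piFinset, Nat.cast_prod, ← Finset.card_univ, ← prod_const]
    exact prod_le_prod (fun _ _ => ht) fun s _ => hg _
  have hcopies : #(({g : τ → V | IsRich r X t g} : Finset (τ → V)).sigma choices) ≤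
      #(patternCopies r B) := by
    refine card_le_card_of_injOn (fun p => (p.2, p.1)) ?_ ?_
    · rintro ⟨g, f⟩ hgf
      have hf : ∀ s, f s ∈ traceClass r X g {j | B s j} :=
        Fintype.mem_piFinset.mp (mem_sigma.mp hgf).2
      refine mem_patternCopies.mpr fun s j => ?_
      rw [← mem_traceOn (r := r), (mem_traceClass.mp (hf s)).2, mem_filter_univ]
    · rintro ⟨g, f⟩ - ⟨g', f'⟩ - h
      obtain ⟨rfl, rfl⟩ := Prod.ext_iff.mp h
      rfl
  calc #{g : τ → V | IsRich r X t g} * t ^ Fintype.card σ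
      ≤ ∑ g : τ → V with IsRich r X t g, (#(choices g) : ℝ) := by
        rw [← nsmul_eq_mul]
        exact card_nsmul_le_sum _ _ _ fun g hg => hchoices g (mem_filter.mp hg).2
    _ ≤ #(patternCopies r B) := by
        rw [card_sigma] at hcopies
        exact_mod_cast hcopies

lemma card_comp_mem_mul_pow_le [Fintype V] (b : τ ↪ ι) (A : Finset (τ → V)) :
    #{c : ι → V | c ∘ b ∈ A} * Fintype.card V ^ Fintype.card τ ≤
      #A * Fintype.card V ^ Fintype.card ι := by
  have hrestrict : #{c : ι → V | c ∘ b ∈ A} ≤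
      #(A ×ˢ (univ : Finset ({i // i ∉ Set.range b} → V))) := by
    refine card_le_card_of_injOn (fun c => (c ∘ b, fun i => c i)) (fun c hc => by simpa using hc) ?_
    intro c _ c' _ h
    obtain ⟨hin, hout⟩ := Prod.ext_iff.mp h
    funext i
    by_cases hi : i ∈ Set.range b
    · obtain ⟨j, rfl⟩ := hi
      exact congrFun hin j
    · exact congrFun hout ⟨i, hi⟩
  have hcard : Fintype.card {i // i ∉ Set.range b} + Fintype.card τ = Fintype.card ι := by
    have hrange : Fintype.card {i // i ∈ Set.range b} = Fintype.card τ :=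
      (Fintype.card_congr (Equiv.ofInjective b b.injective)).symm
    rw [Fintype.card_subtype_compl, hrange, Nat.sub_add_cancel (Fintype.card_le_of_embedding b)]
  calc _ ≤ #A * Fintype.card V ^ Fintype.card {i // i ∉ Set.range b} *
        Fintype.card V ^ Fintype.card τ := by
        gcongr
        simpa [card_product] using hrestrict
    _ = #A * Fintype.card V ^ Fintype.card ι := by rw [mul_assoc, ← pow_add, hcard]

lemma card_embedding_le_pow : Fintype.card (τ ↪ ι) ≤ Fintype.card ι ^ Fintype.card τ := by
  rw [Fintype.card_embedding_eq]
  exact Nat.descFactorial_le_pow _ _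

lemma card_exists_comp_mem_mul_pow_le [Fintype V] (A : Finset (τ → V)) :
    #{c : ι → V | ∃ b : τ ↪ ι, c ∘ b ∈ A} * Fintype.card V ^ Fintype.card τ ≤
      Fintype.card ι ^ Fintype.card τ * (#A * Fintype.card V ^ Fintype.card ι) := by
  have hunion : ({c : ι → V | ∃ b : τ ↪ ι, c ∘ b ∈ A} : Finset _) ⊆
      univ.biUnion fun b : τ ↪ ι => {c : ι → V | c ∘ b ∈ A} := fun c hc => by simpa using hc
  calc _ ≤ (∑ b : τ ↪ ι, #{c : ι → V | c ∘ b ∈ A}) * Fintype.card V ^ Fintype.card τ := by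
        gcongr
        exact (card_le_card hunion).trans card_biUnion_le
    _ ≤ ∑ _b : τ ↪ ι, #A * Fintype.card V ^ Fintype.card ι := by
        rw [sum_mul]
        exact sum_le_sum fun b _ => card_comp_mem_mul_pow_le b A
    _ ≤ _ := by
        rw [sum_const, smul_eq_mul, Finset.card_univ]
        gcongr
        exact card_embedding_le_pow

lemma card_le_pow_of_forall_shatters {𝒜 : Finset (Finset ι)} {d : ℕ} (hι : 2 ≤ Fintype.card ι)
    (h𝒜 : ∀ S, 𝒜.Shatters S → #S < d) : #𝒜 ≤ Fintype.card ι ^ d := by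
  have hsubset : 𝒜.shatterer ⊆ (range d).biUnion fun i => powersetCard i univ := fun S hS => by
    simpa using h𝒜 S (mem_shatterer.mp hS)
  calc #𝒜 ≤ #𝒜.shatterer := card_le_card_shatterer 𝒜
    _ ≤ ∑ i ∈ range d, #(powersetCard i (univ : Finset ι)) :=
        (card_le_card hsubset).trans card_biUnion_le
    _ ≤ ∑ i ∈ range d, Fintype.card ι ^ i := by
        refine sum_le_sum fun i _ => ?_
        rw [card_powersetCard, Finset.card_univ]
        exact Nat.choose_le_pow _ _
    _ ≤ Fintype.card ι ^ d := (Nat.geomSum_lt hι (by simp)).le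

lemma card_lt_of_shatters_image_traceOn {X : Finset U} {c : ι → V}
    (hX : ∀ b : τ ↪ ι, ∃ P, traceClass r X (c ∘ b) P = ∅) {S : Finset ι}
    (hS : (X.image (traceOn r c)).Shatters S) : #S < Fintype.card τ := by
  by_contra! hcard
  obtain ⟨S', hS'S, hS'⟩ := exists_subset_card_eq hcard
  let e : τ ≃ S' := Fintype.equivOfCardEq (by simp [hS'])
  let b : τ ↪ ι := e.toEmbedding.trans (.subtype _)
  have hb : ∀ j, b j ∈ S' := fun j => (e j).2
  obtain ⟨P, hP⟩ := hX b
  obtain ⟨u, hu, hinter⟩ := (hS.mono_right hS'S) (t := P.map b) fun i hi => by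
    obtain ⟨j, -, rfl⟩ := mem_map.mp hi
    exact hb j
  obtain ⟨x, hx, rfl⟩ := mem_image.mp hu
  have htrace : traceOn r (c ∘ b) x = P := by
    ext j
    have hj := Finset.ext_iff.mp hinter (b j)
    rw [mem_inter, mem_map', mem_traceOn, and_iff_right (hb j)] at hj
    rwa [mem_traceOn]
  exact notMem_empty x (hP ▸ mem_traceClass.mpr ⟨hx, htrace⟩)

lemma exists_subset_card_image_traceOn_le (hι : 2 ≤ Fintype.card ι) {X : Finset U} {t : ℝ}
    (ht : 0 ≤ t) (htX : (Fintype.card ι : ℝ) ^ Fintype.card τ * t ≤ #X / 2) {c : ι → V}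
    (hc : ∀ b : τ ↪ ι, ¬IsRich r X t (c ∘ b)) :
    ∃ X' ⊆ X, (#X / 2 : ℝ) ≤ #X' ∧
      #(X'.image (traceOn r c)) ≤ Fintype.card ι ^ Fintype.card τ := by
  simp only [IsRich, not_forall, not_le] at hc
  choose P hP using hc
  let rare : Finset U := univ.biUnion fun b : τ ↪ ι => traceClass r X (c ∘ b) (P b)
  have hrare : (#rare : ℝ) ≤ #X / 2 := by
    calc (#rare : ℝ) ≤ ∑ b : τ ↪ ι, (#(traceClass r X (c ∘ b) (P b)) : ℝ) := by
          exact_mod_cast card_biUnion_le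
      _ ≤ ∑ _b : τ ↪ ι, t := sum_le_sum fun b _ => (hP b).le
      _ = Fintype.card (τ ↪ ι) * t := by simp
      _ ≤ (Fintype.card ι : ℝ) ^ Fintype.card τ * t := by
          gcongr
          exact_mod_cast card_embedding_le_pow
      _ ≤ #X / 2 := htX
  refine ⟨X \ rare, sdiff_subset, ?_, card_le_pow_of_forall_shatters hι fun S hS =>
    card_lt_of_shatters_image_traceOn (fun b => ⟨P b, ?_⟩) hS⟩
  · have hsdiff : (#X : ℝ) ≤ #(X \ rare) + #rare := by
      exact_mod_cast card_le_card_sdiff_add_card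
    linarith
  · refine eq_empty_of_forall_notMem fun x hx => ?_
    obtain ⟨hxX, htrace⟩ := mem_traceClass.mp hx
    obtain ⟨hxX, hxrare⟩ := mem_sdiff.mp hxX
    exact hxrare (mem_biUnion.mpr ⟨b, mem_univ b, mem_traceClass.mpr ⟨hxX, htrace⟩⟩)

lemma card_sq_le_card_image_mul_card_filter_eq {W : Type*} [DecidableEq W] (f : U → W)
    (X : Finset U) : #X ^ 2 ≤ #(X.image f) * #{q ∈ X ×ˢ X | f q.1 = f q.2} := by
  have hpairs : #{q ∈ X ×ˢ X | f q.1 = f q.2} = ∑ w ∈ X.image f, #{x ∈ X | f x = w} ^ 2 := by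
    rw [card_eq_sum_card_fiberwise (f := fun q => f q.1) (t := X.image f)
      fun q hq => mem_image_of_mem f (mem_product.mp (mem_filter.mp hq).1).1]
    refine sum_congr rfl fun w _ => ?_
    rw [sq, ← card_product]
    congr 1
    ext q
    simp only [mem_filter, mem_product]
    grind
  rw [hpairs, card_eq_sum_card_image f X]
  exact sq_sum_le_card_mul_sum_sq

lemma card_sq_le_mul_card_sameTracePairs (hι : 2 ≤ Fintype.card ι) {X : Finset U} {t : ℝ}
    (ht : 0 ≤ t) (htX : (Fintype.card ι : ℝ) ^ Fintype.card τ * t ≤ #X / 2) {c : ι → V}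
    (hc : ∀ b : τ ↪ ι, ¬IsRich r X t (c ∘ b)) :
    (#X : ℝ) ^ 2 ≤ 4 * (Fintype.card ι : ℝ) ^ Fintype.card τ * #(sameTracePairs r X c) := by
  obtain ⟨X', hX'X, hcard, himage⟩ := exists_subset_card_image_traceOn_le hι ht htX hc
  have hsub : ({q ∈ X' ×ˢ X' | traceOn r c q.1 = traceOn r c q.2} : Finset _) ⊆
      sameTracePairs r X c := filter_subset_filter _ (product_subset_product hX'X hX'X)
  have hpairs : #X' ^ 2 ≤ Fintype.card ι ^ Fintype.card τ * #(sameTracePairs r X c) :=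
    (card_sq_le_card_image_mul_card_filter_eq (traceOn r c) X').trans <|
      Nat.mul_le_mul himage (card_le_card hsub)
  calc (#X : ℝ) ^ 2 = 4 * (#X / 2) ^ 2 := by ring
    _ ≤ 4 * (#X' : ℝ) ^ 2 := by gcongr
    _ ≤ 4 * ((Fintype.card ι : ℝ) ^ Fintype.card τ * #(sameTracePairs r X c)) := by
        gcongr
        exact_mod_cast hpairs
    _ = _ := by ring

variable [Fintype V]

lemma card_traceOn_eq_traceOn (x y : U) :
    #{c : ι → V | traceOn r c x = traceOn r c y} =
      (Fintype.card V - #(distinguishers r univ x y)) ^ Fintype.card ι := by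
  have hpi : ({c : ι → V | traceOn r c x = traceOn r c y} : Finset _) =
      Fintype.piFinset fun _ => (distinguishers r univ x y)ᶜ := by
    ext c
    simp [Finset.ext_iff, mem_traceOn, mem_distinguishers]
  rw [hpi, Fintype.card_piFinset, prod_const, card_compl, Finset.card_univ]

lemma card_traceOn_eq_traceOn_le {δ : ℝ} (hδ : δ ≤ 1) {X : Finset U} {x y : U} (hy : y ∈ X) :
    (#{c : ι → V | traceOn r c x = traceOn r c y} : ℝ) ≤
      (Fintype.card V : ℝ) ^ Fintype.card ι *
        ((if y ∈ twins r δ X x then 1 else 0) + (1 - δ) ^ Fintype.card ι) := by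
  have : 0 ≤ 1 - δ := by linarith
  rw [card_traceOn_eq_traceOn, Nat.cast_pow, Nat.cast_sub (card_le_univ _)]
  have hnonneg : (0 : ℝ) ≤ Fintype.card V - #(distinguishers r univ x y) :=
    sub_nonneg.mpr (by exact_mod_cast card_le_univ _)
  split_ifs with htwin
  · calc _ ≤ (Fintype.card V : ℝ) ^ Fintype.card ι * (1 + 0) := by
          rw [add_zero, mul_one]
          gcongr
          exact sub_le_self _ (Nat.cast_nonneg _)
      _ ≤ _ := by gcongr; positivity
  · have hfar : δ * Fintype.card V < #(distinguishers r univ x y) := by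
      simpa [mem_twins, hy] using htwin
    rw [zero_add, ← mul_pow]
    gcongr
    linarith

lemma sum_card_sameTracePairs_le {δ ℓ : ℝ} (hδ : δ ≤ 1) {X : Finset U}
    (hX : ∀ x ∈ X, #(twins r δ X x) ≤ ℓ) :
    ∑ c : ι → V, (#(sameTracePairs r X c) : ℝ) ≤
      (Fintype.card V : ℝ) ^ Fintype.card ι *
        (#X * ℓ + #X ^ 2 * (1 - δ) ^ Fintype.card ι) := by
  have hswap : ∑ c : ι → V, #(sameTracePairs r X c) =
      ∑ x ∈ X, ∑ y ∈ X, #{c : ι → V | traceOn r c x = traceOn r c y} := by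
    simp_rw [sameTracePairs, card_filter]
    rw [sum_comm, sum_product]
  have htwins : ∑ x ∈ X, ∑ y ∈ X, (if y ∈ twins r δ X x then 1 else 0 : ℝ) ≤ #X * ℓ := by
    rw [← nsmul_eq_mul]
    refine sum_le_card_nsmul _ _ _ fun x hx => ?_
    have hsub : twins r δ X x ⊆ X := filter_subset _ _
    rw [sum_boole, filter_mem_eq_inter, inter_eq_right.mpr hsub]
    exact hX x hx
  calc ∑ c : ι → V, (#(sameTracePairs r X c) : ℝ)
      = ∑ x ∈ X, ∑ y ∈ X, (#{c : ι → V | traceOn r c x = traceOn r c y} : ℝ) := by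
        exact_mod_cast hswap
    _ ≤ ∑ x ∈ X, ∑ y ∈ X, (Fintype.card V : ℝ) ^ Fintype.card ι *
          ((if y ∈ twins r δ X x then 1 else 0) + (1 - δ) ^ Fintype.card ι) :=
        sum_le_sum fun x _ => sum_le_sum fun y hy => card_traceOn_eq_traceOn_le hδ hy
    _ = (Fintype.card V : ℝ) ^ Fintype.card ι *
          (∑ x ∈ X, ∑ y ∈ X, (if y ∈ twins r δ X x then 1 else 0 : ℝ) +
            #X ^ 2 * (1 - δ) ^ Fintype.card ι) := by
        simp only [← mul_sum, sum_add_distrib, sum_const, nsmul_eq_mul]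
        ring
    _ ≤ _ := by gcongr

lemma card_forall_not_isRich_mul_card_sq_le (hι : 2 ≤ Fintype.card ι) {X : Finset U} {t : ℝ}
    (ht : 0 ≤ t) (htX : (Fintype.card ι : ℝ) ^ Fintype.card τ * t ≤ #X / 2) {δ ℓ : ℝ} (hδ : δ ≤ 1)
    (hX : ∀ x ∈ X, #(twins r δ X x) ≤ ℓ) :
    #{c : ι → V | ∀ b : τ ↪ ι, ¬IsRich r X t (c ∘ b)} * (#X : ℝ) ^ 2 ≤
      4 * (Fintype.card ι : ℝ) ^ Fintype.card τ * ((Fintype.card V : ℝ) ^ Fintype.card ι *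
        (#X * ℓ + #X ^ 2 * (1 - δ) ^ Fintype.card ι)) := by
  calc _ ≤ ∑ c : ι → V with ∀ b : τ ↪ ι, ¬IsRich r X t (c ∘ b),
          4 * (Fintype.card ι : ℝ) ^ Fintype.card τ * #(sameTracePairs r X c) := by
        rw [← nsmul_eq_mul]
        exact card_nsmul_le_sum _ _ _ fun c hc =>
          card_sq_le_mul_card_sameTracePairs hι ht htX (mem_filter.mp hc).2
    _ ≤ ∑ c : ι → V, 4 * (Fintype.card ι : ℝ) ^ Fintype.card τ * #(sameTracePairs r X c) :=
        sum_le_sum_of_subset_of_nonneg (filter_subset _ _) fun _ _ _ => by positivity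
    _ ≤ _ := by
        rw [← mul_sum]
        gcongr
        exact sum_card_sameTracePairs_le hδ hX

lemma card_exists_isRich_comp_lt [Nonempty V] [Nonempty ι] {X : Finset U} {t : ℝ}
    (hrich : #{g : τ → V | IsRich r X t g} <
      (Fintype.card V : ℝ) ^ Fintype.card τ / (2 * (Fintype.card ι : ℝ) ^ Fintype.card τ)) :
    (#{c : ι → V | ∃ b : τ ↪ ι, IsRich r X t (c ∘ b)} : ℝ) <
      (Fintype.card V : ℝ) ^ Fintype.card ι / 2 := by
  have hV : (0 : ℝ) < Fintype.card V := by exact_mod_cast Fintype.card_pos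
  have : (0 : ℝ) < Fintype.card ι := by exact_mod_cast Fintype.card_pos
  have hcount : (#{c : ι → V | ∃ b : τ ↪ ι, IsRich r X t (c ∘ b)} : ℝ) *
      Fintype.card V ^ Fintype.card τ ≤ (Fintype.card ι : ℝ) ^ Fintype.card τ *
        (#{g : τ → V | IsRich r X t g} * Fintype.card V ^ Fintype.card ι) := by
    have h := card_exists_comp_mem_mul_pow_le (ι := ι) ({g : τ → V | IsRich r X t g} : Finset _)
    simp only [mem_filter_univ] at h
    exact_mod_cast h
  refine lt_of_mul_lt_mul_right (hcount.trans_lt ?_) (pow_pos hV (Fintype.card τ)).le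
  calc _ < (Fintype.card ι : ℝ) ^ Fintype.card τ * ((Fintype.card V : ℝ) ^ Fintype.card τ /
          (2 * (Fintype.card ι : ℝ) ^ Fintype.card τ) * Fintype.card V ^ Fintype.card ι) := by
        gcongr
    _ = _ := by field_simp

/-- If few tuples indexed by `τ` are rich, most tuples indexed by `ι` have no rich subtuple, so by
Sauer–Shelah they realise few traces on `X`; but without many twins, two vertices of `X` rarely have
the same trace. -/
theorem pow_le_card_patternCopies_or_exists_twins {σ : Type*} [Fintype σ] [Fintype U] [Nonempty V]
    (hι : 2 ≤ Fintype.card ι) {δ : ℝ} (hδ : δ ≤ 1)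
    (hδι : 16 * (Fintype.card ι : ℝ) ^ Fintype.card τ * (1 - δ) ^ Fintype.card ι ≤ 1)
    (B : σ → τ → Prop) {X : Finset U} (hX : X.Nonempty) :
    (Fintype.card V : ℝ) ^ Fintype.card τ / (2 * (Fintype.card ι : ℝ) ^ Fintype.card τ) *
        (#X / (2 * (Fintype.card ι : ℝ) ^ Fintype.card τ)) ^ Fintype.card σ ≤
          #(patternCopies r B) ∨
      ∃ x ∈ X, #X / (16 * (Fintype.card ι : ℝ) ^ Fintype.card τ) ≤ #(twins r δ X x) := by
  have hX0 : (0 : ℝ) < #X := by exact_mod_cast hX.card_pos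
  have : Nonempty ι := Fintype.card_pos_iff.mp (by omega)
  have : (0 : ℝ) < Fintype.card ι := by exact_mod_cast Fintype.card_pos
  by_contra! ⟨hcopies, htwins⟩
  set Q : ℝ := (Fintype.card ι : ℝ) ^ Fintype.card τ
  set t : ℝ := #X / (2 * Q) with ht
  set N : ℝ := (Fintype.card V : ℝ) ^ Fintype.card ι with hN
  have hQ : 0 < Q := by positivity
  have ht0 : 0 < t := by positivity
  have hrich : #{g : τ → V | IsRich r X t g} < (Fintype.card V : ℝ) ^ Fintype.card τ / (2 * Q) :=
    lt_of_mul_lt_mul_right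
      ((card_isRich_mul_pow_le_card_patternCopies B X ht0.le).trans_lt hcopies) (by positivity)
  have hwith : (#{c : ι → V | ∃ b : τ ↪ ι, IsRich r X t (c ∘ b)} : ℝ) < N / 2 :=
    card_exists_isRich_comp_lt hrich
  have hwithout : (#{c : ι → V | ¬∃ b : τ ↪ ι, IsRich r X t (c ∘ b)} : ℝ) ≤ N / 2 := by
    simp only [not_exists]
    refine le_of_mul_le_mul_right ((card_forall_not_isRich_mul_card_sq_le hι ht0.le
      (by rw [ht]; field_simp; rfl) hδ fun x hx => (htwins x hx).le).trans ?_) (pow_pos hX0 2)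
    have hpow : (1 - δ) ^ Fintype.card ι ≤ 1 / (16 * Q) := by
      rwa [le_div_iff₀' (by positivity)]
    calc _ ≤ 4 * Q * (N * (#X * (#X / (16 * Q)) + #X ^ 2 * (1 / (16 * Q)))) := by gcongr
      _ = N / 2 * #X ^ 2 := by field_simp; ring
  have htotal : (#{c : ι → V | ∃ b : τ ↪ ι, IsRich r X t (c ∘ b)} : ℝ) +
      #{c : ι → V | ¬∃ b : τ ↪ ι, IsRich r X t (c ∘ b)} = N := by
    rw [hN, ← Nat.cast_pow, ← Fintype.card_fun, ← Finset.card_univ]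
    exact_mod_cast card_filter_add_card_filter_not _
  linarith

end Traces

section Extraction

variable {V : Type*}

lemma exists_pairwiseDisjoint_of_forall_exists_subset [Fintype V] {P : Finset V → Prop} {L : ℕ}
    (hP : ∀ X : Finset V, Fintype.card V ≤ 2 * #X → ∃ Y ⊆ X, #Y = L ∧ P Y) (hL : 0 < L) {p : ℕ}
    (hp : 2 * (p * L) ≤ Fintype.card V) :
    ∃ 𝒴 : Finset (Finset V), #𝒴 = p ∧ (𝒴 : Set (Finset V)).PairwiseDisjoint id ∧
      ∀ Y ∈ 𝒴, #Y = L ∧ P Y := by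
  induction p with
  | zero => exact ⟨∅, by simp⟩
  | succ p ih =>
    obtain ⟨𝒴, rfl, hdisj, h𝒴⟩ := ih (by nlinarith)
    have hused : #(𝒴.biUnion id) ≤ #𝒴 * L :=
      card_biUnion_le_card_mul _ _ _ fun Y hY => (h𝒴 Y hY).1.le
    have hfree := card_add_card_compl (𝒴.biUnion id)
    obtain ⟨Y, hY, hYL, hPY⟩ := hP (𝒴.biUnion id)ᶜ (by nlinarith)
    have hYdisj : ∀ Z ∈ 𝒴, Disjoint Y Z := fun Z hZ =>
      (subset_compl_iff_disjoint_right.mp hY).mono_right (subset_biUnion_of_mem id hZ)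
    have hYne : Y.Nonempty := card_pos.mp (hYL ▸ hL)
    have hY𝒴 : Y ∉ 𝒴 := fun h => hYne.ne_empty (disjoint_self.mp (hYdisj Y h))
    refine ⟨insert Y 𝒴, card_insert_of_notMem hY𝒴, ?_,
      (forall_mem_insert _ _ _).mpr ⟨⟨hYL, hPY⟩, h𝒴⟩⟩
    rw [coe_insert]
    exact hdisj.insert fun Z hZ _ => hYdisj Z hZ

end Extraction

section Ramsey

variable {ι : Type*}

/-- Shifting all sizes by the number `d` of uncoloured neighbours makes the recursion behind the
classical Ramsey bound `2 ^ (a + b)` go through without loss. -/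
theorem exists_isNClique_or_exists_isNClique {R B : SimpleGraph ι} {d : ℝ} (hd : 0 ≤ d)
    {Z : Finset ι}
    (hZ : ∀ X ⊆ Z, X.Nonempty → ∃ v ∈ X, #{w ∈ X | ¬R.Adj v w ∧ ¬B.Adj v w} ≤ d) {a b : ℕ}
    {X : Finset ι} (hXZ : X ⊆ Z) (hX : 2 ^ (a + b) * d < #X + d) :
    (∃ Y ⊆ X, R.IsNClique a Y) ∨ ∃ Y ⊆ X, B.IsNClique b Y := by
  induction a generalizing b X with
  | zero => exact .inl ⟨∅, empty_subset X, by simp⟩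
  | succ a iha =>
    induction b generalizing X with
    | zero => exact .inr ⟨∅, empty_subset X, by simp⟩
    | succ b ihb =>
      have hpow : 2 ^ (a + 1 + (b + 1)) * d = 2 * (2 ^ (a + (b + 1)) * d) := by ring
      have hpow' : 2 ^ (a + 1 + b) * d = 2 ^ (a + (b + 1)) * d := by ring
      have hpos : d ≤ 2 ^ (a + (b + 1)) * d := le_mul_of_one_le_left hd (one_le_pow₀ one_le_two)
      have hXne : X.Nonempty := card_pos.mp (by exact_mod_cast (by linarith : (0 : ℝ) < #X))
      obtain ⟨v, hv, hbad⟩ := hZ X hXZ hXne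
      have hcover : X ⊆ {w ∈ X | R.Adj v w} ∪ {w ∈ X | B.Adj v w} ∪
          {w ∈ X | ¬R.Adj v w ∧ ¬B.Adj v w} := fun w hw => by
        simp only [mem_union, mem_filter]
        tauto
      have hcard : (#X : ℝ) ≤ #{w ∈ X | R.Adj v w} + #{w ∈ X | B.Adj v w} +
          #{w ∈ X | ¬R.Adj v w ∧ ¬B.Adj v w} := by
        exact_mod_cast (card_le_card hcover).trans
          ((card_union_le _ _).trans (Nat.add_le_add_right (card_union_le _ _) _))
      rcases lt_or_ge (2 ^ (a + (b + 1)) * d) (#{w ∈ X | R.Adj v w} + d) with hR | hR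
      · rcases iha ((filter_subset _ X).trans hXZ) hR with ⟨Y, hY, hclique⟩ | ⟨Y, hY, hclique⟩
        · exact .inl ⟨insert v Y, insert_subset hv (hY.trans (filter_subset _ X)),
            hclique.insert fun w hw => (mem_filter.mp (hY hw)).2⟩
        · exact .inr ⟨Y, hY.trans (filter_subset _ X), hclique⟩
      · rcases ihb (X := {w ∈ X | B.Adj v w}) ((filter_subset _ X).trans hXZ) (by linarith) with
          ⟨Y, hY, hclique⟩ | ⟨Y, hY, hclique⟩
        · exact .inl ⟨Y, hY.trans (filter_subset _ X), hclique⟩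
        · exact .inr ⟨insert v Y, insert_subset hv (hY.trans (filter_subset _ X)),
            hclique.insert fun w hw => (mem_filter.mp (hY hw)).2⟩

lemma exists_mem_card_filter_or_le {s : ι → ι → Prop} {X : Finset ι} (hX : X.Nonempty) {d : ℝ}
    (hs : ∀ v ∈ X, #{w ∈ X | s v w} ≤ d) : ∃ v ∈ X, #{w ∈ X | s v w ∨ s w v} ≤ 2 * d := by
  refine exists_le_of_sum_le hX ?_
  have hswap : ∑ v ∈ X, #{w ∈ X | s w v} = ∑ v ∈ X, #{w ∈ X | s v w} :=
    (sum_card_bipartiteAbove_eq_sum_card_bipartiteBelow s).symm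
  calc ∑ v ∈ X, (#{w ∈ X | s v w ∨ s w v} : ℝ)
      ≤ ∑ v ∈ X, (#{w ∈ X | s v w} : ℝ) + ∑ v ∈ X, (#{w ∈ X | s w v} : ℝ) := by
        rw [← sum_add_distrib]
        refine sum_le_sum fun v _ => ?_
        rw [filter_or]
        exact_mod_cast card_union_le _ _
    _ = 2 * ∑ v ∈ X, (#{w ∈ X | s v w} : ℝ) := by
        rw [two_mul]
        exact_mod_cast congrArg _ hswap
    _ ≤ 2 * ∑ _v ∈ X, d := by gcongr with v hv; exact hs v hv
    _ = ∑ _v ∈ X, 2 * d := mul_sum _ _ _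

end Ramsey

section Density

variable {U V : Type*} (r : U → V → Prop)

/-- The number of triples `(x, x', v)` with `x, x' ∈ X` and `v ∈ W` such that `v` is related to
exactly one of `x` and `x'`. -/
def disagreement (X : Finset U) (W : Finset V) : ℕ :=
  ∑ x ∈ X, ∑ x' ∈ X, #(distinguishers r W x x')

/-- The graph on sets of vertices of `G` in which two distinct sets are adjacent if the edge density
between them lies in `I`. -/
def densityGraph (G : SimpleGraph V) (I : Set ℝ) : SimpleGraph (Finset V) where
  Adj X W := X ≠ W ∧ (G.edgeDensity X W : ℝ) ∈ I
  symm := ⟨fun _ _ h => ⟨h.1.symm, G.edgeDensity_comm _ _ ▸ h.2⟩⟩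
  loopless := ⟨fun _ h => h.1 rfl⟩

variable {r}

lemma cast_disagreement (X : Finset U) (W : Finset V) :
    (disagreement r X W : ℝ) = ∑ x ∈ X, ∑ x' ∈ X, ∑ v ∈ W,
      ((if r x v then 1 else 0) - if r x' v then 1 else 0 : ℝ) ^ 2 := by
  push_cast [disagreement]
  refine sum_congr rfl fun x _ => sum_congr rfl fun x' _ => ?_
  rw [distinguishers, card_filter, Nat.cast_sum]
  refine sum_congr rfl fun v _ => ?_
  by_cases h : r x v <;> by_cases h' : r x' v <;> simp [h, h']

lemma sum_sum_sub_sq {ι : Type*} (s : Finset ι) (f : ι → ℝ) :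
    ∑ i ∈ s, ∑ j ∈ s, (f i - f j) ^ 2 = 2 * (#s * ∑ i ∈ s, f i ^ 2 - (∑ i ∈ s, f i) ^ 2) := by
  simp only [sub_sq, sum_add_distrib, sum_sub_distrib, sum_const, nsmul_eq_mul, ← mul_sum,
    ← sum_mul]
  ring

/-- To compare the pairs `(x, v)` and `(x', v')`, pass through `(x', v)`. -/
lemma two_mul_card_interedges_mul_le (X : Finset U) (W : Finset V) :
    2 * ((#(Rel.interedges r X W) : ℝ) * (#X * #W - #(Rel.interedges r X W))) ≤
      #W * disagreement r X W + #X * disagreement (Function.swap r) W X := by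
  let f (x : U) (v : V) : ℝ := if r x v then 1 else 0
  have hcard : (#(Rel.interedges r X W) : ℝ) = ∑ q ∈ X ×ˢ W, f q.1 q.2 := by
    rw [sum_boole]
    rfl
  have hsq : ∀ q ∈ X ×ˢ W, f q.1 q.2 ^ 2 = f q.1 q.2 := fun q _ => by
    by_cases h : r q.1 q.2 <;> simp [f, h]
  have htriangle : ∀ x x' v v',
      (f x v - f x' v') ^ 2 ≤ (f x v - f x' v) ^ 2 + (f x' v - f x' v') ^ 2 := fun x x' v v' => by
    dsimp only [f]
    split_ifs <;> norm_num
  calc 2 * ((#(Rel.interedges r X W) : ℝ) * (#X * #W - #(Rel.interedges r X W)))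
      = ∑ q ∈ X ×ˢ W, ∑ q' ∈ X ×ˢ W, (f q.1 q.2 - f q'.1 q'.2) ^ 2 := by
        rw [sum_sum_sub_sq (X ×ˢ W) fun q => f q.1 q.2, sum_congr rfl hsq, ← hcard, card_product]
        push_cast
        ring
    _ ≤ ∑ q ∈ X ×ˢ W, ∑ q' ∈ X ×ˢ W,
          ((f q.1 q.2 - f q'.1 q.2) ^ 2 + (f q'.1 q.2 - f q'.1 q'.2) ^ 2) :=
        sum_le_sum fun q _ => sum_le_sum fun q' _ => htriangle _ _ _ _
    _ = _ := by
        rw [cast_disagreement, cast_disagreement]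
        simp only [sum_product, sum_add_distrib]
        congr 1
        · simp_rw [sum_const, nsmul_eq_mul, mul_sum]
          refine sum_congr rfl fun x _ => ?_
          rw [sum_comm]
        · rw [sum_const, nsmul_eq_mul]
          congr 1
          exact sum_congr rfl fun v _ => sum_comm

lemma le_edgeDensity_or_edgeDensity_le {X : Finset U} {W : Finset V} {ε : ℝ} (hε0 : 0 ≤ ε)
    (hε : ε ≤ 1 / 2)
    (hXW : disagreement r X W ≤ ε / 2 * #X ^ 2 * #W)
    (hWX : disagreement (Function.swap r) W X ≤ ε / 2 * #W ^ 2 * #X) :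
    1 - ε ≤ Rel.edgeDensity r X W ∨ Rel.edgeDensity r X W ≤ ε := by
  by_contra! ⟨hdense, hsparse⟩
  set ρ : ℝ := ((Rel.edgeDensity r X W : ℚ) : ℝ) with hρ
  have hsize : (0 : ℝ) < #X * #W := by
    by_contra! h
    have hρ0 : ρ = 0 := by simp [hρ, Rel.edgeDensity, h.antisymm (by positivity)]
    linarith
  have he : (#(Rel.interedges r X W) : ℝ) = ρ * (#X * #W) := by
    rw [hρ, Rel.edgeDensity]
    push_cast
    rw [div_mul_cancel₀ _ hsize.ne']
  have hcount := two_mul_card_interedges_mul_le (r := r) X W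
  rw [he] at hcount
  have hvar : ρ * (1 - ρ) ≤ ε / 2 := by
    refine le_of_mul_le_mul_right ?_ (pow_pos hsize 2)
    nlinarith [mul_le_mul_of_nonneg_left hXW (Nat.cast_nonneg (α := ℝ) #W),
      mul_le_mul_of_nonneg_left hWX (Nat.cast_nonneg (α := ℝ) #X)]
  nlinarith [mul_pos (sub_pos.mpr hdense) (sub_pos.mpr hsparse)]

lemma sum_disagreement_le [Fintype V] (X : Finset U) {𝒴 : Finset (Finset V)}
    (h𝒴 : (𝒴 : Set (Finset V)).PairwiseDisjoint id) :
    ∑ W ∈ 𝒴, disagreement r X W ≤ disagreement r X univ := by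
  simp only [disagreement]
  rw [sum_comm]
  refine sum_le_sum fun x _ => ?_
  rw [sum_comm]
  refine sum_le_sum fun x' _ => ?_
  have hdisj : (𝒴 : Set (Finset V)).PairwiseDisjoint fun W => distinguishers r W x x' :=
    h𝒴.mono fun W => filter_subset _ W
  rw [← card_biUnion hdisj]
  exact card_le_card (biUnion_subset.mpr fun W _ => filter_subset_filter _ (subset_univ W))

lemma card_filter_lt_disagreement_le [Fintype V] {X : Finset U} (hX : X.Nonempty) {η : ℝ}
    (hη : ∀ x ∈ X, ∀ x' ∈ X, #(distinguishers r univ x x') ≤ η * Fintype.card V)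
    {𝒴 : Finset (Finset V)} (h𝒴 : (𝒴 : Set (Finset V)).PairwiseDisjoint id) {L : ℕ} (hL : 0 < L)
    (h𝒴L : ∀ W ∈ 𝒴, #W = L) {ε : ℝ} (hε : 0 < ε) :
    #{W ∈ 𝒴 | ε / 2 * #X ^ 2 * #W < disagreement r X W} ≤ 2 * η * Fintype.card V / (ε * L) := by
  have hX0 : (0 : ℝ) < #X := by exact_mod_cast hX.card_pos
  have : (0 : ℝ) < L := by exact_mod_cast hL
  have hmarkov : #{W ∈ 𝒴 | ε / 2 * #X ^ 2 * #W < disagreement r X W} * (ε / 2 * #X ^ 2 * L) ≤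
      #X ^ 2 * (η * Fintype.card V) :=
    calc _ ≤ ∑ W ∈ 𝒴 with ε / 2 * #X ^ 2 * #W < disagreement r X W, (disagreement r X W : ℝ) := by
          rw [← nsmul_eq_mul]
          refine card_nsmul_le_sum _ _ _ fun W hW => ?_
          obtain ⟨hW, hlt⟩ := mem_filter.mp hW
          rw [← h𝒴L W hW]
          exact hlt.le
      _ ≤ ∑ W ∈ 𝒴, (disagreement r X W : ℝ) :=
          sum_le_sum_of_subset_of_nonneg (filter_subset _ _) fun _ _ _ => by positivity
      _ ≤ disagreement r X univ := by exact_mod_cast sum_disagreement_le X h𝒴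
      _ ≤ ∑ _x ∈ X, ∑ _x' ∈ X, η * Fintype.card V := by
          push_cast [disagreement]
          exact sum_le_sum fun x hx => sum_le_sum fun x' hx' => hη x hx x' hx'
      _ = #X ^ 2 * (η * Fintype.card V) := by
          simp only [sum_const, nsmul_eq_mul]
          ring
  rw [le_div_iff₀ (by positivity)]
  refine le_of_mul_le_mul_right ?_ (pow_pos hX0 2)
  linarith

end Density

section Homogeneous

variable {V : Type*} [Fintype V] (G : SimpleGraph V)

theorem exists_isNClique_densityGraph {𝒴 : Finset (Finset V)}
    (h𝒴 : (𝒴 : Set (Finset V)).PairwiseDisjoint id) {L : ℕ} (hL : 0 < L) (h𝒴L : ∀ Y ∈ 𝒴, #Y = L)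
    {η ε : ℝ} (hη : ∀ Y ∈ 𝒴, ∀ x ∈ Y, ∀ x' ∈ Y,
      #(distinguishers G.Adj univ x x') ≤ η * Fintype.card V)
    (hη0 : 0 ≤ η) (hε0 : 0 < ε) (hε : ε ≤ 1 / 2) {m : ℕ}
    (hm : 4 ^ m * (4 * η * Fintype.card V / (ε * L) + 1) ≤ #𝒴) :
    (∃ 𝒵 ⊆ 𝒴, (densityGraph G (Set.Ici (1 - ε))).IsNClique m 𝒵) ∨
      ∃ 𝒵 ⊆ 𝒴, (densityGraph G (Set.Iic ε)).IsNClique m 𝒵 := by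
  let far (Y W : Finset V) : Prop := ε / 2 * #Y ^ 2 * #W < disagreement G.Adj Y W
  have hhom : ∀ Y W, ¬far Y W → ¬far W Y → Y ≠ W →
      (densityGraph G (Set.Ici (1 - ε))).Adj Y W ∨ (densityGraph G (Set.Iic ε)).Adj Y W := by
    intro Y W hYW hWY hne
    have hswap : Function.swap G.Adj = G.Adj := by
      ext v w
      exact G.adj_comm w v
    have h := le_edgeDensity_or_edgeDensity_le (r := G.Adj) hε0.le hε (not_lt.mp hYW)
      (hswap ▸ not_lt.mp hWY)
    exact h.imp (⟨hne, ·⟩) (⟨hne, ·⟩)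
  have hdeg : 0 ≤ 4 * η * Fintype.card V / (ε * L) + 1 := by positivity
  refine exists_isNClique_or_exists_isNClique hdeg (Z := 𝒴) (fun X hX hXne => ?_) subset_rfl ?_
  · have hfar : ∀ Y ∈ X, #{W ∈ X | far Y W} ≤ 2 * η * Fintype.card V / (ε * L) := fun Y hY =>
      card_filter_lt_disagreement_le (card_pos.mp (by rwa [h𝒴L Y (hX hY)])) (hη Y (hX hY))
        (h𝒴.subset (coe_subset.mpr hX)) hL (fun W hW => h𝒴L W (hX hW)) hε0
    obtain ⟨Y, hY, hdeg⟩ := exists_mem_card_filter_or_le hXne hfar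
    have hsub : ({W ∈ X | ¬(densityGraph G (Set.Ici (1 - ε))).Adj Y W ∧
        ¬(densityGraph G (Set.Iic ε)).Adj Y W} : Finset _) ⊆
        insert Y {W ∈ X | far Y W ∨ far W Y} := fun W hW => by
      have := hhom Y W
      simp only [mem_filter, mem_insert] at hW ⊢
      grind
    refine ⟨Y, hY, (Nat.cast_le.mpr ((card_le_card hsub).trans (card_insert_le _ _))).trans ?_⟩
    push_cast
    refine add_le_add_left (hdeg.trans_eq ?_) 1
    ring
  · have hone : (1 : ℝ) ≤ 4 * η * Fintype.card V / (ε * L) + 1 :=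
      le_add_of_nonneg_left (by positivity)
    rw [← two_mul, pow_mul, (by norm_num : (2 : ℝ) ^ 2 = 4)]
    linarith

lemma card_distinguishers_twins_le {x₀ x x' : V} {δ : ℝ} {X : Finset V}
    (hx : x ∈ twins G.Adj δ X x₀) (hx' : x' ∈ twins G.Adj δ X x₀) :
    #(distinguishers G.Adj univ x x') ≤ 2 * δ * Fintype.card V := by
  have hsub : distinguishers G.Adj univ x x' ⊆
      distinguishers G.Adj univ x₀ x ∪ distinguishers G.Adj univ x₀ x' := fun v hv => by
    simp only [mem_union, mem_distinguishers] at hv ⊢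
    tauto
  have hcard : (#(distinguishers G.Adj univ x x') : ℝ) ≤
      #(distinguishers G.Adj univ x₀ x) + #(distinguishers G.Adj univ x₀ x') := by
    exact_mod_cast (card_le_card hsub).trans (card_union_le _ _)
  linarith [(mem_twins.mp hx).2, (mem_twins.mp hx').2]

lemma exists_pairwiseDisjoint_of_forall_exists_twins {Q : ℕ} (hQ : 0 < Q)
    (hV : 32 * Q ≤ Fintype.card V) {δ : ℝ}
    (htwins : ∀ X : Finset V, Fintype.card V ≤ 2 * #X →
      ∃ x ∈ X, (#X : ℝ) / (16 * Q) ≤ #(twins G.Adj δ X x)) :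
    ∃ 𝒴 : Finset (Finset V), #𝒴 = 16 * Q ∧ (𝒴 : Set (Finset V)).PairwiseDisjoint id ∧
      ∀ Y ∈ 𝒴, #Y = Fintype.card V / (32 * Q) ∧
        ∀ x ∈ Y, ∀ x' ∈ Y, #(distinguishers G.Adj univ x x') ≤ 2 * δ * Fintype.card V := by
  refine exists_pairwiseDisjoint_of_forall_exists_subset (fun X hX => ?_)
    (Nat.div_pos hV (by omega)) ?_
  · obtain ⟨x₀, -, hcard⟩ := htwins X hX
    have hlarge : Fintype.card V / (32 * Q) ≤ #(twins G.Adj δ X x₀) := by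
      have hX' : (Fintype.card V : ℝ) ≤ 2 * #X := by exact_mod_cast hX
      rw [← Nat.cast_le (α := ℝ)]
      calc ((Fintype.card V / (32 * Q) : ℕ) : ℝ) ≤ Fintype.card V / (32 * Q) := by
            exact_mod_cast Nat.cast_div_le (α := ℝ)
        _ ≤ 2 * #X / (32 * Q) := by gcongr
        _ = #X / (16 * Q) := by ring
        _ ≤ #(twins G.Adj δ X x₀) := hcard
    obtain ⟨Y, hY, hYcard⟩ := exists_subset_card_eq hlarge
    exact ⟨Y, hY.trans (filter_subset _ _), hYcard, fun x hx x' hx' =>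
      card_distinguishers_twins_le G (hY hx) (hY hx')⟩
  · linarith [Nat.mul_div_le (Fintype.card V) (32 * Q)]

lemma exists_isNClique_of_forall_exists_twins {Q : ℕ} (hQ : 0 < Q) (hV : 32 * Q ≤ Fintype.card V)
    {δ ε : ℝ} (hδ : 0 ≤ δ) (hε0 : 0 < ε) (hε : ε ≤ 1 / 2) {m : ℕ} (hmδ : 64 * 4 ^ m * δ ≤ ε)
    (hmQ : (4 : ℝ) ^ m ≤ Q)
    (htwins : ∀ X : Finset V, Fintype.card V ≤ 2 * #X →
      ∃ x ∈ X, (#X : ℝ) / (16 * Q) ≤ #(twins G.Adj δ X x)) :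
    ∃ 𝒵 : Finset (Finset V), (𝒵 : Set (Finset V)).PairwiseDisjoint id ∧
      (∀ W ∈ 𝒵, (Fintype.card V : ℝ) / (64 * Q) ≤ #W) ∧
      ((densityGraph G (Set.Ici (1 - ε))).IsNClique m 𝒵 ∨
        (densityGraph G (Set.Iic ε)).IsNClique m 𝒵) := by
  have : (0 : ℝ) < Q := by exact_mod_cast hQ
  obtain ⟨𝒴, h𝒴card, h𝒴, hY⟩ := exists_pairwiseDisjoint_of_forall_exists_twins G hQ hV htwins
  set L := Fintype.card V / (32 * Q)
  have hLpos : 0 < L := Nat.div_pos hV (by omega)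
  have : (0 : ℝ) < L := by exact_mod_cast hLpos
  have hVL : (Fintype.card V : ℝ) ≤ 64 * Q * L := by
    have hlt : Fintype.card V < 32 * Q * (L + 1) := Nat.lt_mul_div_succ _ (by omega)
    exact_mod_cast (by nlinarith : Fintype.card V ≤ 64 * Q * L)
  have hdeg : 4 ^ m * (4 * (2 * δ) * Fintype.card V / (ε * L) + 1) ≤ #𝒴 := by
    calc (4 : ℝ) ^ m * (4 * (2 * δ) * Fintype.card V / (ε * L) + 1)
        ≤ 4 ^ m * (4 * (2 * δ) * (64 * Q * L) / (ε * L) + 1) := by gcongr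
      _ = 8 * Q * (64 * 4 ^ m * δ / ε) + 4 ^ m := by field_simp; ring
      _ ≤ 8 * Q * 1 + Q := by
          gcongr
          exact (div_le_one hε0).mpr hmδ
      _ ≤ #𝒴 := by
          rw [h𝒴card]
          push_cast
          linarith
  have hsize : ∀ W ∈ 𝒴, (Fintype.card V : ℝ) / (64 * Q) ≤ #W := fun W hW => by
    rwa [(hY W hW).1, div_le_iff₀' (by positivity)]
  rcases exists_isNClique_densityGraph G h𝒴 hLpos (fun Y h => (hY Y h).1) (fun Y h => (hY Y h).2)
    (by positivity) hε0 hε hdeg with ⟨𝒵, h𝒵, hclique⟩ | ⟨𝒵, h𝒵, hclique⟩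
  · exact ⟨𝒵, h𝒴.subset h𝒵, fun W hW => hsize W (h𝒵 hW), .inl hclique⟩
  · exact ⟨𝒵, h𝒴.subset h𝒵, fun W hW => hsize W (h𝒵 hW), .inr hclique⟩

theorem pow_le_card_patternCopies_or_exists_isNClique {σ τ : Type*} [Fintype σ] [Fintype τ]
    (B : σ → τ → Prop) {s Q : ℕ} (hs : 2 ≤ s) (hQ : s ^ Fintype.card τ = Q) {δ ε : ℝ} (hδ0 : 0 ≤ δ)
    (hδ : δ ≤ 1) (hδs : 16 * (Q : ℝ) * (1 - δ) ^ s ≤ 1) (hε0 : 0 < ε) (hε : ε ≤ 1 / 2) {m : ℕ}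
    (hmδ : 64 * 4 ^ m * δ ≤ ε) (hmQ : (4 : ℝ) ^ m ≤ Q) (hV : 32 * Q ≤ Fintype.card V) :
    (Fintype.card V : ℝ) ^ Fintype.card τ / (2 * Q) *
        (Fintype.card V / (4 * Q)) ^ Fintype.card σ ≤ #(patternCopies G.Adj B) ∨
      ∃ 𝒵 : Finset (Finset V), (𝒵 : Set (Finset V)).PairwiseDisjoint id ∧
        (∀ W ∈ 𝒵, (Fintype.card V : ℝ) / (64 * Q) ≤ #W) ∧
        ((densityGraph G (Set.Ici (1 - ε))).IsNClique m 𝒵 ∨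
          (densityGraph G (Set.Iic ε)).IsNClique m 𝒵) := by
  have hQ0 : 0 < Q := hQ ▸ pow_pos (by omega) _
  have : (0 : ℝ) < Q := by exact_mod_cast hQ0
  have hQcast : (s : ℝ) ^ Fintype.card τ = Q := by exact_mod_cast hQ
  have hVpos : 0 < Fintype.card V := by omega
  have : Nonempty V := Fintype.card_pos_iff.mp hVpos
  by_cases htwins : ∀ X : Finset V, Fintype.card V ≤ 2 * #X →
      ∃ x ∈ X, (#X : ℝ) / (16 * Q) ≤ #(twins G.Adj δ X x)
  · exact .inr (exists_isNClique_of_forall_exists_twins G hQ0 hV hδ0 hε0 hε hmδ hmQ htwins)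
  · left
    push Not at htwins
    obtain ⟨X, hX, hfew⟩ := htwins
    have hXpos : X.Nonempty := card_pos.mp (by omega)
    have hcopies := (pow_le_card_patternCopies_or_exists_twins (ι := Fin s) (r := G.Adj)
      (by simpa using hs) hδ (by simpa [hQcast] using hδs) B hXpos).resolve_right (by
        push Not
        simpa [hQcast] using hfew)
    have hX' : (Fintype.card V : ℝ) ≤ 2 * #X := by exact_mod_cast hX
    rw [Fintype.card_fin, hQcast] at hcopies
    refine le_trans ?_ hcopies
    gcongr ?_ * ?_ ^ _
    rw [div_le_div_iff₀ (by positivity) (by positivity)]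
    nlinarith

end Homogeneous

section Parameters

lemma one_sub_one_div_pow_sq_le_exp_neg {D : ℕ} (hD : 0 < D) :
    (1 - 1 / D : ℝ) ^ D ^ 2 ≤ Real.exp (-D) := by
  have hD' : (D : ℝ) ≤ (D ^ 2 : ℕ) := by exact_mod_cast Nat.le_self_pow two_ne_zero D
  refine le_of_eq_of_le ?_ (Real.one_sub_div_pow_le_exp_neg hD')
  congr 2
  push_cast
  field_simp

lemma exists_forall_mul_pow_le_exp (c : ℝ) (j : ℕ) :
    ∃ N : ℕ, ∀ D : ℕ, N ≤ D → c * (D : ℝ) ^ j ≤ Real.exp D := by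
  have hlim := ((Real.tendsto_pow_mul_exp_neg_atTop_nhds_zero j).const_mul c).comp
    tendsto_natCast_atTop_atTop
  rw [mul_zero] at hlim
  obtain ⟨N, hN⟩ := Filter.eventually_atTop.mp (hlim.eventually_le_const one_pos)
  refine ⟨N, fun D hD => ?_⟩
  have h := hN D hD
  rwa [Function.comp_apply, Real.exp_neg, ← mul_assoc, ← div_eq_mul_inv,
    div_le_one (Real.exp_pos _)] at h

/-- Random tuples will have length `D ^ 2`, and twins will be distinguished by a `1 / D` fraction of
the vertices at most. -/
lemma exists_exponent_forall_exists_nat (k : ℕ) : ∃ E : ℕ, 0 < E ∧ ∀ q : ℝ, 4 ≤ q → ∃ D : ℕ,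
    q ^ 5 ≤ D ∧ 64 * ((D : ℝ) ^ 2) ^ k ≤ q ^ E ∧
      16 * ((D : ℝ) ^ 2) ^ k * (1 - 1 / D : ℝ) ^ D ^ 2 ≤ 1 := by
  obtain ⟨N, hN⟩ := exists_forall_mul_pow_le_exp 16 (2 * k)
  let K := max 5 N
  refine ⟨3 + (K + 1) * (2 * k), by positivity, fun q hq => ⟨⌈q ^ K⌉₊, ?_⟩⟩
  have hq1 : 1 ≤ q := by linarith
  have hqK : 1 ≤ q ^ K := one_le_pow₀ hq1
  have hlower : q ^ K ≤ ⌈q ^ K⌉₊ := Nat.le_ceil _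
  have hupper : (⌈q ^ K⌉₊ : ℝ) ≤ q ^ (K + 1) := by
    have h := Nat.ceil_lt_add_one (zero_le_one.trans hqK)
    rw [pow_succ]
    nlinarith
  have hlarge : N ≤ ⌈q ^ K⌉₊ := by
    rw [← Nat.cast_le (α := ℝ)]
    calc (N : ℝ) ≤ (2 ^ K : ℕ) := by
          exact_mod_cast (le_max_right 5 N).trans Nat.lt_two_pow_self.le
      _ ≤ q ^ K := by
          push_cast
          gcongr
          linarith
      _ ≤ ⌈q ^ K⌉₊ := hlower
  set D := ⌈q ^ K⌉₊
  have hD : 0 < D := Nat.cast_pos.mp (zero_lt_one.trans_le (hqK.trans hlower))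
  rw [← pow_mul]
  refine ⟨(pow_le_pow_right₀ hq1 (le_max_left 5 N)).trans hlower, ?_, ?_⟩
  · calc 64 * (D : ℝ) ^ (2 * k) ≤ q ^ 3 * (q ^ (K + 1)) ^ (2 * k) := by
          gcongr
          calc (64 : ℝ) = 4 ^ 3 := by norm_num
            _ ≤ q ^ 3 := by gcongr
      _ = q ^ (3 + (K + 1) * (2 * k)) := by rw [← pow_mul, ← pow_add]
  · calc 16 * (D : ℝ) ^ (2 * k) * (1 - 1 / D : ℝ) ^ D ^ 2 ≤ Real.exp D * Real.exp (-D) := by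
          gcongr
          · have h1 : (1 : ℝ) ≤ D := by exact_mod_cast hD
            exact pow_nonneg (sub_nonneg.mpr ((div_le_one (by positivity)).mpr h1)) _
          · exact hN D hlarge
          · exact one_sub_one_div_pow_sq_le_exp_neg hD
      _ = 1 := by rw [← Real.exp_add, add_neg_cancel, Real.exp_zero]

lemma four_le_two_pow_div {m : ℕ} {α : ℝ} (hm : 1 ≤ m) (hα0 : 0 < α) (hα : α < 1 / 2) :
    4 ≤ 2 ^ m / α := by
  have h2m : (2 : ℝ) ≤ 2 ^ m := le_self_pow₀ one_le_two (by omega)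
  rw [le_div_iff₀ hα0]
  linarith

lemma mul_four_pow_le_mul {m : ℕ} {α D : ℝ} (hm : 1 ≤ m) (hα0 : 0 < α) (hα : α < 1 / 2)
    (hD : (2 ^ m / α) ^ 5 ≤ D) : 64 * 4 ^ m ≤ α * D := by
  have h4 : 4 ≤ 2 ^ m / α := four_le_two_pow_div hm hα0 hα
  calc (64 : ℝ) * 4 ^ m = 4 ^ 3 * (2 ^ m * 2 ^ m) := by
        rw [← mul_pow]
        norm_num
    _ ≤ (2 ^ m / α) ^ 3 * (2 ^ m * (2 ^ m / α)) := by
        gcongr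
        exact le_div_self (by positivity) hα0 (by linarith)
    _ = α * (2 ^ m / α) ^ 5 := by field_simp
    _ ≤ α * D := by gcongr

lemma two_mul_pow_div_le_of_four_mul_le {k : ℕ} {n Q M : ℝ} (hn : 0 ≤ n) (hQ : 0 < Q)
    (hM : (4 * Q) ^ (k + 1) ≤ M) :
    2 * n ^ (2 * k) / M ≤ n ^ k / (2 * Q) * (n / (4 * Q)) ^ k :=
  calc 2 * n ^ (2 * k) / M ≤ 2 * n ^ (2 * k) / (4 * Q) ^ (k + 1) := by gcongr
    _ = n ^ k / (2 * Q) * (n / (4 * Q)) ^ k := by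
        rw [div_pow, two_mul k, pow_add, pow_succ]
        field_simp
        ring

theorem exists_exponent_forall_card_patternCopies_or_exists_isNClique (k : ℕ) (hk : 1 ≤ k) :
    ∃ C : ℕ, 0 < C ∧ ∀ {V : Type*} [Fintype V] (G : SimpleGraph V) (B : Fin k → Fin k → Prop)
      {m : ℕ} {α : ℝ}, 1 ≤ m → 0 < α → α < 1 / 2 → (2 ^ m / α) ^ C ≤ Fintype.card V →
        2 * (Fintype.card V : ℝ) ^ (2 * k) / (2 ^ m / α) ^ C ≤ #(patternCopies G.Adj B) ∨
        ∃ 𝒵 : Finset (Finset V), (𝒵 : Set (Finset V)).PairwiseDisjoint id ∧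
          (∀ W ∈ 𝒵, (Fintype.card V : ℝ) / (2 ^ m / α) ^ C ≤ #W) ∧
          ((densityGraph G (Set.Ici (1 - α))).IsNClique m 𝒵 ∨
            (densityGraph G (Set.Iic α)).IsNClique m 𝒵) := by
  obtain ⟨E, hE0, hE⟩ := exists_exponent_forall_exists_nat k
  refine ⟨E * (k + 1), by positivity, fun {V} _ G B {m α} hm hα0 hα hV => ?_⟩
  have hq4 : 4 ≤ 2 ^ m / α := four_le_two_pow_div hm hα0 hα
  obtain ⟨D, hDlower, hDupper, hDexp⟩ := hE _ hq4
  have hmD : 64 * 4 ^ m ≤ α * D := mul_four_pow_le_mul hm hα0 hα hDlower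
  have hm1 : (1 : ℝ) ≤ 4 ^ m := one_le_pow₀ (by norm_num)
  have hD : (2 : ℝ) ≤ D := by nlinarith
  obtain ⟨Q, hQ⟩ : ∃ Q : ℕ, (D ^ 2) ^ k = Q := ⟨_, rfl⟩
  have hQcast : ((D : ℝ) ^ 2) ^ k = Q := by exact_mod_cast hQ
  rw [hQcast] at hDupper hDexp
  have hDQ : (D : ℝ) ≤ Q := by
    rw [← hQ, ← pow_mul]
    exact_mod_cast Nat.le_self_pow (by omega) D
  have hQ0 : (0 : ℝ) < Q := by linarith
  have hQC : (64 * (Q : ℝ)) ^ (k + 1) ≤ (2 ^ m / α) ^ (E * (k + 1)) := by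
    rw [pow_mul]
    gcongr
  have hQC' : 64 * (Q : ℝ) ≤ (2 ^ m / α) ^ (E * (k + 1)) :=
    (le_self_pow₀ (by linarith) k.succ_ne_zero).trans hQC
  refine (pow_le_card_patternCopies_or_exists_isNClique G B (s := D ^ 2) (Q := Q) (δ := 1 / D)
    ?_ ?_ ?_ ?_ hDexp hα0 hα.le (m := m) ?_ ?_ ?_).imp (fun hcopies => ?_) ?_
  · have hD' : 2 ≤ D := by exact_mod_cast hD
    nlinarith
  · rwa [Fintype.card_fin]
  · positivity
  · exact (div_le_one (by linarith)).mpr (by linarith)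
  · rwa [mul_one_div, div_le_iff₀ (by linarith)]
  · nlinarith
  · exact_mod_cast (by linarith : 32 * (Q : ℝ) ≤ Fintype.card V)
  · rw [Fintype.card_fin] at hcopies
    refine (two_mul_pow_div_le_of_four_mul_le (Nat.cast_nonneg _) hQ0 (hQC.trans' ?_)).trans hcopies
    gcongr
    norm_num
  · rintro ⟨𝒵, hdisj, hlarge, hclique⟩
    exact ⟨𝒵, hdisj, fun W hW => (hlarge W hW).trans' (by gcongr), hclique⟩

end Parameters

section Injective

lemma mul_pow_le_mul_descFactorial_add (n k : ℕ) :
    n * n ^ k ≤ n * n.descFactorial k + k ^ 2 * n ^ k := by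
  induction k with
  | zero => simp
  | succ k ih =>
    have hstep : n * n.descFactorial k ≤ n.descFactorial (k + 1) + k * n ^ k := by
      rw [Nat.descFactorial_succ]
      calc n * n.descFactorial k ≤ (n - k + k) * n.descFactorial k := by gcongr; omega
        _ ≤ _ := by
          rw [add_mul]
          gcongr
          exact Nat.descFactorial_le_pow n k
    calc n * n ^ (k + 1) = n * (n * n ^ k) := by ring
      _ ≤ n * (n * n.descFactorial k + k ^ 2 * n ^ k) := by gcongr
      _ ≤ n * (n.descFactorial (k + 1) + k * n ^ k + k ^ 2 * n ^ k) := by gcongr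
      _ ≤ n * n.descFactorial (k + 1) + (k + 1) ^ 2 * n ^ (k + 1) := by
          rw [pow_succ n k]
          nlinarith [Nat.zero_le (k * (n ^ k * n)), Nat.zero_le (n ^ k * n)]

lemma card_not_injective_mul_card_le {ι V : Type*} [Fintype ι] [DecidableEq ι] [Fintype V]
    [DecidableEq V] :
    #{h : ι → V | ¬Function.Injective h} * Fintype.card V ≤
      Fintype.card ι ^ 2 * Fintype.card V ^ Fintype.card ι := by
  have hinj : #{h : ι → V | Function.Injective h} =
      (Fintype.card V).descFactorial (Fintype.card ι) := by
    rw [← Fintype.card_embedding_eq, ← Fintype.card_subtype]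
    exact Fintype.card_congr (Equiv.subtypeInjectiveEquivEmbedding ι V)
  have htotal := card_filter_add_card_filter_not (s := (univ : Finset (ι → V))) Function.Injective
  rw [hinj, Finset.card_univ, Fintype.card_fun] at htotal
  have h := mul_pow_le_mul_descFactorial_add (Fintype.card V) (Fintype.card ι)
  rw [← htotal] at h ⊢
  nlinarith

lemma card_patternCopies_le_bipCopyCount_add {k n : ℕ} (B : Fin k → Fin k → Prop)
    (G : SimpleGraph (Fin n)) :
    #(patternCopies G.Adj B) ≤
      bipCopyCount B G + #{h : Fin k ⊕ Fin k → Fin n | ¬Function.Injective h} := by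
  let sides (h : Fin k ⊕ Fin k → Fin n) : (Fin k → Fin n) × (Fin k → Fin n) :=
    (h ∘ Sum.inl, h ∘ Sum.inr)
  let copies : Finset ((Fin k ⊕ Fin k) ↪ Fin n) :=
    {φ | ∀ s t : Fin k, B s t ↔ G.Adj (φ (Sum.inl s)) (φ (Sum.inr t))}
  have hcopies : bipCopyCount B G = #copies := by
    rw [bipCopyCount, Set.ncard_eq_toFinset_card', Set.toFinset_ofPred]
  have hcover : patternCopies G.Adj B ⊆ copies.image (fun φ : (Fin k ⊕ Fin k) ↪ Fin n => sides φ) ∪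
      ({h | ¬Function.Injective h} : Finset (Fin k ⊕ Fin k → Fin n)).image sides := by
    intro p hp
    by_cases hinj : Function.Injective (Sum.elim p.1 p.2)
    · refine mem_union_left _ (mem_image.mpr ⟨⟨Sum.elim p.1 p.2, hinj⟩, ?_, rfl⟩)
      simpa [copies] using mem_patternCopies.mp hp
    · exact mem_union_right _ (mem_image.mpr ⟨Sum.elim p.1 p.2, (mem_filter_univ _).mpr hinj, rfl⟩)
  calc #(patternCopies G.Adj B) ≤ _ := (card_le_card hcover).trans (card_union_le _ _)
    _ ≤ _ := by
        rw [hcopies]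
        gcongr <;> exact card_image_le

lemma div_le_bipCopyCount {k n : ℕ} (hn : 0 < n) {M : ℝ} (hM : 0 < M) (hnM : (2 * k) ^ 2 * M ≤ n)
    {B : Fin k → Fin k → Prop} {G : SimpleGraph (Fin n)}
    (hcopies : 2 * (n : ℝ) ^ (2 * k) / M ≤ #(patternCopies G.Adj B)) :
    (n : ℝ) ^ (2 * k) / M ≤ bipCopyCount B G := by
  have hn0 : (0 : ℝ) < n := by exact_mod_cast hn
  have hsplit : (#(patternCopies G.Adj B) : ℝ) ≤
      bipCopyCount B G + #{h : Fin k ⊕ Fin k → Fin n | ¬Function.Injective h} := by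
    exact_mod_cast card_patternCopies_le_bipCopyCount_add B G
  have hdegenerate : (#{h : Fin k ⊕ Fin k → Fin n | ¬Function.Injective h} : ℝ) * n ≤
      (2 * k) ^ 2 * n ^ (2 * k) := by
    have h := card_not_injective_mul_card_le (ι := Fin k ⊕ Fin k) (V := Fin n)
    rw [Fintype.card_sum, Fintype.card_fin, Fintype.card_fin, ← two_mul] at h
    exact_mod_cast h
  have hfew : (#{h : Fin k ⊕ Fin k → Fin n | ¬Function.Injective h} : ℝ) ≤ n ^ (2 * k) / M := by
    rw [le_div_iff₀ hM]
    refine le_of_mul_le_mul_right ?_ hn0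
    nlinarith [mul_le_mul_of_nonneg_right hdegenerate hM.le,
      mul_le_mul_of_nonneg_right hnM (pow_pos hn0 (2 * k)).le]
  have htwo : 2 * (n : ℝ) ^ (2 * k) / M = n ^ (2 * k) / M + n ^ (2 * k) / M := by ring
  linarith

end Injective

lemma exists_fin_family_of_isNClique {V : Type*} {G : SimpleGraph V} {I : Set ℝ} {m : ℕ}
    {𝒵 : Finset (Finset V)} (h𝒵 : (densityGraph G I).IsNClique m 𝒵) :
    ∃ W : Fin m → Finset V, (∀ i, W i ∈ 𝒵) ∧
      ∀ i j, i ≠ j → W i ≠ W j ∧ (G.edgeDensity (W i) (W j) : ℝ) ∈ I := by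
  let e := (𝒵.equivFinOfCardEq h𝒵.card_eq).symm
  exact ⟨fun i => e i, fun i => (e i).2, fun i j hij => h𝒵.isClique (e i).2 (e j).2 fun h =>
    hij (e.injective (Subtype.ext h))⟩

lemma rpow_mul_two_rpow_neg_mul_eq {α : ℝ} (hα : 0 < α) (C m : ℕ) :
    α ^ (C : ℝ) * (2 : ℝ) ^ (-(C * m : ℝ)) = 1 / (2 ^ m / α) ^ C := by
  have hexp : (2 : ℝ) ^ (-(C * m : ℝ)) = 1 / (2 ^ m) ^ C := by
    rw [Real.rpow_neg two_pos.le, one_div, ← pow_mul, mul_comm]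
    exact_mod_cast congrArg _ (Real.rpow_natCast 2 (m * C))
  rw [hexp, Real.rpow_natCast, div_pow]
  field_simp

/-- Lemma 2.6 of the paper. -/
theorem almost_homogeneous_sets (k : ℕ) (hk : 1 ≤ k) :
    ∃ C : ℝ, 0 < C ∧
      ∀ B : Fin k → Fin k → Prop, ∀ m : ℕ, 1 ≤ m → ∀ α : ℝ, 0 < α → α < 1 / 2 →
        ∃ n₀ : ℕ, ∀ n : ℕ, n₀ ≤ n → ∀ G : SimpleGraph (Fin n),
          α ^ C * (2 : ℝ) ^ (-(C * (m : ℝ))) * (n : ℝ) ^ (2 * k) ≤ (bipCopyCount B G : ℝ) ∨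
          ∃ W : Fin m → Finset (Fin n),
            (∀ i j : Fin m, i ≠ j → Disjoint (W i) (W j)) ∧
            ((∀ i j : Fin m, i < j → 1 - α ≤ dens G (W i) (W j)) ∨
              (∀ i j : Fin m, i < j → dens G (W i) (W j) ≤ α)) ∧
            (∀ i : Fin m, α ^ C * (2 : ℝ) ^ (-(C * (m : ℝ))) * (n : ℝ) ≤ ((W i).card : ℝ)) := by
  obtain ⟨C, hC, hmain⟩ := exists_exponent_forall_card_patternCopies_or_exists_isNClique k hk
  refine ⟨C, by exact_mod_cast hC, fun B m hm α hα0 hα => ?_⟩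
  let M : ℝ := (2 ^ m / α) ^ C
  have hM : 0 < M := by positivity
  refine ⟨⌈(2 * k) ^ 2 * M⌉₊, fun n hn G => ?_⟩
  rw [rpow_mul_two_rpow_neg_mul_eq hα0, one_div_mul_eq_div, one_div_mul_eq_div]
  have hnM : (2 * k) ^ 2 * M ≤ n := Nat.ceil_le.mp hn
  have hMn : M ≤ n := by
    refine le_trans (le_mul_of_one_le_left hM.le (one_le_pow₀ ?_)) hnM
    exact_mod_cast (by omega : 1 ≤ 2 * k)
  rcases hmain G B hm hα0 hα (by simpa using hMn) with hcopies | ⟨𝒵, hdisj, hlarge, h𝒵⟩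
  · rw [Fintype.card_fin] at hcopies
    exact .inl (div_le_bipCopyCount (Nat.cast_pos.mp (hM.trans_le hMn)) hM hnM hcopies)
  · rw [Fintype.card_fin] at hlarge
    right
    rcases h𝒵 with hclique | hclique <;>
      obtain ⟨W, hW, hdens⟩ := exists_fin_family_of_isNClique hclique
    · exact ⟨W, fun i j hij => hdisj (hW i) (hW j) (hdens i j hij).1,
        .inl fun i j hij => (hdens i j hij.ne).2, fun i => hlarge _ (hW i)⟩
    · exact ⟨W, fun i j hij => hdisj (hW i) (hW j) (hdens i j hij).1,
        .inr fun i j hij => (hdens i j hij.ne).2, fun i => hlarge _ (hW i)⟩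

end
end

section
/- Let F be a graph with vertex set {1,…,r} and let λ ∈ (0,1). Let W₁,…,W_r be pairwise disjoint vertex sets in an n-vertex graph G with n ≥ 9r/λ, each of size at least λ·n, such that for every 1 ≤ i < j ≤ r: if (i,j) ∈ E(F) then d(W_i,W_j) ≥ 1 − 1/(2r²), and if (i,j) ∉ E(F) then d(W_i,W_j) ≤ 1/(2r²). Then at least a 2/3-fraction of the ⌈9r/λ⌉-element vertex subsets of G contain an induced copy of F. -/
open scoped Classical
open Finset

noncomputable section

/-!
A set `Q` of `m` vertices misses `W i` with probability at most `(1 - λ) ^ m ≤ exp (-λ m)`, so by a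
union bound all the `W i` are hit except with probability `r exp (-9 r) ≤ 1 / 12`.

If `Q` hits all the `W i`, choose a vertex of `Q ∩ W i` for every `i`, uniformly and independently.
The expected number of pairs on which this choice disagrees with `F` is the sum of the densities of
the mismatched pairs in `(Q ∩ W i) × (Q ∩ W j)`; if it is less than one, some choice induces a copy
of `F`. By symmetry, the average over all `Q` of the density of a relation between `Q ∩ W i` and
`Q ∩ W j` is at most its density between `W i` and `W j`, hence at most `1 / (2 r²)` for mismatches.
Since there are at most `r² / 2` pairs, Markov's inequality bounds the probability of failure by
`1 / 4`, and `1 / 12 + 1 / 4 = 1 / 3`.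
-/

section Missing

lemma cast_choose_le_pow_mul_choose {K : Type*} [CommRing K] [LinearOrder K]
    [IsStrictOrderedRing K] {q : K} (hq0 : 0 ≤ q) (hq1 : q ≤ 1) {a n : ℕ} (han : (a : K) ≤ q * n)
    (m : ℕ) : (a.choose m : K) ≤ q ^ m * n.choose m := by
  induction m with
  | zero => simp
  | succ k ih =>
    have hfactor : ((a - k : ℕ) : K) ≤ q * (n - k : ℕ) := by
      obtain hak | hka := le_total a k
      · rw [Nat.sub_eq_zero_of_le hak, Nat.cast_zero]
        positivity
      · have : (a : K) ≤ n := han.trans (mul_le_of_le_one_left (Nat.cast_nonneg n) hq1)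
        rw [Nat.cast_sub hka, Nat.cast_sub (hka.trans (Nat.cast_le.1 this))]
        linarith [mul_le_of_le_one_left (Nat.cast_nonneg (α := K) k) hq1]
    have hsucc (b : ℕ) : (b.choose (k + 1) : K) * (k + 1) = b.choose k * (b - k : ℕ) :=
      mod_cast Nat.choose_succ_right_eq b k
    refine le_of_mul_le_mul_right ?_ (Nat.cast_add_one_pos (α := K) k)
    calc (a.choose (k + 1) : K) * (k + 1)
        = a.choose k * (a - k : ℕ) := hsucc a
      _ ≤ (q ^ k * n.choose k) * (q * (n - k : ℕ)) := by gcongr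
      _ = q ^ (k + 1) * (n.choose k * (n - k : ℕ)) := by ring
      _ = q ^ (k + 1) * n.choose (k + 1) * (k + 1) := by rw [← hsucc, mul_assoc]

variable {V ι : Type*} [Fintype V] {lam : ℝ}

lemma card_filter_disjoint_powersetCard_le (hl0 : 0 ≤ lam) {W : Finset V}
    (hW : lam * Fintype.card V ≤ #W) (m : ℕ) :
    (#{Q ∈ powersetCard m (univ : Finset V) | Disjoint Q W} : ℝ) ≤
      Real.exp (-(lam * m)) * #(powersetCard m (univ : Finset V)) := by
  have hcompl : {Q ∈ powersetCard m (univ : Finset V) | Disjoint Q W} = powersetCard m Wᶜ := by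
    ext Q
    simp [mem_powersetCard, ← le_compl_iff_disjoint_right, and_comm]
  have hcard : (#Wᶜ : ℝ) ≤ Real.exp (-lam) * Fintype.card V := by
    rw [card_compl, Nat.cast_sub (card_le_univ W)]
    nlinarith [Real.one_sub_le_exp_neg lam, Nat.cast_nonneg (α := ℝ) (Fintype.card V)]
  have hexp : Real.exp (-(lam * m)) = Real.exp (-lam) ^ m := by
    rw [← Real.exp_nat_mul, mul_neg, mul_comm]
  rw [hcompl, card_powersetCard, card_powersetCard, card_univ, hexp]
  exact cast_choose_le_pow_mul_choose (Real.exp_nonneg _)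
    (Real.exp_le_one_iff.2 (neg_nonpos.2 hl0)) hcard m

lemma card_filter_exists_disjoint_powersetCard_le [Fintype ι] (hl0 : 0 ≤ lam) {W : ι → Finset V}
    (hW : ∀ i, lam * Fintype.card V ≤ #(W i)) (m : ℕ) :
    (#{Q ∈ powersetCard m (univ : Finset V) | ∃ i, Disjoint Q (W i)} : ℝ) ≤
      Fintype.card ι * Real.exp (-(lam * m)) * #(powersetCard m (univ : Finset V)) := by
  have hunion : {Q ∈ powersetCard m (univ : Finset V) | ∃ i, Disjoint Q (W i)} =
      univ.biUnion fun i ↦ {Q ∈ powersetCard m (univ : Finset V) | Disjoint Q (W i)} := by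
    ext Q
    simp
  calc (#{Q ∈ powersetCard m (univ : Finset V) | ∃ i, Disjoint Q (W i)} : ℝ)
      ≤ ∑ i, (#{Q ∈ powersetCard m (univ : Finset V) | Disjoint Q (W i)} : ℝ) := by
        rw [hunion]
        exact_mod_cast card_biUnion_le
    _ ≤ ∑ _i : ι, Real.exp (-(lam * m)) * #(powersetCard m (univ : Finset V)) :=
        sum_le_sum fun i _ ↦ card_filter_disjoint_powersetCard_le hl0 (hW i) m
    _ = _ := by rw [sum_const, card_univ, nsmul_eq_mul, mul_assoc]

lemma mul_exp_neg_nine_mul_le (x : ℝ) : x * Real.exp (-(9 * x)) ≤ 1 / 12 := by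
  linarith [Real.mul_exp_neg_le_exp_neg_one (9 * x), Real.exp_neg_one_lt_half]

end Missing

section Averaging

variable {V : Type*} [Fintype V] {A B : Finset V} {x x' y y' : V}

/-- The sum, over all `m`-element sets `Q` containing both `x` and `y`, of the probability that
a uniformly random element of `(Q ∩ A) × (Q ∩ B)` equals `(x, y)`, for `x ∈ A` and `y ∈ B`. -/
def pairWeight (m : ℕ) (A B : Finset V) (x y : V) : ℚ :=
  ∑ Q ∈ powersetCard m univ with x ∈ Q ∧ y ∈ Q, 1 / (#(Q ∩ A) * #(Q ∩ B) : ℚ)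

omit [Fintype V] in
lemma card_map_perm_inter {σ : Equiv.Perm V} (hA : ∀ v, σ v ∈ A ↔ v ∈ A) (Q : Finset V) :
    #(Q.map σ.toEmbedding ∩ A) = #(Q ∩ A) := by
  have hmap : A.map σ.toEmbedding = A := by
    ext v
    rw [mem_map_equiv, ← hA, Equiv.apply_symm_apply]
  conv_lhs => rw [← hmap, ← map_inter, card_map]

lemma pairWeight_perm {σ : Equiv.Perm V} (hA : ∀ v, σ v ∈ A ↔ v ∈ A)
    (hB : ∀ v, σ v ∈ B ↔ v ∈ B) (m : ℕ) (x y : V) :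
    pairWeight m A B (σ x) (σ y) = pairWeight m A B x y := by
  refine (sum_equiv σ.finsetCongr (fun Q ↦ ?_) fun Q _ ↦ ?_).symm
  · simp [mem_powersetCard]
  · rw [Equiv.finsetCongr_apply, card_map_perm_inter hA, card_map_perm_inter hB]

lemma pairWeight_eq (hAB : Disjoint A B) (m : ℕ) (hx : x ∈ A) (hx' : x' ∈ A) (hy : y ∈ B)
    (hy' : y' ∈ B) : pairWeight m A B x y = pairWeight m A B x' y' := by
  have hne {a b : V} (ha : a ∈ A) (hb : b ∈ B) : a ≠ b := disjoint_iff_ne.1 hAB a ha b hb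
  set σ := Equiv.swap x x' * Equiv.swap y y' with hσ
  have hσx : σ x = x' := by
    rw [hσ, Equiv.Perm.mul_apply, Equiv.swap_apply_of_ne_of_ne (hne hx hy) (hne hx hy'),
      Equiv.swap_apply_left]
  have hσy : σ y = y' := by
    rw [hσ, Equiv.Perm.mul_apply, Equiv.swap_apply_left,
      Equiv.swap_apply_of_ne_of_ne (hne hx hy').symm (hne hx' hy').symm]
  have hσA (v : V) : σ v ∈ A ↔ v ∈ A := by
    simp only [hσ, Equiv.Perm.mul_apply, Equiv.swap_apply_def]
    grind
  have hσB (v : V) : σ v ∈ B ↔ v ∈ B := by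
    simp only [hσ, Equiv.Perm.mul_apply, Equiv.swap_apply_def]
    grind
  rw [← hσx, ← hσy, pairWeight_perm hσA hσB]

lemma sum_interedges_pairWeight (m : ℕ) (A B : Finset V) (R : V → V → Prop)
    [∀ x, DecidablePred (R x)] :
    ∑ p ∈ Rel.interedges R A B, pairWeight m A B p.1 p.2 =
      ∑ Q ∈ powersetCard m univ, Rel.edgeDensity R (Q ∩ A) (Q ∩ B) := by
  unfold pairWeight
  rw [sum_comm' (t' := powersetCard m univ)
    (s' := fun Q ↦ Rel.interedges R (Q ∩ A) (Q ∩ B))]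
  · simp [Rel.edgeDensity, div_eq_mul_inv]
  · intro p Q
    simp only [Rel.mem_interedges_iff, mem_filter, mem_inter]
    tauto

lemma pairWeight_le (hAB : Disjoint A B) (m : ℕ) (hx : x ∈ A) (hy : y ∈ B) :
    pairWeight m A B x y ≤ #(powersetCard m (univ : Finset V)) / (#A * #B) := by
  have hpos : (0 : ℚ) < #A * #B := mod_cast mul_pos (card_pos.2 ⟨x, hx⟩) (card_pos.2 ⟨y, hy⟩)
  rw [le_div_iff₀ hpos]
  calc pairWeight m A B x y * (#A * #B)
      = ∑ p ∈ A ×ˢ B, pairWeight m A B p.1 p.2 := by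
        rw [sum_congr rfl fun p hp ↦
          pairWeight_eq hAB m (mem_product.1 hp).1 hx (mem_product.1 hp).2 hy,
          sum_const, card_product, nsmul_eq_mul, Nat.cast_mul, mul_comm]
    _ = ∑ Q ∈ powersetCard m univ, Rel.edgeDensity (fun _ _ : V ↦ True) (Q ∩ A) (Q ∩ B) := by
        rw [← sum_interedges_pairWeight, Rel.interedges, filter_true]
    _ ≤ ∑ _Q ∈ powersetCard m (univ : Finset V), (1 : ℚ) :=
        sum_le_sum fun Q _ ↦ Rel.edgeDensity_le_one _ _ _
    _ = #(powersetCard m (univ : Finset V)) := by rw [sum_const, nsmul_one]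

lemma sum_edgeDensity_inter_le (hAB : Disjoint A B) (m : ℕ) (R : V → V → Prop)
    [∀ x, DecidablePred (R x)] :
    ∑ Q ∈ powersetCard m univ, Rel.edgeDensity R (Q ∩ A) (Q ∩ B) ≤
      Rel.edgeDensity R A B * #(powersetCard m (univ : Finset V)) :=
  calc ∑ Q ∈ powersetCard m univ, Rel.edgeDensity R (Q ∩ A) (Q ∩ B)
      = ∑ p ∈ Rel.interedges R A B, pairWeight m A B p.1 p.2 :=
        (sum_interedges_pairWeight m A B R).symm
    _ ≤ ∑ _p ∈ Rel.interedges R A B, (#(powersetCard m (univ : Finset V)) / (#A * #B) : ℚ) :=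
        sum_le_sum fun p hp ↦
          have ⟨hA, hB, _⟩ := Rel.mem_interedges_iff.1 hp
          pairWeight_le hAB m hA hB
    _ = Rel.edgeDensity R A B * #(powersetCard m (univ : Finset V)) := by
        rw [sum_const, nsmul_eq_mul, Rel.edgeDensity]
        ring

end Averaging

section Transversal

variable {ι : Type*} [Fintype ι] {α : ι → Type*}

lemma card_filter_piFinset_eq_and_eq_mul {i j : ι} (hij : i ≠ j) {A : ∀ k, Finset (α k)}
    {x : α i} {y : α j} (hx : x ∈ A i) (hy : y ∈ A j) :
    #{t ∈ Fintype.piFinset A | t i = x ∧ t j = y} * (#(A i) * #(A j)) = ∏ k, #(A k) := by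
  have hyA : y ∈ Function.update A i {x} j := by rwa [Function.update_of_ne hij.symm]
  have hcard : #{t ∈ Fintype.piFinset A | t i = x ∧ t j = y} =
      ∏ k ∈ (univ.erase j).erase i, #(A k) := by
    rw [← filter_filter, ← Fintype.piFinset_update_singleton_eq_filter_piFinset_eq A i hx,
      Fintype.card_filter_piFinset_eq_of_mem _ j hyA,
      ← mul_prod_erase _ _ (mem_erase.2 ⟨hij, mem_univ i⟩), Function.update_self,
      card_singleton, one_mul]
    exact prod_congr rfl fun k hk ↦ by rw [Function.update_of_ne (ne_of_mem_erase hk)]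
  rw [hcard, ← mul_prod_erase univ _ (mem_univ j),
    ← mul_prod_erase (univ.erase j) _ (mem_erase.2 ⟨hij, mem_univ i⟩)]
  ring

lemma card_filter_piFinset_rel {i j : ι} (hij : i ≠ j) (A : ∀ k, Finset (α k))
    (R : α i → α j → Prop) [∀ x, DecidablePred (R x)] :
    (#{t ∈ Fintype.piFinset A | R (t i) (t j)} : ℚ) =
      Rel.edgeDensity R (A i) (A j) * #(Fintype.piFinset A) := by
  have hfiber {p : α i × α j} (hp : p ∈ Rel.interedges R (A i) (A j)) :
      (#{t ∈ {t ∈ Fintype.piFinset A | R (t i) (t j)} | (t i, t j) = p} : ℚ) =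
        #(Fintype.piFinset A) / (#(A i) * #(A j)) := by
    obtain ⟨hi, hj, hR⟩ := Rel.mem_interedges_iff.1 hp
    have hpos : (0 : ℚ) < #(A i) * #(A j) :=
      mod_cast mul_pos (card_pos.2 ⟨_, hi⟩) (card_pos.2 ⟨_, hj⟩)
    have hfilter : {t ∈ {t ∈ Fintype.piFinset A | R (t i) (t j)} | (t i, t j) = p} =
        {t ∈ Fintype.piFinset A | t i = p.1 ∧ t j = p.2} := by
      rw [filter_filter]
      refine filter_congr fun t _ ↦ ?_
      rw [Prod.ext_iff]
      refine and_iff_right_of_imp fun ⟨hti, htj⟩ ↦ ?_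
      dsimp only at hti htj
      rwa [hti, htj]
    rw [hfilter, eq_div_iff hpos.ne', Fintype.card_piFinset]
    exact_mod_cast card_filter_piFinset_eq_and_eq_mul hij hi hj
  rw [card_eq_sum_card_fiberwise (f := fun t ↦ (t i, t j)) (t := Rel.interedges R (A i) (A j)),
    Nat.cast_sum, sum_congr rfl fun p hp ↦ hfiber hp, sum_const, nsmul_eq_mul, Rel.edgeDensity]
  · ring
  · intro t ht
    have ⟨htA, hR⟩ := mem_filter.1 ht
    rw [Fintype.mem_piFinset] at htA
    exact Rel.mem_interedges_iff.2 ⟨htA i, htA j, hR⟩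

lemma exists_mem_piFinset_card_filter_le {A : ∀ k, Finset (α k)} (hA : ∀ k, (A k).Nonempty)
    {P : Finset (ι × ι)} (hP : ∀ p ∈ P, p.1 ≠ p.2) (R : ∀ i j, α i → α j → Prop) :
    ∃ t ∈ Fintype.piFinset A, (#{p ∈ P | R p.1 p.2 (t p.1) (t p.2)} : ℚ) ≤
      ∑ p ∈ P, Rel.edgeDensity (R p.1 p.2) (A p.1) (A p.2) := by
  refine exists_le_of_sum_le (Fintype.piFinset_nonempty.2 hA) (le_of_eq ?_)
  have hcount := sum_card_bipartiteAbove_eq_sum_card_bipartiteBelow (s := Fintype.piFinset A)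
    (t := P) fun t p ↦ R p.1 p.2 (t p.1) (t p.2)
  simp only [bipartiteAbove, bipartiteBelow] at hcount
  rw [sum_const, nsmul_eq_mul, mul_comm, sum_mul, ← Nat.cast_sum, hcount, Nat.cast_sum]
  exact sum_congr rfl fun p hp ↦ card_filter_piFinset_rel (hP p hp) A (R p.1 p.2)

end Transversal

lemma sum_offDiag_univ_le {ι K : Type*} [Fintype ι] [Field K] [LinearOrder K]
    [IsStrictOrderedRing K] {f : ι × ι → K} {c : K} (hc : 0 ≤ c)
    (hf : ∀ i j, i ≠ j → f (i, j) ≤ c / (Fintype.card ι : K) ^ 2) :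
    ∑ p ∈ (univ : Finset ι).offDiag, f p ≤ c := by
  have hcard : (#(univ : Finset ι).offDiag : K) ≤ (Fintype.card ι : K) ^ 2 := by
    rw [sq, offDiag_card, card_univ]
    exact_mod_cast Nat.sub_le _ _
  calc ∑ p ∈ (univ : Finset ι).offDiag, f p
      ≤ #(univ : Finset ι).offDiag • (c / (Fintype.card ι : K) ^ 2) :=
        sum_le_card_nsmul _ _ _ fun p hp ↦ hf p.1 p.2 (mem_offDiag.1 hp).2.2
    _ ≤ (Fintype.card ι : K) ^ 2 * (c / (Fintype.card ι : K) ^ 2) := by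
        rw [nsmul_eq_mul]
        gcongr
    _ = c * ((Fintype.card ι : K) ^ 2 / (Fintype.card ι : K) ^ 2) := by ring
    _ ≤ c := mul_le_of_le_one_right hc (div_self_le_one _)

section Embedding

variable {ι V : Type*} {F : SimpleGraph ι} {G : SimpleGraph V}

/-- The pair `(x, y)` of vertices of `G` cannot represent the pair `(i, j)` of vertices of `F` in
an induced copy of `F`, because exactly one of the two pairs is an edge. -/
def Mismatch (F : SimpleGraph ι) (G : SimpleGraph V) (i j : ι) (x y : V) : Prop :=
  ¬(F.Adj i j ↔ G.Adj x y)

lemma Mismatch.symm {i j : ι} {x y : V} (h : Mismatch F G i j x y) : Mismatch F G j i y x := by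
  rwa [Mismatch, F.adj_comm, G.adj_comm]

lemma edgeDensity_not_le {α β : Type*} {R : α → β → Prop} (A : Finset α) (B : Finset β) :
    Rel.edgeDensity (fun x y ↦ ¬R x y) A B ≤ 1 - Rel.edgeDensity R A B := by
  obtain rfl | hA := A.eq_empty_or_nonempty
  · simp
  obtain rfl | hB := B.eq_empty_or_nonempty
  · simp
  exact (eq_sub_of_add_eq' (Rel.edgeDensity_add_edgeDensity_compl R hA hB)).le

lemma edgeDensity_mismatch_le {K : Type*} [Field K] [LinearOrder K] [IsStrictOrderedRing K]
    {i j : ι} {A B : Finset V} {δ : K}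
    (hadj : F.Adj i j → 1 - δ ≤ G.edgeDensity A B)
    (hnadj : ¬F.Adj i j → G.edgeDensity A B ≤ δ) :
    (Rel.edgeDensity (Mismatch F G i j) A B : K) ≤ δ := by
  by_cases hF : F.Adj i j
  · have hmis : Mismatch F G i j = fun x y ↦ ¬G.Adj x y := by
      ext x y
      simp [Mismatch, hF]
    have hcompl : (Rel.edgeDensity (Mismatch F G i j) A B : K) ≤ 1 - G.edgeDensity A B := by
      simp only [hmis, SimpleGraph.edgeDensity]
      exact_mod_cast edgeDensity_not_le A B
    linarith [hadj hF]
  · have hmis : Mismatch F G i j = G.Adj := by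
      ext x y
      simp [Mismatch, hF]
    simpa only [hmis, SimpleGraph.edgeDensity] using hnadj hF

lemma edgeDensity_bounds_of_forall_lt {K : Type*} [Field K] [LinearOrder K] [LinearOrder ι]
    {W : ι → Finset V} {a b : K}
    (h : ∀ i j, i < j → (F.Adj i j → a ≤ G.edgeDensity (W i) (W j)) ∧
      (¬F.Adj i j → G.edgeDensity (W i) (W j) ≤ b)) (i j : ι) (hij : i ≠ j) :
    (F.Adj i j → a ≤ G.edgeDensity (W i) (W j)) ∧
      (¬F.Adj i j → G.edgeDensity (W i) (W j) ≤ b) := by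
  obtain hlt | hgt := hij.lt_or_gt
  · exact h i j hlt
  · rw [F.adj_comm, G.edgeDensity_comm]
    exact h j i hgt

variable [Fintype ι]

lemma exists_embedding_of_sum_edgeDensity_lt_two {A : ι → Finset V}
    (hdisj : ∀ i j, i ≠ j → Disjoint (A i) (A j)) (hA : ∀ i, (A i).Nonempty)
    (hsum : ∑ p ∈ (univ : Finset ι).offDiag,
      Rel.edgeDensity (Mismatch F G p.1 p.2) (A p.1) (A p.2) < 2) :
    ∃ f : F ↪g G, ∀ i, f i ∈ A i := by
  obtain ⟨t, ht, hle⟩ := exists_mem_piFinset_card_filter_le hA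
    (fun p hp ↦ (mem_offDiag.1 hp).2.2) (Mismatch F G)
  rw [Fintype.mem_piFinset] at ht
  have hcard : #{p ∈ (univ : Finset ι).offDiag | Mismatch F G p.1 p.2 (t p.1) (t p.2)} < 2 :=
    mod_cast hle.trans_lt hsum
  -- Mismatches come in pairs `(i, j)`, `(j, i)`, so fewer than two means none.
  have hmatch {i j : ι} (hij : i ≠ j) : ¬Mismatch F G i j (t i) (t j) := by
    intro hmis
    refine hcard.not_ge (one_lt_card.2 ⟨(i, j), ?_, (j, i), ?_, ?_⟩)
    · simpa [hij] using hmis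
    · simpa [hij.symm] using hmis.symm
    · simp [hij]
  have hinj : Function.Injective t := fun i j hij ↦ by
    by_contra hne
    exact disjoint_left.1 (hdisj i j hne) (ht i) (hij ▸ ht j)
  refine ⟨⟨⟨t, hinj⟩, fun {i j} ↦ ?_⟩, ht⟩
  obtain rfl | hij := eq_or_ne i j
  · simp
  · exact (not_not.1 (hmatch hij)).symm

lemma two_mul_card_filter_no_embedding_le [Fintype V] {W : ι → Finset V}
    (hdisj : ∀ i j, i ≠ j → Disjoint (W i) (W j)) (m : ℕ) :
    2 * (#{Q ∈ powersetCard m univ |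
        (∀ i, ¬Disjoint Q (W i)) ∧ ¬∃ f : F ↪g G, ∀ i, f i ∈ Q} : ℚ) ≤
      (∑ p ∈ (univ : Finset ι).offDiag,
        Rel.edgeDensity (Mismatch F G p.1 p.2) (W p.1) (W p.2)) *
      #(powersetCard m (univ : Finset V)) := by
  set S : Finset V → ℚ := fun Q ↦ ∑ p ∈ (univ : Finset ι).offDiag,
    Rel.edgeDensity (Mismatch F G p.1 p.2) (Q ∩ W p.1) (Q ∩ W p.2)
  have hS0 (Q : Finset V) : 0 ≤ S Q := sum_nonneg fun p _ ↦ Rel.edgeDensity_nonneg _ _ _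
  have htwo (Q : Finset V) (hhit : ∀ i, ¬Disjoint Q (W i))
      (hno : ¬∃ f : F ↪g G, ∀ i, f i ∈ Q) : 2 ≤ S Q := by
    by_contra! hlt
    obtain ⟨f, hf⟩ := exists_embedding_of_sum_edgeDensity_lt_two
      (fun i j hij ↦ (hdisj i j hij).mono inter_subset_right inter_subset_right)
      (fun i ↦ not_disjoint_iff_nonempty_inter.1 (hhit i)) hlt
    exact hno ⟨f, fun i ↦ mem_of_mem_inter_left (hf i)⟩
  set bad := {Q ∈ powersetCard m (univ : Finset V) |
    (∀ i, ¬Disjoint Q (W i)) ∧ ¬∃ f : F ↪g G, ∀ i, f i ∈ Q}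
  calc 2 * (#bad : ℚ) = ∑ _Q ∈ bad, 2 := by rw [sum_const, nsmul_eq_mul, mul_comm]
    _ ≤ ∑ Q ∈ bad, S Q := sum_le_sum fun Q hQ ↦
        have ⟨_, hhit, hno⟩ := mem_filter.1 hQ
        htwo Q hhit hno
    _ ≤ ∑ Q ∈ powersetCard m univ, S Q :=
        sum_le_sum_of_subset_of_nonneg (filter_subset _ _) fun Q _ _ ↦ hS0 Q
    _ = ∑ p ∈ (univ : Finset ι).offDiag, ∑ Q ∈ powersetCard m univ,
          Rel.edgeDensity (Mismatch F G p.1 p.2) (Q ∩ W p.1) (Q ∩ W p.2) := sum_comm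
    _ ≤ ∑ p ∈ (univ : Finset ι).offDiag,
          Rel.edgeDensity (Mismatch F G p.1 p.2) (W p.1) (W p.2) *
            #(powersetCard m (univ : Finset V)) := sum_le_sum fun p hp ↦
        sum_edgeDensity_inter_le (hdisj _ _ (mem_offDiag.1 hp).2.2) m _
    _ = _ := (sum_mul _ _ _).symm

end Embedding

theorem counting_lemma_general {ι V : Type*} [Fintype ι] [Fintype V] (F : SimpleGraph ι)
    (G : SimpleGraph V) {lam : ℝ} (hl0 : 0 < lam) {m : ℕ} (hm : 9 * Fintype.card ι / lam ≤ m)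
    {W : ι → Finset V} (hdisj : ∀ i j, i ≠ j → Disjoint (W i) (W j))
    (hsize : ∀ i, lam * Fintype.card V ≤ #(W i))
    (hdens : ∀ i j, i ≠ j →
      (F.Adj i j → 1 - 1 / (2 * (Fintype.card ι : ℝ) ^ 2) ≤ G.edgeDensity (W i) (W j)) ∧
      (¬F.Adj i j → G.edgeDensity (W i) (W j) ≤ 1 / (2 * (Fintype.card ι : ℝ) ^ 2))) :
    (2 / 3 : ℝ) * #(powersetCard m (univ : Finset V)) ≤
      #{Q ∈ powersetCard m univ | ∃ f : F ↪g G, ∀ i, f i ∈ Q} := by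
  set U := powersetCard m (univ : Finset V)
  have hmiss : (#{Q ∈ U | ∃ i, Disjoint Q (W i)} : ℝ) ≤ 1 / 12 * #U := by
    rw [div_le_iff₀ hl0, mul_comm (m : ℝ)] at hm
    refine (card_filter_exists_disjoint_powersetCard_le hl0.le hsize m).trans ?_
    gcongr
    exact le_trans (by gcongr) (mul_exp_neg_nine_mul_le (Fintype.card ι))
  have hmismatch : ∑ p ∈ (univ : Finset ι).offDiag,
      (Rel.edgeDensity (Mismatch F G p.1 p.2) (W p.1) (W p.2) : ℝ) ≤ 1 / 2 :=
    sum_offDiag_univ_le one_half_pos.le fun i j hij ↦ by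
      rw [div_div]
      exact edgeDensity_mismatch_le (hdens i j hij).1 (hdens i j hij).2
  have hhit : 2 * (#{Q ∈ U | (∀ i, ¬Disjoint Q (W i)) ∧ ¬∃ f : F ↪g G, ∀ i, f i ∈ Q} : ℝ) ≤
      1 / 2 * #U := by
    refine le_trans ?_ (mul_le_mul_of_nonneg_right hmismatch (Nat.cast_nonneg _))
    exact_mod_cast two_mul_card_filter_no_embedding_le hdisj m
  have hcover : U ⊆ {Q ∈ U | ∃ f : F ↪g G, ∀ i, f i ∈ Q} ∪ {Q ∈ U | ∃ i, Disjoint Q (W i)} ∪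
      {Q ∈ U | (∀ i, ¬Disjoint Q (W i)) ∧ ¬∃ f : F ↪g G, ∀ i, f i ∈ Q} := fun Q hQ ↦ by
    simp only [mem_union, mem_filter, hQ, true_and, ← not_exists]
    tauto
  have hcard : (#U : ℝ) ≤ #{Q ∈ U | ∃ f : F ↪g G, ∀ i, f i ∈ Q} +
      #{Q ∈ U | ∃ i, Disjoint Q (W i)} +
      #{Q ∈ U | (∀ i, ¬Disjoint Q (W i)) ∧ ¬∃ f : F ↪g G, ∀ i, f i ∈ Q} :=
    mod_cast (card_le_card hcover).trans <| (card_union_le _ _).trans <|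
      Nat.add_le_add_right (card_union_le _ _) _
  linarith

/-- the counting lemma, Lemma 2.7 of the paper. -/
theorem counting_lemma {r n : ℕ} (F : SimpleGraph (Fin r)) (lam : ℝ)
    (hl0 : 0 < lam) (hl1 : lam < 1) (G : SimpleGraph (Fin n))
    (hn : (9 * r / lam : ℝ) ≤ (n : ℝ))
    (W : Fin r → Finset (Fin n))
    (hdisj : ∀ i j : Fin r, i ≠ j → Disjoint (W i) (W j))
    (hsize : ∀ i : Fin r, lam * (n : ℝ) ≤ ((W i).card : ℝ))
    (hdens : ∀ i j : Fin r, i < j →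
      (F.Adj i j → 1 - 1 / (2 * (r : ℝ) ^ 2) ≤ dens G (W i) (W j)) ∧
      (¬ F.Adj i j → dens G (W i) (W j) ≤ 1 / (2 * (r : ℝ) ^ 2))) :
    (2 / 3 : ℝ) * (((Finset.univ : Finset (Fin n)).powersetCard ⌈(9 * r / lam : ℝ)⌉₊).card : ℝ) ≤
      ((((Finset.univ : Finset (Fin n)).powersetCard ⌈(9 * r / lam : ℝ)⌉₊).filter
        fun Q => ∃ f : F ↪g G, ∀ x : Fin r, f x ∈ Q).card : ℝ) := by
  convert counting_lemma_general F G hl0 (by simpa only [Fintype.card_fin] using Nat.le_ceil _)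
    hdisj (by simpa only [Fintype.card_fin] using hsize)
    (by simpa only [Fintype.card_fin] using edgeDensity_bounds_of_forall_lt hdens)

end
end

section
/- For every integer k ≥ 1 there is a constant D = D(k) such that the following holds for every bipartite graph H with bipartition (S,T), |S| = |T| = k, every δ ∈ (0,1/2) and every integer P ≥ 1: there is n₀ = n₀(k,δ,P) such that for every graph G on n ≥ n₀ vertices and every equipartition P of V(G) into p ≤ P parts, either G contains at least δ^D·n^{2k} induced bipartite copies of H, or G admits a δ-homogeneous equipartition Q which refines P and whose number of parts q satisfies δ^{-1} ≤ q ≤ p·δ^{-D}. -/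
open scoped Classical
open Finset

noncomputable section

/-- An equipartition `Q` is `δ`-homogeneous: the total weight `|Qᵢ||Qⱼ|/n²` of the
non-`δ`-homogeneous pairs `i < j` is at most `δ`. -/
def HomogeneousPartition {n q : ℕ} (G : SimpleGraph (Fin n)) (δ : ℝ)
    (Q : Fin q → Finset (Fin n)) : Prop :=
  ∑ i : Fin q, ∑ j : Fin q,
      (if i < j ∧ ¬ HomPair G δ (Q i) (Q j) then ((Q i).card : ℝ) * ((Q j).card : ℝ) else 0)
    ≤ δ * (n : ℝ) ^ 2

/-! Let the distance of two vertices be the number of vertices adjacent to exactly one of them, and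
let `ε = δ ^ 2 / 20`, `A` polynomial in `1 / δ`, and `M = A ^ r` with `r` depending on `k` only.

Suppose that no fewer than `M` centres come within `ε * n` of all but `ε * n` vertices. Then a
random sample of `O(A * M)` vertices, searched greedily, contains `M` vertices at pairwise distance
at least `ε * n` with probability at least `1 / 2`. Their neighbourhoods have distinct traces on a
second sample of `A ^ 2` vertices, again with probability at least `1 / 2`. By the Sauer–Shelah
lemma these traces shatter a set of `k + k * (k + 1)` sampled vertices, and shattered sets yield
copies of every `H`. So a quarter of the samples of `poly(A)` vertices contain a copy, and averaging
gives `n ^ (2 * k) / poly(A)` copies.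

Otherwise colour every vertex by a nearby centre and cut each part of `P` into `M * A` pieces, most
of them monochromatic. Within a monochromatic piece the neighbourhoods are on average almost equal.
For a non-homogeneous pair `(X, Y)` the number of edges times the number of non-edges is at least
`δ / 2 * (|X| * |Y|) ^ 2`, while it is bounded by the variation of the neighbourhoods within `X` and
within `Y`: given an edge `uv` and a non-edge `xy`, either `v` distinguishes `u` from `x` or `x`
distinguishes `v` from `y`. Hence non-homogeneous pairs have small total weight. -/

section Sampling

variable {α ι ι' κ : Type*} [Fintype α] [Fintype ι] [Fintype ι'] [Fintype κ]

lemma card_filter_comp_eq [DecidableEq ι] (a : κ ↪ ι) (φ : κ → α) :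
    #{f : ι → α | f ∘ a = φ} * Fintype.card α ^ Fintype.card κ =
      Fintype.card α ^ Fintype.card ι := by
  rw [← Fintype.card_fun, ← Fintype.card_fun, ← card_univ, ← card_univ, ← card_product]
  refine card_nbij' (fun x ↦ Function.extend a x.2 x.1)
    (fun g ↦ (Function.extend a φ g, g ∘ a)) ?_ ?_ ?_ ?_
  · simp
  · simp [Set.MapsTo, Function.extend_comp a.injective]
  · rintro ⟨f, ψ⟩ hf
    obtain rfl : f ∘ a = φ := by simpa using hf
    refine Prod.ext (funext fun i ↦ ?_) (Function.extend_comp a.injective _ _)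
    by_cases hi : ∃ j, a j = i
    · obtain ⟨j, rfl⟩ := hi
      simp [a.injective.extend_apply]
    · simp [Function.extend_apply' _ _ _ hi]
  · intro g _
    funext i
    by_cases hi : ∃ j, a j = i
    · obtain ⟨j, rfl⟩ := hi
      simp [a.injective.extend_apply]
    · simp [Function.extend_apply' _ _ _ hi]

lemma card_mul_le_of_forall_exists_comp_mem {F : Finset (ι → α)} {C : Finset (κ → α)}
    (hF : ∀ f ∈ F, ∃ a : κ ↪ ι, f ∘ a ∈ C) :
    #F * Fintype.card α ^ Fintype.card κ ≤
      Fintype.card ι ^ Fintype.card κ * #C * Fintype.card α ^ Fintype.card ι := by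
  have hcover : F ⊆
      (univ ×ˢ C).biUnion fun x : (κ ↪ ι) × (κ → α) ↦ {f : ι → α | f ∘ x.1 = x.2} := by
    intro f hf
    simpa using hF f hf
  calc _ ≤ (∑ x ∈ univ ×ˢ C, #{f : ι → α | f ∘ (x.1 : κ ↪ ι) = x.2}) *
        Fintype.card α ^ Fintype.card κ :=
        Nat.mul_le_mul_right _ ((card_le_card hcover).trans card_biUnion_le)
    _ = Fintype.card (κ ↪ ι) * #C * Fintype.card α ^ Fintype.card ι := by
        simp [sum_mul, card_filter_comp_eq]
    _ ≤ _ := by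
        gcongr
        exact Fintype.card_embedding_eq.trans_le (Nat.descFactorial_le_pow _ _)

lemma card_filter_sumElim [DecidableEq ι] [DecidableEq ι'] (p : (ι ⊕ ι' → α) → Prop)
    [DecidablePred p] :
    #{h | p h} = ∑ f : ι → α, #{g : ι' → α | p (Sum.elim f g)} := by
  simp only [card_filter]
  rw [← (Equiv.sumArrowEquivProdArrow ι ι' α).symm.sum_comp, Fintype.sum_prod_type]
  rfl

lemma card_filter_finCons {N : ℕ} (p : (Fin (N + 1) → α) → Prop)
    [DecidablePred p] :
    #{f | p f} = ∑ v : α, #{g : Fin N → α | p (Fin.cons v g)} := by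
  simp only [card_filter]
  rw [← (Fin.consEquiv fun _ ↦ α).sum_comp, Fintype.sum_prod_type]
  rfl

end Sampling

lemma exists_shatters_of_sum_choose_lt {α : Type*} [Fintype α] {𝒜 : Finset (Finset α)} {d : ℕ}
    (h : ∑ i ∈ range d, (Fintype.card α).choose i < #𝒜) : ∃ S, #S = d ∧ 𝒜.Shatters S := by
  obtain ⟨S, hS, hd⟩ : ∃ S, 𝒜.Shatters S ∧ d ≤ #S := by
    by_contra! hsmall
    have hsub : 𝒜.shatterer ⊆ (range d).biUnion fun i ↦ powersetCard i univ := by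
      intro S hS
      simpa using hsmall S (mem_shatterer.1 hS)
    have := (card_le_card_shatterer 𝒜).trans ((card_le_card hsub).trans card_biUnion_le)
    simp only [card_powersetCard, card_univ] at this
    exact this.not_gt h
  obtain ⟨S', hS', hcard⟩ := exists_subset_card_eq hd
  exact ⟨S', hcard, hS.mono_right hS'⟩

section SeparatedSample

variable {V : Type*} {far : V → V → Prop} {U : Finset V} {m N : ℕ}

/-- The sample `f` hits `m` points which are pairwise far apart and far from every point of `U`.
The set `U` records the points already chosen when samples are revealed one at a time. -/
def HitsSeparated (far : V → V → Prop) (U : Finset V) (m : ℕ) {N : ℕ} (f : Fin N → V) : Prop :=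
  ∃ W : Finset V, #W = m ∧ ↑W ⊆ Set.range f ∧ (∀ w ∈ W, ∀ u ∈ U, far u w) ∧
    (W : Set V).Pairwise far

lemma hitsSeparated_zero (f : Fin N → V) : HitsSeparated far U 0 f :=
  ⟨∅, by simp⟩

lemma HitsSeparated.cons {f : Fin N → V} (h : HitsSeparated far U m f) (v : V) :
    HitsSeparated far U m (Fin.cons v f : Fin (N + 1) → V) := by
  obtain ⟨W, hm, hf, hU, hW⟩ := h
  refine ⟨W, hm, hf.trans ?_, hU, hW⟩
  rw [Fin.range_cons]
  exact Set.subset_insert _ _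

lemma HitsSeparated.cons_of_insert [Std.Irrefl far] [Std.Symm far] {f : Fin N → V} {v : V}
    (h : HitsSeparated far (insert v U) m f) (hv : ∀ u ∈ U, far u v) :
    HitsSeparated far U (m + 1) (Fin.cons v f : Fin (N + 1) → V) := by
  obtain ⟨W, hm, hf, hU, hW⟩ := h
  have hfar : ∀ w ∈ W, far v w := fun w hw ↦ hU w hw v (mem_insert_self _ _)
  have hvW : v ∉ W := fun hvW ↦ irrefl v (hfar v hvW)
  refine ⟨insert v W, by rw [card_insert_of_notMem hvW, hm], ?_, ?_, ?_⟩
  · rw [Fin.range_cons, coe_insert]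
    exact Set.insert_subset_insert hf
  · rintro w hw
    rcases mem_insert.1 hw with rfl | hw
    · exact hv
    · exact fun u hu ↦ hU w hw u (mem_insert_of_mem hu)
  · rw [coe_insert]
    exact hW.insert fun w hw _ ↦ ⟨hfar w hw, symm (hfar w hw)⟩

lemma card_not_hitsSeparated_succ_le [Fintype V] [Std.Irrefl far] [Std.Symm far] :
    #{f : Fin (N + 1) → V | ¬ HitsSeparated far U (m + 1) f} ≤
      ∑ v, if ∀ u ∈ U, far u v then #{f : Fin N → V | ¬ HitsSeparated far (insert v U) m f}
        else #{f : Fin N → V | ¬ HitsSeparated far U (m + 1) f} := by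
  rw [card_filter_finCons]
  refine sum_le_sum fun v _ ↦ ?_
  split_ifs with hv
  · exact card_le_card (monotone_filter_right _ fun f _ ↦ mt fun h ↦ h.cons_of_insert hv)
  · exact card_le_card (monotone_filter_right _ fun f _ ↦ mt fun h ↦ h.cons v)

/- Every draw is useful with probability at least `ε`, and a useful draw decreases `m`; the
potential `2 ^ m * (1 - ε / 2) ^ N` is chosen so that `ε * (1 / 2) + (1 - ε) = 1 - ε / 2` balances
the two cases. -/
lemma card_not_hitsSeparated_le [Fintype V] [Std.Irrefl far] [Std.Symm far] {ε : ℝ} {M : ℕ}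
    (hε : ε ≤ 1)
    (hfar : ∀ U : Finset V, #U < M → ε * Fintype.card V ≤ #{v | ∀ u ∈ U, far u v}) :
    #U + m ≤ M → (#{f : Fin N → V | ¬ HitsSeparated far U m f} : ℝ) ≤
      2 ^ m * (1 - ε / 2) ^ N * Fintype.card V ^ N := by
  have hε' : 0 ≤ 1 - ε / 2 := by linarith
  induction N generalizing m U with
  | zero =>
    intro _
    have hone : #{f : Fin 0 → V | ¬ HitsSeparated far U m f} ≤ 1 :=
      (card_filter_le _ _).trans (by simp)
    simpa using (Nat.cast_le_one (α := ℝ).2 hone).trans (one_le_pow₀ one_le_two)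
  | succ N ih =>
    intro hU
    rcases m with - | m
    · simp only [hitsSeparated_zero, not_true_eq_false, filter_false, card_empty, Nat.cast_zero]
      positivity
    set Y : ℝ := 2 ^ m * (1 - ε / 2) ^ N * Fintype.card V ^ N with hY
    calc (#{f : Fin (N + 1) → V | ¬ HitsSeparated far U (m + 1) f} : ℝ)
        ≤ ∑ v, (2 * Y - if ∀ u ∈ U, far u v then Y else 0) := by
          refine (Nat.cast_le.2 card_not_hitsSeparated_succ_le).trans ?_
          push_cast
          refine sum_le_sum fun v _ ↦ ?_
          split_ifs
          · have := card_insert_le v U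
            linarith [ih (U := insert v U) (m := m) (by lia)]
          · have := ih hU
            rw [pow_succ] at this
            linarith
      _ = 2 * Y * Fintype.card V - #{v | ∀ u ∈ U, far u v} * Y := by
          simp only [sum_sub_distrib, sum_const, card_univ, nsmul_eq_mul, ← sum_filter]
          ring
      _ ≤ 2 * Y * Fintype.card V - ε * Fintype.card V * Y := by
          gcongr
          exact hfar U (by lia)
      _ = _ := by rw [hY]; ring

end SeparatedSample

section NeighborDist

variable {V : Type*} [Fintype V] (G : SimpleGraph V)

/-- The Hamming distance between the neighbourhoods of `u` and `v`. -/
def neighborDist (u v : V) : ℕ :=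
  #(symmDiff (G.neighborFinset u) (G.neighborFinset v))

lemma neighborDist_self (u : V) : neighborDist G u u = 0 := by
  simp [neighborDist]

lemma neighborDist_comm (u v : V) : neighborDist G u v = neighborDist G v u := by
  rw [neighborDist, neighborDist, symmDiff_comm]

lemma neighborDist_triangle (u v w : V) :
    neighborDist G u w ≤ neighborDist G u v + neighborDist G v w :=
  (card_le_card (symmDiff_triangle _ _ _)).trans (card_union_le _ _)

lemma neighborDist_le_card (u v : V) : neighborDist G u v ≤ Fintype.card V :=
  card_le_univ _

lemma card_filter_adj_iff_add_neighborDist (u v : V) :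
    #{x | G.Adj u x ↔ G.Adj v x} + neighborDist G u v = Fintype.card V := by
  have hcompl : symmDiff (G.neighborFinset u) (G.neighborFinset v) =
      univ.filter fun x ↦ ¬ (G.Adj u x ↔ G.Adj v x) := by
    ext x
    simp only [mem_symmDiff, SimpleGraph.mem_neighborFinset, mem_filter_univ]
    tauto
  rw [neighborDist, hcompl, card_filter_add_card_filter_not, card_univ]

variable {G} {ε : ℝ}

variable (G ε) in
/-- The neighbourhoods of `u` and `v` differ on at least an `ε`-fraction of the vertices. -/
def NeighborsFar (u v : V) : Prop :=
  ε * Fintype.card V ≤ neighborDist G u v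

instance : Std.Symm (NeighborsFar G ε) :=
  ⟨fun u v h ↦ by rwa [NeighborsFar, neighborDist_comm]⟩

lemma irrefl_neighborsFar [Nonempty V] (hε : 0 < ε) : Std.Irrefl (NeighborsFar G ε) := by
  refine ⟨fun v ↦ ?_⟩
  have : 0 < ε * Fintype.card V := mul_pos hε (Nat.cast_pos.2 Fintype.card_pos)
  simpa [NeighborsFar, neighborDist_self] using this

variable (G ε) in
/-- Whichever fewer than `M` vertices are chosen as centres, at least an `ε`-fraction of the
vertices is far from all of them: there are not even approximate `ε`-nets of size below `M` for the
metric `neighborDist`. -/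
def NoSmallNet (M : ℕ) : Prop :=
  ∀ U : Finset V, #U < M → ε * Fintype.card V ≤ #{v | ∀ u ∈ U, NeighborsFar G ε u v}

end NeighborDist

section SampleTrace

variable {V ι : Type*} [Fintype ι] (G : SimpleGraph V)

/-- The trace on the sample `g` of the neighbourhood of `w`, recorded by the indices of `g`. -/
def sampleTrace (g : ι → V) (w : V) : Finset ι :=
  {i | G.Adj w (g i)}

lemma mem_sampleTrace {g : ι → V} {w : V} {i : ι} : i ∈ sampleTrace G g w ↔ G.Adj w (g i) := by
  simp [sampleTrace]

lemma card_filter_sampleTrace_eq_le [Fintype V] [DecidableEq ι] {ε : ℝ} {w w' : V}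
    (h : NeighborsFar G ε w w') :
    (#{g : ι → V | sampleTrace G g w = sampleTrace G g w'} : ℝ) ≤
      (1 - ε) ^ Fintype.card ι * Fintype.card V ^ Fintype.card ι := by
  have hpi : ({g : ι → V | sampleTrace G g w = sampleTrace G g w'} : Finset _) =
      Fintype.piFinset fun _ ↦ {x | G.Adj w x ↔ G.Adj w' x} := by
    ext g
    simp [Finset.ext_iff, mem_sampleTrace]
  have hsum : (#{x | G.Adj w x ↔ G.Adj w' x} : ℝ) + neighborDist G w w' = Fintype.card V :=
    mod_cast card_filter_adj_iff_add_neighborDist G w w'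
  rw [hpi, Fintype.card_piFinset, prod_const, card_univ, Nat.cast_pow, ← mul_pow]
  gcongr
  rw [NeighborsFar] at h
  linarith

lemma card_not_injOn_sampleTrace_le [Fintype V] [DecidableEq ι] {ε : ℝ} (hε : ε ≤ 1)
    {W : Finset V} (hW : (W : Set V).Pairwise (NeighborsFar G ε)) :
    (#{g : ι → V | ¬ Set.InjOn (sampleTrace G g) W} : ℝ) ≤
      #W ^ 2 * (1 - ε) ^ Fintype.card ι * Fintype.card V ^ Fintype.card ι := by
  have hcover : ({g : ι → V | ¬ Set.InjOn (sampleTrace G g) W} : Finset _) ⊆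
      W.offDiag.biUnion fun x ↦ {g | sampleTrace G g x.1 = sampleTrace G g x.2} := by
    intro g hg
    simp only [mem_filter_univ, Set.InjOn, not_forall] at hg
    obtain ⟨w, hw, w', hw', heq, hne⟩ := hg
    exact mem_biUnion.2 ⟨(w, w'), mem_offDiag.2 ⟨hw, hw', hne⟩, by simpa using heq⟩
  have : 0 ≤ 1 - ε := sub_nonneg.2 hε
  calc (#{g : ι → V | ¬ Set.InjOn (sampleTrace G g) W} : ℝ)
      ≤ ∑ x ∈ W.offDiag, (#{g : ι → V | sampleTrace G g x.1 = sampleTrace G g x.2} : ℝ) :=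
        mod_cast (card_le_card hcover).trans card_biUnion_le
    _ ≤ ∑ x ∈ W.offDiag, (1 - ε) ^ Fintype.card ι * Fintype.card V ^ Fintype.card ι := by
        refine sum_le_sum fun x hx ↦ card_filter_sampleTrace_eq_le G ?_
        obtain ⟨h₁, h₂, hne⟩ := mem_offDiag.1 hx
        exact hW h₁ h₂ hne
    _ = #W.offDiag * ((1 - ε) ^ Fintype.card ι * Fintype.card V ^ Fintype.card ι) := by
        rw [sum_const, nsmul_eq_mul]
    _ ≤ #W ^ 2 * ((1 - ε) ^ Fintype.card ι * Fintype.card V ^ Fintype.card ι) := by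
        gcongr
        rw [offDiag_card, ← sq]
        exact_mod_cast Nat.sub_le _ _
    _ = _ := (mul_assoc _ _ _).symm

end SampleTrace

section BipartiteCopies

variable {V σ τ : Type*} (G : SimpleGraph V) (B : σ → τ → Prop)

/-- `φ` is an induced bipartite copy in `G` of the bipartite graph with sides `σ`, `τ` and edge
relation `B`; unlike in `bipCopyCount`, `φ` is a plain function and injectivity is a condition. -/
def IsBipCopy (φ : σ ⊕ τ → V) : Prop :=
  Function.Injective φ ∧ ∀ s t, B s t ↔ G.Adj (φ (Sum.inl s)) (φ (Sum.inr t))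

/-- The sample `h` contains an induced bipartite copy in `G`, as in `IsBipCopy`. -/
def HitsBipCopy {κ : Type*} (h : κ → V) : Prop :=
  ∃ c : σ ⊕ τ ↪ κ, IsBipCopy G B (h ∘ c)

lemma card_filter_isBipCopy {k n : ℕ} (B : Fin k → Fin k → Prop) (G : SimpleGraph (Fin n)) :
    #{φ | IsBipCopy G B φ} = bipCopyCount B G := by
  rw [bipCopyCount, ← Set.ncard_image_of_injective _ DFunLike.coe_injective,
    ← Set.ncard_coe_finset]
  congr 1
  ext φ
  simp only [coe_filter_univ, Set.mem_ofPred_eq, Set.mem_image]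
  exact ⟨fun h ↦ ⟨⟨φ, h.1⟩, h.2, rfl⟩, by rintro ⟨ψ, hψ, rfl⟩; exact ⟨ψ.injective, hψ⟩⟩

variable {G} {ι : Type*} [Fintype ι] {g : ι → V} {W : Finset V} {S : Finset ι}

lemma exists_forall_adj_iff_of_shatters (hS : (W.image (sampleTrace G g)).Shatters S)
    (p : ι → Prop) : ∃ w ∈ W, ∀ i ∈ S, G.Adj w (g i) ↔ p i := by
  obtain ⟨u, hu, hSu⟩ := hS (filter_subset p S)
  obtain ⟨w, hw, rfl⟩ := mem_image.1 hu
  refine ⟨w, hw, fun i hi ↦ ?_⟩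
  simpa [hi, mem_sampleTrace] using Finset.ext_iff.1 hSu i

lemma injOn_of_shatters (hS : (W.image (sampleTrace G g)).Shatters S) : Set.InjOn g S := by
  intro i hi j hj hij
  obtain ⟨w, -, hw⟩ := exists_forall_adj_iff_of_shatters hS (· = i)
  exact ((hw j hj).1 (hij ▸ (hw i hi).2 rfl)).symm

/- Besides `τ`, the shattered set contains a label `(s, c)` for every `s` and `c : Option τ`. The
vertices adjacent to exactly one label are distinct, and as `Option τ` is larger than `τ`, for each
`s` one of them avoids the vertices chosen for `τ`. -/
lemma exists_isBipCopy_of_shatters [Fintype σ] [Fintype τ]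
    (hS : (W.image (sampleTrace G g)).Shatters S)
    (hcard : #S = Fintype.card τ + Fintype.card σ * (Fintype.card τ + 1)) :
    ∃ φ, IsBipCopy G B φ ∧ (∀ s, φ (Sum.inl s) ∈ W) ∧ ∀ t, φ (Sum.inr t) ∈ Set.range g := by
  have e : τ ⊕ σ × Option τ ≃ S := Fintype.equivOfCardEq (by simp [hcard])
  have hw (x : σ × Option τ) : ∃ w ∈ W, ∀ y,
      G.Adj w (g (e y)) ↔ Sum.elim (B x.1) (· = x) y := by
    obtain ⟨w, hwW, hw⟩ := exists_forall_adj_iff_of_shatters hS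
      fun i ↦ ∃ y, (e y : ι) = i ∧ Sum.elim (B x.1) (· = x) y
    refine ⟨w, hwW, fun y ↦ (hw _ (e y).2).trans ?_⟩
    simp only [Subtype.val_inj, e.apply_eq_iff_eq, exists_eq_left]
  choose w hwW hw using hw
  have hwinj : Function.Injective w := fun x y hxy ↦
    (hw y (Sum.inr x)).1 (hxy ▸ (hw x (Sum.inr x)).2 rfl)
  have hginj : Function.Injective fun t ↦ g (e (Sum.inl t)) := fun t t' h ↦
    Sum.inl_injective (e.injective (Subtype.ext (injOn_of_shatters hS (e _).2 (e _).2 h)))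
  have hfree (s : σ) : ∃ c, ∀ t, w (s, c) ≠ g (e (Sum.inl t)) := by
    by_contra! hcon
    choose b hb using hcon
    have hb : Function.Injective b := fun c c' h ↦
      congrArg Prod.snd (hwinj ((hb c).trans (h ▸ (hb c').symm)))
    exact (Fintype.card_le_of_injective b hb).not_gt (by simp)
  choose c hc using hfree
  refine ⟨Sum.elim (fun s ↦ w (s, c s)) fun t ↦ g (e (Sum.inl t)),
    ⟨Function.Injective.sumElim (fun s s' h ↦ congrArg Prod.fst (hwinj h)) hginj hc, ?_⟩, ?_, ?_⟩
  · exact fun s t ↦ (hw (s, c s) (Sum.inl t)).symm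
  · exact fun s ↦ hwW _
  · exact fun t ↦ ⟨_, rfl⟩

lemma hitsBipCopy_of_injOn [Fintype σ] [Fintype τ] {ι' : Type*} {f : ι' → V}
    (hWf : ↑W ⊆ Set.range f) (hinj : Set.InjOn (sampleTrace G g) W)
    (hW : ∑ i ∈ range (Fintype.card τ + Fintype.card σ * (Fintype.card τ + 1)),
      (Fintype.card ι).choose i < #W) :
    HitsBipCopy G B (Sum.elim f g) := by
  rw [← card_image_of_injOn hinj] at hW
  obtain ⟨S, hcard, hS⟩ := exists_shatters_of_sum_choose_lt hW
  obtain ⟨φ, hφ, hl, hr⟩ := exists_isBipCopy_of_shatters B hS hcard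
  have hrange (x : σ ⊕ τ) : ∃ y, Sum.elim f g y = φ x := by
    rcases x with s | t
    · exact (hWf (hl s)).imp' Sum.inl fun _ ↦ id
    · exact (hr t).imp' Sum.inr fun _ ↦ id
  choose c hc using hrange
  obtain rfl : Sum.elim f g ∘ c = φ := funext hc
  exact ⟨⟨c, hφ.1.of_comp⟩, hφ⟩

end BipartiteCopies

section ManyCopies

variable {V σ τ ι : Type*} [Fintype V] [Fintype σ] [Fintype τ] [Fintype ι]

lemma pow_card_le_two_mul_card_filter [DecidableEq ι] {p : (ι → V) → Prop} [DecidablePred p]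
    {c : ℝ} (hc : c ≤ 1 / 2)
    (hp : (#{f | ¬ p f} : ℝ) ≤ c * Fintype.card V ^ Fintype.card ι) :
    (Fintype.card V : ℝ) ^ Fintype.card ι ≤ 2 * #{f | p f} := by
  have htotal : #{f | p f} + #{f | ¬ p f} = Fintype.card V ^ Fintype.card ι := by
    rw [card_filter_add_card_filter_not, card_univ, Fintype.card_fun]
  have htotal : (#{f | p f} : ℝ) + #{f | ¬ p f} = Fintype.card V ^ Fintype.card ι :=
    mod_cast htotal
  have : c * (Fintype.card V : ℝ) ^ Fintype.card ι ≤ 1 / 2 * Fintype.card V ^ Fintype.card ι := by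
    gcongr
  linarith

variable {G : SimpleGraph V} {ε : ℝ} {M N : ℕ}

lemma pow_card_le_two_mul_card_hitsBipCopy [DecidableEq ι] (B : σ → τ → Prop) (hε : ε ≤ 1)
    (hhalf : M ^ 2 * (1 - ε) ^ Fintype.card ι ≤ 1 / 2)
    (hM : ∑ i ∈ range (Fintype.card τ + Fintype.card σ * (Fintype.card τ + 1)),
      (Fintype.card ι).choose i < M) {f : Fin N → V}
    (hf : HitsSeparated (NeighborsFar G ε) ∅ M f) :
    (Fintype.card V : ℝ) ^ Fintype.card ι ≤
      2 * #{g : ι → V | HitsBipCopy G B (Sum.elim f g)} := by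
  obtain ⟨W, rfl, hWf, -, hW⟩ := hf
  refine (pow_card_le_two_mul_card_filter hhalf
    (card_not_injOn_sampleTrace_le G hε hW)).trans ?_
  gcongr with g
  exact fun hg ↦ hitsBipCopy_of_injOn B hWf hg hM

variable [Nonempty V]

lemma pow_le_two_mul_card_hitsSeparated (hε₀ : 0 < ε) (hε : ε ≤ 1)
    (hhalf : 2 ^ M * (1 - ε / 2) ^ N ≤ 1 / 2)
    (hfar : NoSmallNet G ε M) :
    (Fintype.card V : ℝ) ^ N ≤ 2 * #{f : Fin N → V | HitsSeparated (NeighborsFar G ε) ∅ M f} := by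
  have := irrefl_neighborsFar (G := G) hε₀
  have hmiss := card_not_hitsSeparated_le (N := N) (m := M) (U := ∅) hε hfar (by simp)
  have := pow_card_le_two_mul_card_filter hhalf (hmiss.trans_eq (by rw [Fintype.card_fin]))
  rwa [Fintype.card_fin] at this

lemma pow_card_le_four_mul_card_hitsBipCopy [DecidableEq ι] (B : σ → τ → Prop) (hε₀ : 0 < ε)
    (hε : ε ≤ 1)
    (hhalf : 2 ^ M * (1 - ε / 2) ^ N ≤ 1 / 2)
    (hhalf' : M ^ 2 * (1 - ε) ^ Fintype.card ι ≤ 1 / 2)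
    (hM : ∑ i ∈ range (Fintype.card τ + Fintype.card σ * (Fintype.card τ + 1)),
      (Fintype.card ι).choose i < M)
    (hfar : NoSmallNet G ε M) :
    (Fintype.card V : ℝ) ^ Fintype.card (Fin N ⊕ ι) ≤
      4 * #{h : Fin N ⊕ ι → V | HitsBipCopy G B h} := by
  set n : ℝ := (Fintype.card V : ℝ)
  set R : Finset (Fin N → V) := {f | HitsSeparated (NeighborsFar G ε) ∅ M f}
  set copies : (Fin N → V) → ℝ := fun f ↦ #{g : ι → V | HitsBipCopy G B (Sum.elim f g)}
  have htotal : (#{h : Fin N ⊕ ι → V | HitsBipCopy G B h} : ℝ) = ∑ f, copies f := by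
    rw [card_filter_sumElim, Nat.cast_sum]
  rw [htotal, Fintype.card_sum, Fintype.card_fin, pow_add]
  calc n ^ N * n ^ Fintype.card ι
      ≤ 2 * #R * n ^ Fintype.card ι := by
        gcongr
        exact pow_le_two_mul_card_hitsSeparated hε₀ hε hhalf hfar
    _ = 2 * ∑ _ ∈ R, n ^ Fintype.card ι := by rw [sum_const, nsmul_eq_mul, mul_assoc]
    _ ≤ 2 * ∑ f ∈ R, 2 * copies f := by
        gcongr with _ hf
        exact pow_card_le_two_mul_card_hitsBipCopy B hε hhalf' hM (mem_filter.1 hf).2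
    _ ≤ 2 * ∑ f, 2 * copies f := by
        gcongr
        exact subset_univ _
    _ = 4 * ∑ f, copies f := by rw [← mul_sum]; ring

lemma pow_card_le_mul_card_isBipCopy [DecidableEq σ] [DecidableEq τ] (B : σ → τ → Prop)
    (hε₀ : 0 < ε) (hε : ε ≤ 1)
    (hhalf : 2 ^ M * (1 - ε / 2) ^ N ≤ 1 / 2)
    (hhalf' : M ^ 2 * (1 - ε) ^ Fintype.card ι ≤ 1 / 2)
    (hM : ∑ i ∈ range (Fintype.card τ + Fintype.card σ * (Fintype.card τ + 1)),
      (Fintype.card ι).choose i < M)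
    (hfar : NoSmallNet G ε M) :
    Fintype.card V ^ Fintype.card (σ ⊕ τ) ≤
      4 * (N + Fintype.card ι) ^ Fintype.card (σ ⊕ τ) * #{φ : σ ⊕ τ → V | IsBipCopy G B φ} := by
  have hmany : Fintype.card V ^ Fintype.card (Fin N ⊕ ι) ≤
      4 * #{h : Fin N ⊕ ι → V | HitsBipCopy G B h} :=
    mod_cast pow_card_le_four_mul_card_hitsBipCopy B hε₀ hε hhalf hhalf' hM hfar
  have hfew : #{h : Fin N ⊕ ι → V | HitsBipCopy G B h} * Fintype.card V ^ Fintype.card (σ ⊕ τ) ≤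
      Fintype.card (Fin N ⊕ ι) ^ Fintype.card (σ ⊕ τ) *
        #{φ : σ ⊕ τ → V | IsBipCopy G B φ} * Fintype.card V ^ Fintype.card (Fin N ⊕ ι) :=
    card_mul_le_of_forall_exists_comp_mem fun h hh ↦
      (mem_filter.1 hh).2.imp fun _ hc ↦ mem_filter.2 ⟨mem_univ _, hc⟩
  refine Nat.le_of_mul_le_mul_right ?_ (pow_pos (Fintype.card_pos (α := V))
    (Fintype.card (Fin N ⊕ ι)))
  calc _ ≤ Fintype.card V ^ Fintype.card (σ ⊕ τ) * (4 * _) := Nat.mul_le_mul_left _ hmany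
    _ = 4 * (_ * Fintype.card V ^ Fintype.card (σ ⊕ τ)) := by ring
    _ ≤ 4 * _ := Nat.mul_le_mul_left _ hfew
    _ = _ := by rw [Fintype.card_sum (α := Fin N), Fintype.card_fin]; ring

end ManyCopies

section Parameters

lemma one_sub_pow_le_half {ε : ℝ} {A : ℕ} (hε : ε ≤ 1) (hA : 1 ≤ ε * A) :
    (1 - ε) ^ A ≤ 1 / 2 := by
  have hexp : Real.exp (-1) ≤ 1 / 2 := by
    rw [Real.exp_neg, ← one_div]
    gcongr
    linarith [Real.add_one_le_exp 1]
  calc (1 - ε) ^ A ≤ Real.exp (-ε) ^ A := by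
        have : 0 ≤ 1 - ε := sub_nonneg.2 hε
        gcongr
        exact Real.one_sub_le_exp_neg ε
    _ = Real.exp (-(ε * A)) := by rw [← Real.exp_nat_mul]; ring_nf
    _ ≤ Real.exp (-1) := by gcongr
    _ ≤ 1 / 2 := hexp

lemma exists_forall_two_mul_pow_le_two_pow (s : ℕ) : ∃ A₀, ∀ A ≥ A₀, 2 * A ^ s ≤ 2 ^ A := by
  have hlim := tendsto_pow_const_div_const_pow_of_one_lt s (one_lt_two (α := ℝ))
  obtain ⟨A₀, hA₀⟩ := Filter.eventually_atTop.1 (hlim.eventually_le_const (half_pos one_pos))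
  refine ⟨A₀, fun A hA ↦ ?_⟩
  have := (div_le_iff₀ (by positivity)).1 (hA₀ A hA)
  exact_mod_cast (by linarith : 2 * (A : ℝ) ^ s ≤ 2 ^ A)

lemma sum_range_choose_sq_lt {A d : ℕ} (hd : d < A) :
    ∑ i ∈ range d, (A ^ 2).choose i < A ^ (2 * d + 1) := by
  have hA : 0 < A := by lia
  calc ∑ i ∈ range d, (A ^ 2).choose i ≤ ∑ _ ∈ range d, A ^ (2 * d) := by
        refine sum_le_sum fun i hi ↦ (Nat.choose_le_pow _ _).trans ?_
        rw [← pow_mul]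
        exact Nat.pow_le_pow_right hA (by grind)
    _ = d * A ^ (2 * d) := by rw [sum_const, card_range, smul_eq_mul]
    _ < A * A ^ (2 * d) := by gcongr
    _ = A ^ (2 * d + 1) := by ring

lemma two_pow_mul_one_sub_half_pow_le_half {ε : ℝ} {A M : ℕ} (hε : ε ≤ 1) (hA : 1 ≤ ε * A)
    (hM : 0 < M) : 2 ^ M * (1 - ε / 2) ^ (4 * A * M) ≤ (1 / 2 : ℝ) := by
  have hhalf := one_sub_pow_le_half (ε := ε / 2) (A := 2 * A) (by linarith) (by push_cast; linarith)
  have : 0 ≤ 1 - ε / 2 := by linarith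
  calc 2 ^ M * (1 - ε / 2) ^ (4 * A * M)
      = (2 * ((1 - ε / 2) ^ (2 * A)) ^ 2) ^ M := by rw [mul_pow]; ring
    _ ≤ (2 * (1 / 2) ^ 2) ^ M := by gcongr
    _ ≤ (1 / 2) ^ 1 := by
        norm_num
        exact pow_le_of_le_one (by norm_num) (by norm_num) hM.ne'
    _ = 1 / 2 := pow_one _

lemma sq_mul_one_sub_pow_sq_le_half {ε : ℝ} {A r : ℕ} (hε : ε ≤ 1) (hA : 1 ≤ ε * A)
    (hpow : 2 * A ^ (2 * r) ≤ 2 ^ A) : ((A : ℝ) ^ r) ^ 2 * (1 - ε) ^ A ^ 2 ≤ 1 / 2 := by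
  have : 0 ≤ 1 - ε := by linarith
  calc ((A : ℝ) ^ r) ^ 2 * (1 - ε) ^ A ^ 2 = A ^ (2 * r) * ((1 - ε) ^ A) ^ A := by ring
    _ ≤ A ^ (2 * r) * (1 / 2) ^ A := by
        gcongr
        exact one_sub_pow_le_half hε hA
    _ ≤ 1 / 2 := by
        rw [one_div, inv_pow, ← div_eq_mul_inv, div_le_iff₀ (by positivity)]
        have : (2 : ℝ) * A ^ (2 * r) ≤ 2 ^ A := mod_cast hpow
        linarith

lemma exists_nat_scale {δ : ℝ} (hδ₀ : 0 < δ) (hδ : δ < 1 / 2) {c : ℕ} (hc : 6 ≤ c) :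
    ∃ A : ℕ, c ≤ A ∧ δ⁻¹ ≤ A ∧ 20 ≤ δ ^ 2 * A ∧ (A : ℝ) ≤ δ⁻¹ ^ (2 * c) := by
  set b := ⌈δ⁻¹⌉₊
  have hδ₂ : 2 < δ⁻¹ := (lt_inv_comm₀ two_pos hδ₀).2 (by linarith)
  have hδb : δ⁻¹ ≤ b := Nat.le_ceil _
  have hb : 2 < b := by exact_mod_cast hδ₂.trans_le hδb
  have hbδ : (b : ℝ) ≤ δ⁻¹ ^ 2 := by
    have : (b : ℝ) < δ⁻¹ + 1 := Nat.ceil_lt_add_one (by positivity)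
    nlinarith
  refine ⟨b ^ c, (Nat.lt_pow_self (by lia)).le, hδb.trans ?_, ?_, ?_⟩
  · exact_mod_cast Nat.le_self_pow (by lia) b
  · have hsq : 1 ≤ (δ * b) ^ 2 := one_le_pow₀ ((inv_le_iff_one_le_mul₀' hδ₀).1 hδb)
    have hb' : (3 : ℝ) ≤ b := by exact_mod_cast hb
    calc (20 : ℝ) ≤ 1 * 3 ^ 4 := by norm_num
      _ ≤ (δ * b) ^ 2 * b ^ 4 := by gcongr
      _ = δ ^ 2 * b ^ 6 := by ring
      _ ≤ δ ^ 2 * (b ^ c : ℕ) := by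
        push_cast
        gcongr
        linarith
  · rw [pow_mul, Nat.cast_pow]
    gcongr

/-- The exponent `r` such that at scale `A` the graph either has `A ^ r` vertices with pairwise far
neighbourhoods or fewer than `A ^ r` centres. It is one more than twice the size of the sets to be
shattered, because `A ^ 2` vertices are sampled. -/
def centreExponent (k : ℕ) : ℕ :=
  2 * (k + k * (k + 1)) + 1

lemma pow_le_mul_bipCopyCount {k n A : ℕ} [NeZero n] {G : SimpleGraph (Fin n)}
    (B : Fin k → Fin k → Prop) {ε : ℝ} (hε₀ : 0 < ε) (hε : ε ≤ 1) (hA : 1 ≤ ε * A)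
    (hA₅ : 5 ≤ A) (hk : k + k * (k + 1) < A) (hpow : 2 * A ^ (2 * centreExponent k) ≤ 2 ^ A)
    (hfar : NoSmallNet G ε (A ^ centreExponent k)) :
    n ^ (2 * k) ≤ A ^ (1 + (centreExponent k + 2) * (2 * k)) * bipCopyCount B G := by
  set r := centreExponent k with hr
  have hsample : 4 * A * A ^ r + A ^ 2 ≤ A ^ (r + 2) :=
    calc 4 * A * A ^ r + A ^ 2 ≤ 4 * A * A ^ r + A ^ (r + 1) := by
          gcongr
          · lia
          · simp [hr, centreExponent]
      _ = 5 * A ^ (r + 1) := by ring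
      _ ≤ A * A ^ (r + 1) := by gcongr
      _ = A ^ (r + 2) := by ring
  have hcopies := pow_card_le_mul_card_isBipCopy (G := G) (ι := Fin (A ^ 2)) (M := A ^ r) B hε₀ hε
    (two_pow_mul_one_sub_half_pow_le_half hε hA (by positivity))
    (by simpa using sq_mul_one_sub_pow_sq_le_half hε hA hpow)
    (by simpa [hr, centreExponent] using sum_range_choose_sq_lt hk) hfar
  simp only [Fintype.card_sum, Fintype.card_fin, ← two_mul, card_filter_isBipCopy] at hcopies
  calc n ^ (2 * k) ≤ 4 * (4 * A * A ^ r + A ^ 2) ^ (2 * k) * bipCopyCount B G := hcopies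
    _ ≤ A * (A ^ (r + 2)) ^ (2 * k) * bipCopyCount B G := by gcongr; lia
    _ = A ^ (1 + (r + 2) * (2 * k)) * bipCopyCount B G := by ring

end Parameters

section ColouredPartition

variable {α κ : Type*} [DecidableEq α]

lemma sum_card_not_subset_equitabilise_le {s : Finset α} (P : Finpartition s) {a b m : ℕ}
    (h : a * m + b * (m + 1) = #s) :
    ∑ u ∈ (P.equitabilise h).parts with ¬ ∃ p ∈ P.parts, u ⊆ p, #u ≤ #P.parts * m := by
  set Q := P.equitabilise h
  have hsub : {u ∈ Q.parts | ¬ ∃ p ∈ P.parts, u ⊆ p}.biUnion id ⊆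
      P.parts.biUnion fun p ↦ p \ {u ∈ Q.parts | u ⊆ p}.biUnion id := by
    intro v hv
    obtain ⟨u, hu, hvu⟩ := mem_biUnion.1 hv
    obtain ⟨huQ, hu⟩ := mem_filter.1 hu
    obtain ⟨p, hp, hvp⟩ := P.exists_mem (Q.subset huQ hvu)
    refine mem_biUnion.2 ⟨p, hp, mem_sdiff.2 ⟨hvp, fun hvp' ↦ hu ⟨p, hp, ?_⟩⟩⟩
    obtain ⟨u', hu', hvu'⟩ := mem_biUnion.1 hvp'
    obtain ⟨hu'Q, hu'⟩ := mem_filter.1 hu'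
    rwa [Q.eq_of_mem_parts huQ hu'Q hvu hvu']
  calc ∑ u ∈ Q.parts with ¬ ∃ p ∈ P.parts, u ⊆ p, #u
      = #({u ∈ Q.parts | ¬ ∃ p ∈ P.parts, u ⊆ p}.biUnion id) :=
        (card_biUnion fun u hu u' hu' hne ↦
          Q.disjoint (mem_filter.1 hu).1 (mem_filter.1 hu').1 hne).symm
    _ ≤ ∑ p ∈ P.parts, #(p \ {u ∈ Q.parts | u ⊆ p}.biUnion id) :=
        (card_le_card hsub).trans card_biUnion_le
    _ ≤ ∑ _ ∈ P.parts, m := sum_le_sum fun p hp ↦ P.card_parts_equitabilise_subset_le h hp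
    _ = #P.parts * m := by rw [sum_const, smul_eq_mul]

/-- The colouring `c` is constant on `X`. -/
def IsMonochromatic (c : α → κ) (X : Finset α) : Prop :=
  ∀ u ∈ X, ∀ v ∈ X, c u = c v

lemma exists_finpartition_isMonochromatic [DecidableEq κ] (c : α → κ)
    (X : Finset α) :
    ∃ P : Finpartition X, #P.parts ≤ #(X.image c) ∧ ∀ p ∈ P.parts, IsMonochromatic c p := by
  refine ⟨Finpartition.ofSetSetoid (Setoid.ker c) X, ?_, ?_⟩
  · have : (Finpartition.ofSetSetoid (Setoid.ker c) X).parts =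
        (X.image c).image fun x ↦ {b ∈ X | x = c b} := by
      rw [image_image]
      rfl
    exact this ▸ card_image_le
  · intro p hp
    obtain ⟨a, -, rfl⟩ := mem_image.1 hp
    exact fun u hu v hv ↦ (mem_filter.1 hu).2.symm.trans (mem_filter.1 hv).2

lemma exists_split_isMonochromatic [DecidableEq κ] (c : α → κ) {X : Finset α} {ℓ t : ℕ}
    (ht : t ≠ 0) (hle : ℓ * t ≤ #X) (hge : #X ≤ ℓ * (t + 1)) :
    ∃ R : Fin ℓ → Finset α, (∀ i j, i ≠ j → Disjoint (R i) (R j)) ∧ univ.biUnion R = X ∧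
      (∀ i, #(R i) = t ∨ #(R i) = t + 1) ∧
      ∑ i with ¬ IsMonochromatic c (R i), #(R i) ≤ #(X.image c) * t := by
  obtain ⟨P, hPc, hP⟩ := exists_finpartition_isMonochromatic c X
  obtain ⟨b, hb⟩ := Nat.exists_eq_add_of_le hle
  obtain ⟨a, rfl⟩ : ∃ a, ℓ = a + b := Nat.exists_eq_add_of_le' (by lia)
  have h : a * t + b * (t + 1) = #X := by rw [hb]; ring
  set Q := P.equitabilise h
  let e : Fin (a + b) ≃ Q.parts :=
    Fintype.equivOfCardEq (by simp [Q, P.card_parts_equitabilise h ht])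
  refine ⟨fun i ↦ e i, fun i j hij ↦ ?_, ?_, fun i ↦ ?_, ?_⟩
  · exact Q.disjoint (e i).2 (e j).2 fun h ↦ hij (e.injective (Subtype.ext h))
  · refine Subset.antisymm (biUnion_subset.2 fun i _ ↦ Q.subset (e i).2) fun v hv ↦ ?_
    obtain ⟨u, hu, hvu⟩ := Q.exists_mem hv
    exact mem_biUnion.2 ⟨e.symm ⟨u, hu⟩, mem_univ _, by simpa using hvu⟩
  · exact P.card_eq_of_mem_parts_equitabilise (e i).2
  calc ∑ i with ¬ IsMonochromatic c (e i).1, #(e i).1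
      = ∑ u ∈ Q.parts with ¬ IsMonochromatic c u, #u := by
        simp only [sum_filter]
        exact (e.sum_comp fun u ↦ if ¬ IsMonochromatic c u.1 then #u.1 else 0).trans
          (sum_coe_sort Q.parts fun u ↦ if ¬ IsMonochromatic c u then #u else 0)
    _ ≤ ∑ u ∈ Q.parts with ¬ ∃ p ∈ P.parts, u ⊆ p, #u := by
        refine sum_le_sum_of_subset (monotone_filter_right _ fun u _ ↦ mt ?_)
        rintro ⟨p, hp, hup⟩ v hv w hw
        exact hP p hp v (hup hv) w (hup hw)
    _ ≤ #(X.image c) * t := (sum_card_not_subset_equitabilise_le P h).trans (by gcongr)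

end ColouredPartition

section Refinement

variable {n p : ℕ} {κ : Type*} [DecidableEq κ] {Part : Fin p → Finset (Fin n)}

lemma IsEquipartition.sum_sum {R : Type*} [AddCommMonoid R] (hPart : IsEquipartition Part)
    (f : Fin n → R) : ∑ j, ∑ v ∈ Part j, f v = ∑ v, f v := by
  have huniv : univ.biUnion Part = univ := eq_univ_iff_forall.2 fun v ↦ by
    simpa using hPart.2.1 v
  rw [← huniv, sum_biUnion fun i _ j _ hij ↦ hPart.1 i j hij]

lemma IsEquipartition.sum_card (hPart : IsEquipartition Part) : ∑ j, #(Part j) = n := by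
  simpa using hPart.sum_sum fun _ ↦ (1 : ℕ)

lemma IsEquipartition.exists_mul_le_card (hPart : IsEquipartition Part) {ℓ : ℕ} (hℓ : 0 < ℓ)
    (hn : p * ℓ < n) : ∃ t ≠ 0, ∀ j, ℓ * t ≤ #(Part j) ∧ #(Part j) ≤ ℓ * (t + 1) := by
  rcases isEmpty_or_nonempty (Fin p) with _ | _
  · exact ⟨1, one_ne_zero, isEmptyElim⟩
  obtain ⟨j₀, hj₀⟩ := Finite.exists_min fun j ↦ #(Part j)
  have hmin : ℓ ≤ #(Part j₀) := by
    by_contra! hlt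
    have : ∑ j, #(Part j) ≤ ∑ _ : Fin p, ℓ :=
      sum_le_sum fun j _ ↦ (hPart.2.2 j j₀).trans hlt
    rw [hPart.sum_card, sum_const, card_univ, Fintype.card_fin, smul_eq_mul] at this
    lia
  refine ⟨#(Part j₀) / ℓ, (Nat.div_pos hmin hℓ).ne', fun j ↦ ⟨?_, ?_⟩⟩
  · exact (Nat.mul_div_le _ _).trans (hj₀ j)
  · exact (hPart.2.2 j j₀).trans (Nat.lt_mul_div_succ _ hℓ)

lemma exists_equipartition_isMonochromatic (hPart : IsEquipartition Part) {ℓ : ℕ} (hℓ : 0 < ℓ)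
    (hn : p * ℓ < n) (c : Fin n → κ) :
    ∃ Q : Fin (p * ℓ) → Finset (Fin n), IsEquipartition Q ∧ (∀ i, ∃ j, Q i ⊆ Part j) ∧
      ℓ * ∑ i with ¬ IsMonochromatic c (Q i), #(Q i) ≤ #(univ.image c) * n := by
  obtain ⟨t, ht, hcard⟩ := hPart.exists_mul_le_card hℓ hn
  choose R hdisj hcov hRt hRc using
    fun j ↦ exists_split_isMonochromatic c ht (hcard j).1 (hcard j).2
  have hsub (j : Fin p) (i : Fin ℓ) : R j i ⊆ Part j :=
    hcov j ▸ subset_biUnion_of_mem (R j) (mem_univ i)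
  have hR (a b : Fin p × Fin ℓ) (hab : a ≠ b) : Disjoint (R a.1 a.2) (R b.1 b.2) := by
    obtain ⟨i, i'⟩ := a
    obtain ⟨j, j'⟩ := b
    rcases eq_or_ne i j with rfl | hij
    · exact hdisj i i' j' fun h ↦ hab (by rw [h])
    · exact (hPart.1 i j hij).mono (hsub _ _) (hsub _ _)
  let e : Fin (p * ℓ) ≃ Fin p × Fin ℓ := finProdFinEquiv.symm
  refine ⟨fun x ↦ R (e x).1 (e x).2, ⟨fun x y hxy ↦ ?_, fun v ↦ ?_, fun x y ↦ ?_⟩,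
    fun x ↦ ⟨_, hsub _ _⟩, ?_⟩
  · exact hR _ _ (e.injective.ne hxy)
  · obtain ⟨j, hj⟩ := hPart.2.1 v
    obtain ⟨i, -, hi⟩ := mem_biUnion.1 (hcov j ▸ hj)
    exact ⟨e.symm (j, i), by simpa using hi⟩
  · have hx := hRt (e x).1 (e x).2
    have hy := hRt (e y).1 (e y).2
    lia
  calc ℓ * ∑ x with ¬ IsMonochromatic c (R (e x).1 (e x).2), #(R (e x).1 (e x).2)
      = ℓ * ∑ j, ∑ i with ¬ IsMonochromatic c (R j i), #(R j i) := by
        simp only [sum_filter]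
        rw [e.sum_comp fun x ↦ if ¬ IsMonochromatic c (R x.1 x.2) then #(R x.1 x.2) else 0,
          Fintype.sum_prod_type]
    _ ≤ ℓ * ∑ _ : Fin p, #(univ.image c) * t := by
        gcongr with j
        exact (hRc j).trans (by gcongr; exact subset_univ _)
    _ = #(univ.image c) * ∑ _ : Fin p, ℓ * t := by simp only [mul_sum, mul_left_comm]
    _ ≤ #(univ.image c) * ∑ j, #(Part j) := by gcongr with j; exact (hcard j).1
    _ = #(univ.image c) * n := by rw [hPart.sum_card]

end Refinement

section AdjVariation

variable {V : Type*} (G : SimpleGraph V)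

/-- The number of triples `(u, u', v)` with `u, u' ∈ X` and `v ∈ Y` such that `v` is adjacent to `u`
but not to `u'`; it measures how much the neighbourhoods of the vertices of `X` vary inside `Y`. -/
def adjVariation (X Y : Finset V) : ℕ :=
  #{x ∈ X ×ˢ X ×ˢ Y | G.Adj x.1 x.2.2 ∧ ¬ G.Adj x.2.1 x.2.2}

lemma card_interedges_mul_card_interedges_not_le (X Y : Finset V) :
    #(Rel.interedges G.Adj X Y) * #(Rel.interedges (fun u v ↦ ¬ G.Adj u v) X Y) ≤
      #Y * adjVariation G X Y + #X * adjVariation G Y X := by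
  set E := Rel.interedges G.Adj X Y ×ˢ Rel.interedges (fun u v ↦ ¬ G.Adj u v) X Y
  have hle : #{q ∈ E | ¬ G.Adj q.2.1 q.1.2} ≤ #Y * adjVariation G X Y := by
    rw [adjVariation, ← card_product]
    refine card_le_card_of_injOn (fun q ↦ (q.2.2, q.1.1, q.2.1, q.1.2)) (fun q hq ↦ ?_) ?_
    · simp only [E, mem_coe, mem_filter, mem_product, Rel.mem_interedges_iff] at hq ⊢
      tauto
    · rintro ⟨⟨a, b⟩, c, d⟩ - ⟨⟨a', b'⟩, c', d'⟩ - h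
      simp_all
  have hle' : #{q ∈ E | G.Adj q.2.1 q.1.2} ≤ #X * adjVariation G Y X := by
    rw [adjVariation, ← card_product]
    refine card_le_card_of_injOn (fun q ↦ (q.1.1, q.1.2, q.2.2, q.2.1)) (fun q hq ↦ ?_) ?_
    · simp only [E, mem_coe, mem_filter, mem_product, Rel.mem_interedges_iff,
        G.adj_comm q.2.1] at hq ⊢
      tauto
    · rintro ⟨⟨a, b⟩, c, d⟩ - ⟨⟨a', b'⟩, c', d'⟩ - h
      simp_all
  rw [← card_product, ← card_filter_add_card_filter_not fun q ↦ G.Adj q.2.1 q.1.2, add_comm]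
  exact add_le_add hle hle'

end AdjVariation

section Homogeneity

variable {V : Type*} [Fintype V] (G : SimpleGraph V)

lemma exists_centres_of_not_noSmallNet [DecidableEq V] {ε : ℝ} (hε : ε ≤ 1) {M : ℕ}
    (h : ¬ NoSmallNet G ε M) :
    ∃ c : V → V, #(univ.image c) ≤ M ∧
      (∑ v, neighborDist G (c v) v : ℝ) ≤ 2 * ε * Fintype.card V ^ 2 := by
  simp only [NoSmallNet, not_forall, not_le] at h
  obtain ⟨U, hUM, hfar⟩ := h
  have hn : 0 < ε * Fintype.card V := (Nat.cast_nonneg _).trans_lt hfar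
  obtain ⟨W, hnear, hW⟩ : ∃ W : Finset V,
      (∀ v ∉ W, ∃ u ∈ U, (neighborDist G u v : ℝ) ≤ ε * Fintype.card V) ∧
      #W < ε * Fintype.card V := by
    refine ⟨_, fun v hv ↦ ?_, hfar⟩
    obtain ⟨u, hu, huv⟩ : ∃ u ∈ U, ¬ NeighborsFar G ε u v := by simpa using hv
    exact ⟨u, hu, (not_le.1 huv).le⟩
  obtain ⟨u₀, hu₀⟩ : U.Nonempty := by
    have hWV : (#W : ℝ) < Fintype.card V := hW.trans_le (mul_le_of_le_one_left (by simp) hε)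
    obtain ⟨v, hv⟩ : ∃ v, v ∉ W := by
      simpa [card_lt_iff_ne_univ, eq_univ_iff_forall] using hWV
    exact (hnear v hv).imp fun u hu ↦ hu.1
  have hcentre (v : V) : ∃ u ∈ U, (neighborDist G u v : ℝ) ≤
      ε * Fintype.card V + if v ∈ W then (Fintype.card V : ℝ) else 0 := by
    split_ifs with hv
    · refine ⟨u₀, hu₀, le_add_of_nonneg_of_le hn.le ?_⟩
      exact_mod_cast neighborDist_le_card G u₀ v
    · simpa using hnear v hv
  choose c hcU hc using hcentre
  refine ⟨c, (card_le_card (image_subset_iff.2 fun v _ ↦ hcU v)).trans hUM.le, ?_⟩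
  calc (∑ v, neighborDist G (c v) v : ℝ)
      ≤ ∑ v, (ε * Fintype.card V + if v ∈ W then (Fintype.card V : ℝ) else 0) :=
        sum_le_sum fun v _ ↦ hc v
    _ = ε * Fintype.card V ^ 2 + #W * Fintype.card V := by
        simp only [sum_add_distrib, sum_const, sum_ite_mem, univ_inter, card_univ, nsmul_eq_mul]
        ring
    _ ≤ 2 * ε * Fintype.card V ^ 2 := by nlinarith

/-- The total neighbourhood distance from a vertex of `X` to the other vertices of `X`, averaged
over the vertices of `X`. It is `0` for empty `X`. -/
def neighborSpread (X : Finset V) : ℝ :=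
  (∑ u ∈ X, ∑ v ∈ X, neighborDist G u v : ℝ) / #X

lemma sum_adjVariation_le {q : ℕ} {Q : Fin q → Finset V}
    (hQ : ∀ i j, i ≠ j → Disjoint (Q i) (Q j)) (X : Finset V) :
    ∑ j, adjVariation G X (Q j) ≤ ∑ u ∈ X, ∑ v ∈ X, neighborDist G u v := by
  have hdist (u u' : V) : #{v | G.Adj u v ∧ ¬ G.Adj u' v} ≤ neighborDist G u u' :=
    card_le_card fun v hv ↦ by simp_all [mem_symmDiff]
  calc ∑ j, adjVariation G X (Q j)
      = #(univ.biUnion fun j ↦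
          {x ∈ X ×ˢ X ×ˢ Q j | G.Adj x.1 x.2.2 ∧ ¬ G.Adj x.2.1 x.2.2}) := by
        refine (card_biUnion fun i _ j _ hij ↦ disjoint_filter_filter ?_).symm
        exact disjoint_product.2 (.inr (disjoint_product.2 (.inr (hQ i j hij))))
    _ ≤ #{x ∈ X ×ˢ X ×ˢ univ | G.Adj x.1 x.2.2 ∧ ¬ G.Adj x.2.1 x.2.2} :=
        card_le_card (biUnion_subset.2 fun j _ ↦ by gcongr; exact subset_univ _)
    _ = ∑ u ∈ X, ∑ u' ∈ X, #{v | G.Adj u v ∧ ¬ G.Adj u' v} := by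
        simp only [card_filter, sum_product]
    _ ≤ ∑ u ∈ X, ∑ v ∈ X, neighborDist G u v := by gcongr; exact hdist _ _

lemma neighborSpread_le (X : Finset V) : neighborSpread G X ≤ Fintype.card V * #X := by
  refine div_le_of_le_mul₀ (by positivity) (by positivity) ?_
  calc (∑ u ∈ X, ∑ v ∈ X, neighborDist G u v : ℝ)
      ≤ ∑ _ ∈ X, ∑ _ ∈ X, (Fintype.card V : ℝ) := by
        gcongr with u _ v
        exact_mod_cast neighborDist_le_card G u v
    _ = Fintype.card V * #X * #X := by
        simp only [sum_const, nsmul_eq_mul]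
        ring

lemma neighborSpread_le_of_isMonochromatic {c : V → V} {X : Finset V} (hX : IsMonochromatic c X) :
    neighborSpread G X ≤ 2 * ∑ v ∈ X, (neighborDist G (c v) v : ℝ) := by
  refine div_le_of_le_mul₀ (by positivity) (by positivity) ?_
  calc (∑ u ∈ X, ∑ v ∈ X, neighborDist G u v : ℝ)
      ≤ ∑ u ∈ X, ∑ v ∈ X, ((neighborDist G (c u) u : ℝ) + neighborDist G (c v) v) := by
        gcongr with u hu v hv
        rw [← hX u hu v hv, neighborDist_comm G (c u)]
        exact_mod_cast neighborDist_triangle G u (c u) v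
    _ = 2 * (∑ v ∈ X, (neighborDist G (c v) v : ℝ)) * #X := by
        simp only [sum_add_distrib, sum_const, nsmul_eq_mul, ← mul_sum]
        ring

end Homogeneity

section HomogeneousPartition

variable {n : ℕ} {G : SimpleGraph (Fin n)} {δ : ℝ}

lemma card_mul_card_le_of_not_homPair (hδ₀ : 0 < δ) (hδ : δ < 1 / 2) {X Y : Finset (Fin n)}
    (h : ¬ HomPair G δ X Y) :
    (#X * #Y : ℝ) ≤ 2 / δ * (adjVariation G X Y / #X + adjVariation G Y X / #Y) := by
  obtain ⟨hd₁, hd₀⟩ : dens G X Y < 1 - δ ∧ δ < dens G X Y := by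
    simpa only [HomPair, not_or, not_le] using h
  rcases X.eq_empty_or_nonempty with rfl | hX
  · simp [adjVariation]
  rcases Y.eq_empty_or_nonempty with rfl | hY
  · simp [adjVariation]
  have hedges : (#(Rel.interedges G.Adj X Y) : ℝ) = dens G X Y * (#X * #Y) := by
    rw [_root_.dens, SimpleGraph.edgeDensity_def]
    push_cast
    field_simp
    rfl
  have hnonedges : (#(Rel.interedges (fun u v ↦ ¬ G.Adj u v) X Y) : ℝ) =
      (1 - dens G X Y) * (#X * #Y) := by
    have := Rel.card_interedges_add_card_interedges_compl G.Adj X Y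
    rw [one_sub_mul, ← hedges, eq_sub_iff_add_eq']
    exact_mod_cast this
  have hmul : (dens G X Y * (#X * #Y) * ((1 - dens G X Y) * (#X * #Y)) : ℝ) ≤
      #Y * adjVariation G X Y + #X * adjVariation G Y X := by
    rw [← hedges, ← hnonedges]
    exact_mod_cast card_interedges_mul_card_interedges_not_le G X Y
  have hd : δ / 2 ≤ dens G X Y * (1 - dens G X Y) := by nlinarith
  calc (#X * #Y : ℝ) = 2 / δ * (δ / 2 * (#X * #Y) * (#X * #Y) / (#X * #Y)) := by field_simp
    _ ≤ 2 / δ * (dens G X Y * (1 - dens G X Y) * (#X * #Y) * (#X * #Y) / (#X * #Y)) := by gcongr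
    _ ≤ 2 / δ * ((#Y * adjVariation G X Y + #X * adjVariation G Y X) / (#X * #Y)) := by
        gcongr
        linarith
    _ = 2 / δ * (adjVariation G X Y / #X + adjVariation G Y X / #Y) := by field_simp

lemma homogeneousPartition_of_sum_neighborSpread_le (hδ₀ : 0 < δ) (hδ : δ < 1 / 2) {q : ℕ}
    {Q : Fin q → Finset (Fin n)} (hQ : ∀ i j, i ≠ j → Disjoint (Q i) (Q j))
    (hspread : ∑ i, neighborSpread G (Q i) ≤ δ ^ 2 / 4 * n ^ 2) : HomogeneousPartition G δ Q := by
  let a (i j : Fin q) : ℝ := adjVariation G (Q i) (Q j) / #(Q i)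
  have ha (i : Fin q) : ∑ j, a i j ≤ neighborSpread G (Q i) := by
    rw [← sum_div]
    unfold neighborSpread
    gcongr
    exact_mod_cast sum_adjVariation_le G hQ (Q i)
  have hsum : ∑ i, ∑ j, a i j ≤ δ ^ 2 / 4 * n ^ 2 := (sum_le_sum fun i _ ↦ ha i).trans hspread
  calc ∑ i, ∑ j, (if i < j ∧ ¬ HomPair G δ (Q i) (Q j) then (#(Q i) : ℝ) * #(Q j) else 0)
      ≤ ∑ i, ∑ j, 2 / δ * (a i j + a j i) := by
        gcongr with i _ j
        split_ifs with h
        · exact card_mul_card_le_of_not_homPair hδ₀ hδ h.2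
        · positivity
    _ = 4 / δ * ∑ i, ∑ j, a i j := by
        simp only [← mul_sum, sum_add_distrib]
        rw [sum_comm (f := fun i j ↦ a j i)]
        ring
    _ ≤ 4 / δ * (δ ^ 2 / 4 * n ^ 2) := by gcongr
    _ = δ * n ^ 2 := by field_simp

lemma IsEquipartition.sum_neighborSpread_le {q : ℕ} {Q : Fin q → Finset (Fin n)}
    (hQ : IsEquipartition Q) (c : Fin n → Fin n) :
    ∑ i, neighborSpread G (Q i) ≤ 2 * ∑ v, (neighborDist G (c v) v : ℝ) +
      n * ∑ i with ¬ IsMonochromatic c (Q i), (#(Q i) : ℝ) := by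
  have hspread (i : Fin q) : neighborSpread G (Q i) ≤
      2 * ∑ v ∈ Q i, (neighborDist G (c v) v : ℝ) +
        if ¬ IsMonochromatic c (Q i) then (n * #(Q i) : ℝ) else 0 := by
    split_ifs with h
    · simpa using neighborSpread_le_of_isMonochromatic G h
    · refine le_add_of_nonneg_of_le (by positivity) ?_
      simpa using neighborSpread_le G (Q i)
  calc ∑ i, neighborSpread G (Q i)
      ≤ ∑ i, (2 * ∑ v ∈ Q i, (neighborDist G (c v) v : ℝ) +
          if ¬ IsMonochromatic c (Q i) then (n * #(Q i) : ℝ) else 0) :=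
        sum_le_sum fun i _ ↦ hspread i
    _ = _ := by rw [sum_add_distrib, ← mul_sum, hQ.sum_sum, ← sum_filter, ← mul_sum]

lemma exists_homogeneousPartition_of_not_noSmallNet (hδ₀ : 0 < δ) (hδ : δ < 1 / 2) {p M A : ℕ}
    {Part : Fin p → Finset (Fin n)} (hPart : IsEquipartition Part) (hM : 0 < M)
    (hA : 20 ≤ δ ^ 2 * A) (hn : p * (M * A) < n) (h : ¬ NoSmallNet G (δ ^ 2 / 20) M) :
    ∃ Q : Fin (p * (M * A)) → Finset (Fin n), IsEquipartition Q ∧ HomogeneousPartition G δ Q ∧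
      ∀ i, ∃ j, Q i ⊆ Part j := by
  obtain ⟨c, hcM, hc⟩ := exists_centres_of_not_noSmallNet G (by nlinarith) h
  have hA₀ : 0 < A := by
    rw [← Nat.cast_pos (α := ℝ)]
    exact pos_of_mul_pos_right (by linarith) (sq_nonneg δ)
  obtain ⟨Q, hQ, hQP, hQc⟩ := exists_equipartition_isMonochromatic hPart (mul_pos hM hA₀) hn c
  refine ⟨Q, hQ, homogeneousPartition_of_sum_neighborSpread_le hδ₀ hδ hQ.1 ?_, hQP⟩
  have hmixed : (∑ i with ¬ IsMonochromatic c (Q i), #(Q i) : ℝ) ≤ δ ^ 2 / 20 * n := by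
    rw [← Nat.cast_sum]
    generalize ∑ i with ¬ IsMonochromatic c (Q i), #(Q i) = m at hQc ⊢
    have hAm : A * m ≤ n := by
      refine Nat.le_of_mul_le_mul_left ?_ hM
      rw [← mul_assoc]
      exact hQc.trans (Nat.mul_le_mul_right _ hcM)
    calc (m : ℝ) ≤ δ ^ 2 * A / 20 * m := le_mul_of_one_le_left (by positivity) (by linarith)
      _ = δ ^ 2 / 20 * (A * m : ℕ) := by push_cast; ring
      _ ≤ δ ^ 2 / 20 * n := by gcongr
  calc ∑ i, neighborSpread G (Q i)
      ≤ 2 * ∑ v, (neighborDist G (c v) v : ℝ) +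
          n * ∑ i with ¬ IsMonochromatic c (Q i), (#(Q i) : ℝ) := hQ.sum_neighborSpread_le c
    _ ≤ 2 * (2 * (δ ^ 2 / 20) * n ^ 2) + n * (δ ^ 2 / 20 * n) := by
        gcongr
        simpa using hc
    _ = δ ^ 2 / 4 * n ^ 2 := by ring

end HomogeneousPartition

lemma exists_scale (k : ℕ) :
    ∃ D : ℝ, 0 < D ∧ ∀ δ : ℝ, 0 < δ → δ < 1 / 2 → ∃ A : ℕ,
      k + k * (k + 1) < A ∧ 5 ≤ A ∧ δ⁻¹ ≤ A ∧ 20 ≤ δ ^ 2 * A ∧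
      2 * A ^ (2 * centreExponent k) ≤ 2 ^ A ∧
      (A : ℝ) ^ (1 + (centreExponent k + 2) * (2 * k)) ≤ δ ^ (-D) ∧
      (A : ℝ) ^ (centreExponent k + 1) ≤ δ ^ (-D) := by
  set r := centreExponent k
  obtain ⟨A₀, hA₀⟩ := exists_forall_two_mul_pow_le_two_pow (2 * r)
  set c := A₀ + (k + k * (k + 1)) + 6
  set F := 1 + (r + 2) * (2 * k) + (r + 1)
  refine ⟨(2 * c * F : ℕ), by positivity, fun δ hδ₀ hδ ↦ ?_⟩
  obtain ⟨A, hcA, hδA, hδ₂A, hA⟩ := exists_nat_scale hδ₀ hδ (by lia : 6 ≤ c)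
  have hA₁ : (1 : ℝ) ≤ A := by exact_mod_cast (by lia : 1 ≤ A)
  have hAF : (A : ℝ) ^ F ≤ δ ^ (-((2 * c * F : ℕ) : ℝ)) :=
    calc (A : ℝ) ^ F ≤ (δ⁻¹ ^ (2 * c)) ^ F := by gcongr
      _ = δ ^ (-((2 * c * F : ℕ) : ℝ)) := by
        rw [← pow_mul, Real.rpow_neg hδ₀.le, Real.rpow_natCast, inv_pow]
  exact ⟨A, by lia, by lia, hδA, hδ₂A, hA₀ A (by lia),
    (pow_le_pow_right₀ hA₁ (by lia)).trans hAF, (pow_le_pow_right₀ hA₁ (by lia)).trans hAF⟩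

/-- the conditional regularity lemma, Lemma 2.10 of the paper. -/
theorem conditional_regularity (k : ℕ) (hk : 1 ≤ k) :
    ∃ D : ℝ, 0 < D ∧
      ∀ B : Fin k → Fin k → Prop, ∀ δ : ℝ, 0 < δ → δ < 1 / 2 → ∀ P : ℕ, 1 ≤ P →
        ∃ n₀ : ℕ, ∀ n : ℕ, n₀ ≤ n → ∀ G : SimpleGraph (Fin n),
          ∀ p : ℕ, p ≤ P → ∀ Part : Fin p → Finset (Fin n), IsEquipartition Part →
            δ ^ D * (n : ℝ) ^ (2 * k) ≤ (bipCopyCount B G : ℝ) ∨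
            ∃ q : ℕ, δ⁻¹ ≤ (q : ℝ) ∧ (q : ℝ) ≤ (p : ℝ) * δ ^ (-D) ∧
              ∃ Q : Fin q → Finset (Fin n), IsEquipartition Q ∧
                HomogeneousPartition G δ Q ∧
                ∀ i : Fin q, ∃ j : Fin p, Q i ⊆ Part j := by
  obtain ⟨D, hD, hscale⟩ := exists_scale k
  refine ⟨D, hD, fun B δ hδ₀ hδ P hP ↦ ?_⟩
  obtain ⟨A, hkA, hA₅, hδA, hδ₂A, hpow, hcopies, hparts⟩ := hscale δ hδ₀ hδ
  refine ⟨P * (A ^ centreExponent k * A) + 1, fun n hn G p hpP Part hPart ↦ ?_⟩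
  have : NeZero n := ⟨by lia⟩
  by_cases hfar : NoSmallNet G (δ ^ 2 / 20) (A ^ centreExponent k)
  · left
    have hcount := pow_le_mul_bipCopyCount B (by positivity) (by nlinarith) (by linarith) hA₅ hkA
      hpow hfar
    rw [← le_inv_mul_iff₀ (by positivity), ← Real.rpow_neg hδ₀.le]
    calc (n : ℝ) ^ (2 * k)
        ≤ A ^ (1 + (centreExponent k + 2) * (2 * k)) * bipCopyCount B G := mod_cast hcount
      _ ≤ δ ^ (-D) * bipCopyCount B G := by gcongr
  · right
    have hp : 0 < p := (hPart.2.1 0).choose.pos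
    obtain ⟨Q, hQ, hQδ, hQP⟩ := exists_homogeneousPartition_of_not_noSmallNet hδ₀ hδ hPart
      (by positivity) hδ₂A ((Nat.mul_le_mul_right _ hpP).trans_lt hn) hfar
    refine ⟨p * (A ^ centreExponent k * A), hδA.trans ?_, ?_, Q, hQ, hQδ, hQP⟩
    · exact_mod_cast (Nat.le_mul_of_pos_left A (by positivity)).trans_eq (mul_assoc p _ A)
    · push_cast [← pow_succ]
      gcongr

end
end

section
/- For every integer k ≥ 2 there is α = α(k) > 0 such that for every positive integer m there is a set S ⊆ {1,…,m} with |S| ≥ m/e^{α·√(log m)} having the following property: for every 2 ≤ ℓ ≤ k and all positive integers a₁,…,a_ℓ with a₁ + … + a_ℓ ≤ k, the only solutions of the equation a₁s₁ + a₂s₂ + … + a_ℓ s_ℓ = (a₁ + … + a_ℓ)·s_{ℓ+1} with s₁,…,s_{ℓ+1} ∈ S are the trivial ones, i.e. s₁ = s₂ = … = s_ℓ = s_{ℓ+1}. -/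
open scoped Classical
open Finset

noncomputable section

/-!
Write the elements of `S` in base `k * d` with `n` digits below `d`. Adding `k` such numbers causes
no carries, so a convex equation of total weight at most `k` holds in each digit, that is, between
the digit vectors. If all digit vectors lie on one Euclidean sphere, strict convexity of the ball
leaves only the trivial solutions. By pigeonhole some sphere holds at least `d ^ n / (n * d ^ 2)` of
the `d ^ n` digit vectors, and `n ≈ √(log m)`, `k * d ≈ m ^ (1 / n)` balances the losses.
-/

section MeanFree

variable {M N : Type*} [AddCommMonoid M] [AddCommMonoid N] {k : ℕ} {S : Set M} {T : Set N}

/-- A set is *mean-free of order `k`* if the mean of `k` of its elements, taken with repetition,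
lies in the set only when all of them coincide; for `k = 2` this is `ThreeAPFree`. The `k` elements
form a multiset, so the equations `a₁s₁ + ⋯ + a_ℓ s_ℓ = (a₁ + ⋯ + a_ℓ)s'` of total weight exactly
`k` are covered at once, and those of smaller total weight after adding copies of `s'`. -/
def MeanFree (k : ℕ) (S : Set M) : Prop :=
  ∀ ⦃s : Multiset M⦄, s.card = k → (∀ ⦃x⦄, x ∈ s → x ∈ S) →
    ∀ ⦃y⦄, y ∈ S → s.sum = k • y → ∀ x ∈ s, x = y

lemma meanFree_singleton (k : ℕ) (x : M) : MeanFree k {x} := by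
  intro s _ hs y hy _ z hz
  exact (hs hz).trans hy.symm

lemma MeanFree.of_isAddFreimanHom {f : M → N} (hT : MeanFree k T)
    (hf : IsAddFreimanHom k S T f) (hinj : S.InjOn f) : MeanFree k S := by
  intro s hcard hs y hy hsum x hx
  refine hinj (hs hx) hy (hT (s := s.map f) (by rwa [Multiset.card_map]) ?_ (hf.mapsTo hy) ?_ _
    (Multiset.mem_map_of_mem f hx))
  · exact Multiset.forall_mem_map_iff.2 fun z hz => hf.mapsTo (hs hz)
  · have hrep : ∀ ⦃z⦄, z ∈ Multiset.replicate k y → z ∈ S := fun z hz => by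
      rwa [Multiset.eq_of_mem_replicate hz]
    simpa only [Multiset.map_replicate, Multiset.sum_replicate] using
      hf.map_sum_eq_map_sum hs hrep hcard (Multiset.card_replicate k y)
        (by rw [hsum, Multiset.sum_replicate])

lemma MeanFree.of_isAddFreimanIso {f : M → N} (hS : MeanFree k S)
    (hf : IsAddFreimanIso k S T f) : MeanFree k T :=
  hS.of_isAddFreimanHom hf.invFunOn.isAddFreimanHom hf.invFunOn.bijOn.injOn

lemma MeanFree.eq_of_sum_nsmul_eq {ι : Type*} {t : Finset ι} {a : ι → ℕ} {s : ι → M} {y : M}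
    (hS : MeanFree k S) (hak : ∑ i ∈ t, a i ≤ k) (hs : ∀ i ∈ t, s i ∈ S) (hy : y ∈ S)
    (hsum : ∑ i ∈ t, a i • s i = (∑ i ∈ t, a i) • y) {i : ι} (hi : i ∈ t) (hai : a i ≠ 0) :
    s i = y := by
  set u : Multiset M :=
    ∑ j ∈ t, Multiset.replicate (a j) (s j) + Multiset.replicate (k - ∑ j ∈ t, a j) y with hu
  refine hS (s := u) ?_ ?_ hy ?_ (s i) ?_
  · simp [hu, hak]
  · intro x hx
    rcases Multiset.mem_add.1 hx with hx | hx
    · obtain ⟨j, hj, hxj⟩ := Multiset.mem_sum.1 hx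
      exact Multiset.eq_of_mem_replicate hxj ▸ hs j hj
    · exact Multiset.eq_of_mem_replicate hx ▸ hy
  · calc u.sum = ∑ j ∈ t, a j • s j + (k - ∑ j ∈ t, a j) • y := by
          simp [hu, Multiset.sum_sum]
      _ = k • y := by rw [hsum, ← add_nsmul, Nat.add_sub_cancel' hak]
  · exact Multiset.mem_add.2 <| .inl <| Multiset.mem_sum.2
      ⟨i, hi, Multiset.mem_replicate.2 ⟨hai, rfl⟩⟩

end MeanFree

lemma meanFree_sphere_zero {E : Type*} [NormedAddCommGroup E] [NormedSpace ℝ E]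
    [StrictConvexSpace ℝ E] (k : ℕ) (r : ℝ) : MeanFree k (Metric.sphere (0 : E) r) := by
  intro s hcard hs y hy hsum x hx
  simp only [mem_sphere_zero_iff_norm] at hs hy
  obtain ⟨t, rfl⟩ := Multiset.exists_cons_of_mem hx
  rw [Multiset.card_cons] at hcard
  rw [Multiset.sum_cons] at hsum
  have hxr : ‖x‖ = r := hs hx
  have ht : ‖t.sum‖ ≤ t.card * r := by
    have hbound : ∀ z ∈ t.map norm, z ≤ r :=
      Multiset.forall_mem_map_iff.2 fun z hz => (hs (Multiset.mem_cons_of_mem hz)).le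
    simpa only [Multiset.card_map, nsmul_eq_mul] using
      (norm_multiset_sum_le t).trans (Multiset.sum_le_card_nsmul _ r hbound)
  have hnorm : ‖x + t.sum‖ = r + t.card * r := by
    rw [hsum, ← hcard, RCLike.norm_nsmul ℝ, hy, nsmul_eq_mul, Nat.cast_add_one]
    ring
  have hray : SameRay ℝ x t.sum :=
    sameRay_iff_norm_add.2 <| (norm_add_le _ _).antisymm (by linarith)
  have hxy : SameRay ℝ x y := by
    have hxky : SameRay ℝ x ((k : ℝ) • y) := by
      rw [Nat.cast_smul_eq_nsmul, ← hsum]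
      exact (SameRay.refl x).add_right hray
    exact hxky.trans (SameRay.sameRay_nonneg_smul_left y k.cast_nonneg) fun hky =>
      .inr <| (smul_eq_zero.1 hky).resolve_left (Nat.cast_ne_zero.2 (by lia))
  exact hxy.eq_of_norm_eq (hxr.trans hy.symm)

lemma meanFree_behrendSphere (k n d r : ℕ) :
    MeanFree k (Behrend.sphere n d r : Set (Fin n → ℕ)) := by
  let toEuclidean : (Fin n → ℕ) →+ EuclideanSpace ℝ (Fin n) :=
    { toFun := fun x => WithLp.toLp 2 ((↑) ∘ x : Fin n → ℝ)
      map_zero' := PiLp.ext fun _ => Nat.cast_zero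
      map_add' := fun _ _ => PiLp.ext fun _ => Nat.cast_add _ _ }
  exact (meanFree_sphere_zero k √r).of_isAddFreimanHom
    (AddHomClass.isAddFreimanHom toEuclidean Behrend.sphere_subset_preimage_metric_sphere)
    ((WithLp.toLp_injective 2).comp_injOn Nat.cast_injective.comp_left.injOn)

lemma behrendMap_lt_pow {n b : ℕ} {x : Fin n → ℕ} (hx : ∀ i, x i < b) :
    Behrend.map b x < b ^ n := by
  simpa only [Behrend.map_apply, finFunctionFinEquiv_apply] using
    (finFunctionFinEquiv fun i => (⟨x i, hx i⟩ : Fin b)).isLt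

lemma multiset_sum_lt_card_nsmul {α : Type*} [AddCommMonoid α] [PartialOrder α]
    [IsOrderedCancelAddMonoid α] {s : Multiset α} {b : α} (hs : s ≠ 0) (hb : ∀ x ∈ s, x < b) :
    s.sum < s.card • b := by
  simpa only [Multiset.map_id', Multiset.map_const', Multiset.sum_replicate] using
    Multiset.sum_lt_sum_of_nonempty (f := fun x => x) (g := fun _ => b) hs hb

lemma isAddFreimanIso_behrendMap_add {k n d : ℕ} (hk : k ≠ 0) {A : Set (Fin n → ℕ)}
    (hA : ∀ x ∈ A, ∀ i, x i < d) (c : ℕ) :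
    IsAddFreimanIso k A ((fun x => Behrend.map (k * d) x + c) '' A)
      fun x => Behrend.map (k * d) x + c where
  bijOn := by
    refine Set.InjOn.bijOn_image fun x hx y hy hxy => ?_
    have hbox : ∀ z ∈ A, ∀ i, z i < k * d := fun z hz i =>
      (hA z hz i).trans_le (Nat.le_mul_of_pos_left d hk.bot_lt)
    exact Behrend.map_injOn (hbox x hx) (hbox y hy) (Nat.add_right_cancel hxy)
  map_sum_eq_map_sum s t hsA htA hs ht := by
    have hbox : ∀ u : Multiset (Fin n → ℕ), (∀ ⦃x⦄, x ∈ u → x ∈ A) → u.card = k →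
        ∀ i, u.sum i < k * d := fun u huA hu i => by
      have hne : u.map (fun x => x i) ≠ 0 :=
        Multiset.card_pos.1 (by rw [Multiset.card_map, hu]; exact hk.bot_lt)
      simpa only [Pi.multiset_sum_apply, Multiset.card_map, hu, smul_eq_mul] using
        multiset_sum_lt_card_nsmul hne (Multiset.forall_mem_map_iff.2 fun x hx => hA x (huA hx) i)
    simp only [Multiset.sum_map_add, Multiset.map_const', Multiset.sum_replicate, hs, ht,
      add_left_inj, ← map_multiset_sum]
    exact Behrend.map_injOn.eq_iff (hbox s hsA hs) (hbox t htA ht)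

lemma exists_meanFree_card_ge_div {k : ℕ} (hk : k ≠ 0) (n d : ℕ) :
    ∃ S : Finset ℕ, (S : Set ℕ) ⊆ Set.Icc 1 ((k * d) ^ n) ∧ MeanFree k (S : Set ℕ) ∧
      ((d ^ n : ℕ) / (n * d ^ 2 : ℕ) : ℝ) ≤ #S := by
  obtain ⟨r, hr⟩ := Behrend.exists_large_sphere n d
  have hbox : ∀ x ∈ (Behrend.sphere n d r : Set (Fin n → ℕ)), ∀ i, x i < d := fun x hx =>
    Behrend.mem_box.1 (Behrend.sphere_subset_box hx)
  have hiso := isAddFreimanIso_behrendMap_add hk hbox 1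
  refine ⟨(Behrend.sphere n d r).image fun x => Behrend.map (k * d) x + 1, ?_, ?_, ?_⟩
  · rw [coe_image]
    rintro _ ⟨x, hx, rfl⟩
    exact ⟨Nat.le_add_left 1 _, behrendMap_lt_pow fun i =>
      (hbox x hx i).trans_le (Nat.le_mul_of_pos_left d hk.bot_lt)⟩
  · rw [coe_image]
    exact (meanFree_behrendSphere k n d r).of_isAddFreimanIso hiso
  · rwa [card_image_of_injOn hiso.bijOn.injOn]

lemma exists_meanFree_pow_le_mul_card {k n : ℕ} (hk : k ≠ 0) (hn : n ≠ 0) {M : ℝ} (hM : k ≤ M) :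
    ∃ S : Finset ℕ, (∀ s ∈ S, 1 ≤ s ∧ (s : ℝ) ≤ M ^ n) ∧ MeanFree k (S : Set ℕ) ∧
      M ^ n ≤ (2 * k : ℝ) ^ n * (n * M ^ 2) * #S := by
  have hk' : (1 : ℝ) ≤ k := Nat.one_le_cast.2 hk.bot_lt
  have hM0 : 0 < M := by linarith
  set d := ⌊M / k⌋₊
  have hkd : k * d ≤ M := (le_div_iff₀' (by positivity)).1 (Nat.floor_le (by positivity))
  have hMd : M ≤ 2 * k * d := by
    have hfloor : M / k / 2 ≤ d :=
      (Nat.div_two_lt_floor ((one_le_div₀ (by positivity)).2 hM)).le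
    rwa [div_div, div_le_iff₀' (by positivity), mul_comm (k : ℝ)] at hfloor
  have hdM : (d : ℝ) ≤ M := (le_mul_of_one_le_left d.cast_nonneg hk').trans hkd
  have hd : (0 : ℝ) < d := pos_of_mul_pos_right (hM0.trans_le hMd) (by positivity)
  obtain ⟨S, hSIcc, hSfree, hScard⟩ := exists_meanFree_card_ge_div hk n d
  refine ⟨S, fun s hs => ⟨(hSIcc hs).1, ?_⟩, hSfree, ?_⟩
  · calc (s : ℝ) ≤ (k * d) ^ n := by exact_mod_cast (hSIcc hs).2
      _ ≤ M ^ n := by gcongr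
  · calc M ^ n ≤ (2 * k * d) ^ n := by gcongr
      _ = (2 * k) ^ n * d ^ n := mul_pow _ _ _
      _ ≤ (2 * k) ^ n * (#S * (n * d ^ 2)) := by
        gcongr
        push_cast at hScard
        exact (div_le_iff₀ (by positivity)).1 hScard
      _ ≤ (2 * k) ^ n * (#S * (n * M ^ 2)) := by gcongr
      _ = (2 * k) ^ n * (n * M ^ 2) * #S := by ring

lemma le_exp_sq_div_ceil {c L : ℝ} (hc : 0 < c) (hL : 2⁻¹ ≤ L) (hcL : 2 * Real.log c ≤ L) :
    c ≤ Real.exp (L ^ 2 / ⌈L⌉₊) := by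
  have : 0 < L := by linarith
  rw [← Real.log_le_iff_le_exp hc]
  calc Real.log c ≤ L / 2 := by linarith
    _ = L ^ 2 / (2 * L) := by field_simp
    _ ≤ L ^ 2 / ⌈L⌉₊ := by
      gcongr
      exact Nat.ceil_le_two_mul hL

lemma pow_ceil_mul_le_exp {c L : ℝ} (hc : 1 ≤ c) (hL : 2⁻¹ ≤ L) :
    c ^ ⌈L⌉₊ * (⌈L⌉₊ * Real.exp (L ^ 2 / ⌈L⌉₊) ^ 2) ≤ Real.exp ((2 * Real.log c + 4) * L) := by
  have : 0 < L := by linarith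
  have hceil : (⌈L⌉₊ : ℝ) ≤ 2 * L := Nat.ceil_le_two_mul hL
  have hpow : c ^ ⌈L⌉₊ ≤ Real.exp (Real.log c * (2 * L)) := by
    rw [← Real.rpow_natCast, Real.rpow_def_of_pos (by positivity)]
    gcongr
    exact Real.log_nonneg hc
  have hexp : (⌈L⌉₊ : ℝ) ≤ Real.exp (2 * L) := by linarith [Real.add_one_le_exp (2 * L)]
  have hdiv : L ^ 2 / ⌈L⌉₊ ≤ L := by
    rw [div_le_iff₀ (by positivity), sq]
    gcongr
    exact Nat.le_ceil L
  calc c ^ ⌈L⌉₊ * (⌈L⌉₊ * Real.exp (L ^ 2 / ⌈L⌉₊) ^ 2)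
      ≤ Real.exp (Real.log c * (2 * L)) * (Real.exp (2 * L) * Real.exp L ^ 2) := by gcongr
    _ = Real.exp ((2 * Real.log c + 4) * L) := by
      rw [← Real.exp_nat_mul, ← Real.exp_add, ← Real.exp_add]
      push_cast
      ring_nf

lemma exists_meanFree_card_ge_div_exp {k m : ℕ} (hk : k ≠ 0) (hm : m ≠ 0) :
    ∃ S : Finset ℕ, (S : Set ℕ) ⊆ Set.Icc 1 m ∧ MeanFree k (S : Set ℕ) ∧
      (m : ℝ) / Real.exp ((2 * Real.log (2 * k) + 4) * √(Real.log m)) ≤ #S := by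
  have hk' : (1 : ℝ) ≤ k := Nat.one_le_cast.2 hk.bot_lt
  have hlog : 0 ≤ Real.log (2 * k) := Real.log_nonneg (by linarith)
  set α := 2 * Real.log (2 * k) + 4
  set L := √(Real.log m)
  have hm_eq : Real.exp (L ^ 2) = m := by
    rw [Real.sq_sqrt (Real.log_natCast_nonneg m), Real.exp_log (by positivity)]
  rcases le_or_gt L α with hLα | hαL
  · refine ⟨{1}, by simpa using Nat.one_le_iff_ne_zero.2 hm, ?_, ?_⟩
    · rw [coe_singleton]
      exact meanFree_singleton k 1
    · rw [card_singleton, Nat.cast_one, div_le_one (Real.exp_pos _), ← hm_eq, sq]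
      gcongr
  have hL : 2⁻¹ ≤ L := by linarith
  set n := ⌈L⌉₊
  have hn : n ≠ 0 := (Nat.ceil_pos.2 (by linarith)).ne'
  set M := Real.exp (L ^ 2 / n)
  have hMn : M ^ n = m := by
    rw [← Real.exp_nat_mul, mul_div_cancel₀ _ (Nat.cast_ne_zero.2 hn), hm_eq]
  have hkM : k ≤ M := by
    have hc : 2 * k ≤ M := le_exp_sq_div_ceil (by positivity) hL (by linarith)
    linarith
  obtain ⟨S, hSIcc, hSfree, hScard⟩ := exists_meanFree_pow_le_mul_card hk hn hkM
  rw [hMn] at hSIcc hScard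
  refine ⟨S, fun s hs => ⟨(hSIcc s hs).1, Nat.cast_le.1 (hSIcc s hs).2⟩, hSfree, ?_⟩
  rw [div_le_iff₀' (Real.exp_pos _)]
  exact hScard.trans (by gcongr; exact pow_ceil_mul_le_exp (by linarith) hL)

/-- the Behrend-type construction, Lemma 3.2 of the paper. -/
theorem behrend_no_convex_solutions (k : ℕ) (hk : 2 ≤ k) :
    ∃ α : ℝ, 0 < α ∧ ∀ m : ℕ, 1 ≤ m →
      ∃ S : Finset ℕ, (S : Set ℕ) ⊆ Set.Icc 1 m ∧
        (m : ℝ) / Real.exp (α * Real.sqrt (Real.log m)) ≤ (S.card : ℝ) ∧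
        ∀ ℓ : ℕ, 2 ≤ ℓ → ℓ ≤ k →
          ∀ a : Fin ℓ → ℕ, (∀ i, 1 ≤ a i) → (∑ i, a i) ≤ k →
            ∀ s : Fin ℓ → ℕ, (∀ i, s i ∈ S) → ∀ s' ∈ S,
              (∑ i, a i * s i) = (∑ i, a i) * s' → ∀ i, s i = s' := by
  have hlog : 0 ≤ Real.log (2 * k) := by
    exact_mod_cast Real.log_natCast_nonneg (2 * k)
  refine ⟨2 * Real.log (2 * k) + 4, by positivity, fun m hm => ?_⟩
  obtain ⟨S, hSIcc, hSfree, hScard⟩ :=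
    exists_meanFree_card_ge_div_exp (k := k) (by lia) (Nat.one_le_iff_ne_zero.1 hm)
  refine ⟨S, hSIcc, hScard, fun ℓ _ _ a ha hak s hs s' hs' heq i => ?_⟩
  exact hSfree.eq_of_sum_nsmul_eq hak (fun j _ => hs j) hs' heq (mem_univ i)
    (Nat.one_le_iff_ne_zero.1 (ha i))

end
end
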